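/- There exist absolute constants C > 0 and N₀ such that the following holds. Let A be a subset of the prime numbers. If for some integer N ≥ N₀ the relative density δ_P(N) = |{n ∈ A : n ≤ N}| / |{n prime : n ≤ N}| satisfies δ_P(N) ≥ C·(log log log N)/(log log N)^{1/3}, then A contains a nontrivial three-term arithmetic progression, i.e., there exist a ∈ A and an integer d ≠ 0 with a, a+d, a+2d all in A. -/

import Mathlib

/-!
By Chebyshev's bound the primes up to `N` have density at least `1 / (2 log N)`, so the assumed
relative density puts more than `N / (log N) ^ 2` elements of `A` below `N`. This exceeds the
Kelley–Meka bound `N exp (-(log N) ^ β)` for sets without three-term progressions.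

The Kelley–Meka bound is a density increment in a finite abelian group of odd order. If a set of
density `2 ^ (-n)` on a Bohr set has no progressions, its convolution square is tiny on the sums
`y + y`, and spectral positivity turns this deviation into a large moment of its autocorrelation.
Sifting (intersecting random translates of the set) converts the moment into two dense sets whose
difference correlates with the set, and Croot–Sisask almost periodicity, with a Chang-type bound for
the large spectrum on a Bohr set, smooths this to a density increment by a constant factor on a
Bohr set whose rank grows polynomially in `n`. After `O(n)` steps the density would exceed `1`
unless the group has size at most `2 ^ M(n)` with `M` a polynomial.
-/

open Finset
open scoped Pointwise

namespace KelleyMeka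

local notation "𝟙[" A "]" => Set.indicator (A : Set _) (fun _ => (1 : ℝ))

/-! ### Almost periods and Bohr sets -/

section AlmostPeriod

variable {G : Type*} [AddCommGroup G] [DecidableEq G]

/-- `t` is an `ε`-almost period of `B`: translation by `t` moves at most an `ε`-fraction of `B`
outside of `B`. -/
def IsAlmostPeriod (ε : ℝ) (B : Finset G) (t : G) : Prop :=
  (#{x ∈ B | x + t ∉ B} : ℝ) ≤ ε * #B

lemma card_filter_sub_notMem_eq (B : Finset G) (t : G) :
    #{x ∈ B | x - t ∉ B} = #{x ∈ B | x + t ∉ B} := by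
  have h : #{x ∈ B | x - t ∈ B} = #{x ∈ B | x + t ∈ B} :=
    card_bij' (fun x _ => x - t) (fun x _ => x + t) (by simp +contextual) (by simp +contextual)
      (by simp) (by simp)
  have := card_filter_add_card_filter_not (s := B) (· - t ∈ B)
  have := card_filter_add_card_filter_not (s := B) (· + t ∈ B)
  omega

lemma IsAlmostPeriod.neg {ε : ℝ} {B : Finset G} {t : G} (h : IsAlmostPeriod ε B t) :
    IsAlmostPeriod ε B (-t) := by
  simpa only [IsAlmostPeriod, ← sub_eq_add_neg, card_filter_sub_notMem_eq] using h

end AlmostPeriod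

lemma norm_addChar_sub_sub_one {G : Type*} [AddCommGroup G] [Finite G] (γ : AddChar G ℂ) (x y : G) :
    ‖γ (x - y) - 1‖ = ‖γ x - γ y‖ := by
  have h : γ x - γ y = γ y * (γ (x - y) - 1) := by
    rw [mul_sub, ← AddChar.map_add_eq_mul, add_sub_cancel, mul_one]
  rw [h, norm_mul, AddChar.norm_apply, one_mul]

section Bohr

variable {G : Type*} [AddCommGroup G] [Fintype G] {Γ : Finset (AddChar G ℂ)} {ρ σ : ℝ} {x y : G}

open Classical in
/-- The Bohr set of radius `ρ` with frequency set `Γ`, distances from `1` being measured in `ℂ`. -/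
noncomputable def bohrSet (Γ : Finset (AddChar G ℂ)) (ρ : ℝ) : Finset G :=
  {x | ∀ γ ∈ Γ, ‖γ x - 1‖ ≤ ρ}

lemma mem_bohrSet : x ∈ bohrSet Γ ρ ↔ ∀ γ ∈ Γ, ‖γ x - 1‖ ≤ ρ := by simp [bohrSet]

lemma bohrSet_mono (h : ρ ≤ σ) : bohrSet Γ ρ ⊆ bohrSet Γ σ :=
  fun _ hx => mem_bohrSet.2 fun γ hγ => (mem_bohrSet.1 hx γ hγ).trans h

lemma bohrSet_anti {Δ : Finset (AddChar G ℂ)} (h : Γ ⊆ Δ) : bohrSet Δ ρ ⊆ bohrSet Γ ρ :=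
  fun _ hx => mem_bohrSet.2 fun γ hγ => mem_bohrSet.1 hx γ (h hγ)

lemma zero_mem_bohrSet (h : 0 ≤ ρ) : (0 : G) ∈ bohrSet Γ ρ :=
  mem_bohrSet.2 fun γ _ => by simpa using h

lemma bohrSet_nonempty (h : 0 ≤ ρ) : (bohrSet Γ ρ).Nonempty := ⟨0, zero_mem_bohrSet h⟩

lemma bohrSet_empty : bohrSet (∅ : Finset (AddChar G ℂ)) ρ = univ := by ext; simp [mem_bohrSet]

lemma neg_mem_bohrSet : -x ∈ bohrSet Γ ρ ↔ x ∈ bohrSet Γ ρ := by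
  have h (γ : AddChar G ℂ) : ‖γ (-x) - 1‖ = ‖γ x - 1‖ := by
    rw [← zero_sub, norm_addChar_sub_sub_one, AddChar.map_zero_eq_one, norm_sub_rev]
  simp only [mem_bohrSet, h]

lemma add_mem_bohrSet (hx : x ∈ bohrSet Γ ρ) (hy : y ∈ bohrSet Γ σ) :
    x + y ∈ bohrSet Γ (ρ + σ) := by
  refine mem_bohrSet.2 fun γ hγ => ?_
  have hy' := mem_bohrSet.1 (neg_mem_bohrSet.2 hy) γ hγ
  calc ‖γ (x + y) - 1‖ = ‖(γ x - 1) - (γ (-y) - 1)‖ := by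
        rw [← sub_neg_eq_add, norm_addChar_sub_sub_one, sub_sub_sub_cancel_right]
    _ ≤ ‖γ x - 1‖ + ‖γ (-y) - 1‖ := norm_sub_le _ _
    _ ≤ ρ + σ := add_le_add (mem_bohrSet.1 hx γ hγ) hy'

lemma sub_mem_bohrSet (hx : x ∈ bohrSet Γ ρ) (hy : y ∈ bohrSet Γ σ) :
    x - y ∈ bohrSet Γ (ρ + σ) :=
  sub_eq_add_neg x y ▸ add_mem_bohrSet hx (neg_mem_bohrSet.2 hy)

lemma abs_sub_le_of_floor_eq {s t ρ : ℝ} (hρ : 0 < ρ) (h : ⌊2 * s / ρ⌋ = ⌊2 * t / ρ⌋) :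
    |s - t| ≤ ρ / 2 := by
  have hlt := (Int.abs_sub_lt_one_of_floor_eq_floor h).le
  have hst : s - t = (2 * s / ρ - 2 * t / ρ) * (ρ / 2) := by field_simp
  rw [hst, abs_mul, abs_of_pos (half_pos hρ)]
  exact mul_le_of_le_one_left (half_pos hρ).le hlt

lemma floor_mem_Icc_of_abs_le {t ρ : ℝ} (hρ : 0 < ρ) (h : |t| ≤ 2 * ρ) :
    ⌊2 * t / ρ⌋ ∈ Icc (-4 : ℤ) 4 := by
  obtain ⟨hl, hu⟩ := abs_le.1 h
  rw [mem_Icc, Int.le_floor, ← Int.lt_add_one_iff, Int.floor_lt, le_div_iff₀ hρ, div_lt_iff₀ hρ]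
  push_cast
  constructor <;> linarith

-- The values `γ x - 1` are cut into cells of side `ρ / 2`, at most `9 ^ 2` for each frequency;
-- points in the same cell differ by an element of the Bohr set of radius `ρ`.
lemma card_bohrSet_two_mul_le (Γ : Finset (AddChar G ℂ)) (hρ : 0 < ρ) :
    #(bohrSet Γ (2 * ρ)) ≤ 81 ^ #Γ * #(bohrSet Γ ρ) := by
  classical
  let cell : G → Γ → ℤ × ℤ := fun x γ =>
    (⌊2 * (γ.1 x - 1).re / ρ⌋, ⌊2 * (γ.1 x - 1).im / ρ⌋)
  have cells_subset : (bohrSet Γ (2 * ρ)).image cell ⊆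
      Fintype.piFinset fun _ : Γ => Icc (-4 : ℤ) 4 ×ˢ Icc (-4 : ℤ) 4 := by
    refine image_subset_iff.2 fun x hx => Fintype.mem_piFinset.2 fun γ => ?_
    have hγ := mem_bohrSet.1 hx γ γ.2
    exact mem_product.2 ⟨floor_mem_Icc_of_abs_le hρ ((Complex.abs_re_le_norm _).trans hγ),
      floor_mem_Icc_of_abs_le hρ ((Complex.abs_im_le_norm _).trans hγ)⟩
  have card_cells : #((bohrSet Γ (2 * ρ)).image cell) ≤ 81 ^ #Γ :=
    (card_le_card cells_subset).trans (by simp)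
  have card_fiber : ∀ c ∈ (bohrSet Γ (2 * ρ)).image cell,
      #{x ∈ bohrSet Γ (2 * ρ) | cell x = c} ≤ #(bohrSet Γ ρ) := by
    simp only [mem_image, forall_exists_index, and_imp, forall_apply_eq_imp_iff₂]
    intro x _
    refine card_le_card_of_injOn (· - x) (fun y hy => ?_) (sub_left_injective.injOn)
    refine mem_coe.2 (mem_bohrSet.2 fun γ hγ => ?_)
    have hcell := Prod.mk.inj (congrFun (mem_filter.1 (mem_coe.1 hy)).2 ⟨γ, hγ⟩)
    have hre := abs_sub_le_of_floor_eq hρ hcell.1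
    have him := abs_sub_le_of_floor_eq hρ hcell.2
    rw [norm_addChar_sub_sub_one]
    calc ‖γ y - γ x‖ ≤ |(γ y - γ x).re| + |(γ y - γ x).im| := Complex.norm_le_abs_re_add_abs_im _
      _ ≤ ρ / 2 + ρ / 2 := add_le_add (by simpa using hre) (by simpa using him)
      _ = ρ := add_halves ρ
  calc #(bohrSet Γ (2 * ρ)) ≤ #(bohrSet Γ ρ) * #((bohrSet Γ (2 * ρ)).image cell) :=
        card_le_mul_card_image _ _ card_fiber
    _ ≤ 81 ^ #Γ * #(bohrSet Γ ρ) := by rw [mul_comm]; gcongr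

lemma bohrSet_two (Γ : Finset (AddChar G ℂ)) : bohrSet Γ 2 = univ := by
  refine eq_univ_iff_forall.2 fun x => mem_bohrSet.2 fun γ _ => ?_
  calc ‖γ x - 1‖ ≤ ‖γ x‖ + ‖(1 : ℂ)‖ := norm_sub_le _ _
    _ = 2 := by rw [AddChar.norm_apply, norm_one]; norm_num

lemma card_le_mul_card_bohrSet_pow (Γ : Finset (AddChar G ℂ)) (m : ℕ) :
    Fintype.card G ≤ 81 ^ (#Γ * m) * #(bohrSet Γ (2 * (1 / 2) ^ m)) := by
  induction m with
  | zero => simp [bohrSet_two]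
  | succ m ih =>
    have doubling := card_bohrSet_two_mul_le Γ (ρ := 2 * (1 / 2) ^ (m + 1)) (by positivity)
    rw [show (2 : ℝ) * (2 * (1 / 2) ^ (m + 1)) = 2 * (1 / 2) ^ m by ring] at doubling
    calc Fintype.card G ≤ 81 ^ (#Γ * m) * #(bohrSet Γ (2 * (1 / 2) ^ m)) := ih
      _ ≤ 81 ^ (#Γ * m) * (81 ^ #Γ * #(bohrSet Γ (2 * (1 / 2) ^ (m + 1)))) := by gcongr
      _ = 81 ^ (#Γ * (m + 1)) * #(bohrSet Γ (2 * (1 / 2) ^ (m + 1))) := by ring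

lemma card_le_mul_card_bohrSet {D m : ℕ} (hΓ : #Γ ≤ D) (hm : 2 * (1 / 2) ^ m ≤ ρ) :
    (Fintype.card G : ℝ) ≤ 81 ^ (D * m) * #(bohrSet Γ ρ) := by
  have h : Fintype.card G ≤ 81 ^ (D * m) * #(bohrSet Γ ρ) :=
    (card_le_mul_card_bohrSet_pow Γ m).trans <| Nat.mul_le_mul
      (Nat.pow_le_pow_right (by norm_num) (Nat.mul_le_mul_right m hΓ))
      (card_le_card (bohrSet_mono hm))
  exact_mod_cast h

/-- Regularity of the Bohr set with data `(Γ, ρ)`: enlarging the positive radius `ρ` by the factor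
`1 + κ` enlarges the size by a factor at most `1 + ε`. -/
def IsRegular (κ ε : ℝ) (Γ : Finset (AddChar G ℂ)) (ρ : ℝ) : Prop :=
  0 < ρ ∧ (#(bohrSet Γ ((1 + κ) * ρ)) : ℝ) ≤ (1 + ε) * #(bohrSet Γ ρ)

-- If no radius `ρ / 2 * (1 + κ) ^ i` with `i ≤ J` is regular, then the Bohr set of radius `ρ` is
-- larger than that of radius `ρ / 2` by a factor `(1 + ε) ^ J`, contradicting the doubling bound.
lemma exists_isRegular_of_pow_lt {κ ε : ℝ} {D J : ℕ} (hκ : 0 ≤ κ) (hε : 0 ≤ ε)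
    (hκJ : (1 + κ) ^ J ≤ 2) (hεJ : (81 : ℝ) ^ D < (1 + ε) ^ J) (hΓ : #Γ ≤ D) (hρ : 0 < ρ) :
    ∃ ρ', ρ / 2 ≤ ρ' ∧ ρ' ≤ ρ ∧ IsRegular κ ε Γ ρ' := by
  by_contra! hcon
  have radius_le {i : ℕ} (hi : i ≤ J) : ρ / 2 * (1 + κ) ^ i ≤ ρ := by
    have : (1 + κ) ^ i ≤ 2 := (pow_le_pow_right₀ (by linarith) hi).trans hκJ
    nlinarith
  have growth (i : ℕ) (hi : i ≤ J) :
      (1 + ε) ^ i * #(bohrSet Γ (ρ / 2)) ≤ #(bohrSet Γ (ρ / 2 * (1 + κ) ^ i)) := by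
    induction i with
    | zero => simp
    | succ i ih =>
      have hirreg := hcon (ρ / 2 * (1 + κ) ^ i)
        (le_mul_of_one_le_right (by positivity) (one_le_pow₀ (by linarith))) (radius_le (by omega))
      simp only [IsRegular, not_and, not_le] at hirreg
      calc (1 + ε) ^ (i + 1) * #(bohrSet Γ (ρ / 2))
          = (1 + ε) * ((1 + ε) ^ i * #(bohrSet Γ (ρ / 2))) := by ring
        _ ≤ (1 + ε) * #(bohrSet Γ (ρ / 2 * (1 + κ) ^ i)) := by gcongr; exact ih (by omega)
        _ ≤ #(bohrSet Γ ((1 + κ) * (ρ / 2 * (1 + κ) ^ i))) := (hirreg (by positivity)).le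
        _ = #(bohrSet Γ (ρ / 2 * (1 + κ) ^ (i + 1))) := by ring_nf
  have doubling : (#(bohrSet Γ ρ) : ℝ) ≤ 81 ^ D * #(bohrSet Γ (ρ / 2)) := by
    have h := card_bohrSet_two_mul_le Γ (half_pos hρ)
    rw [mul_div_cancel₀ _ two_ne_zero] at h
    exact_mod_cast h.trans
      (Nat.mul_le_mul_right _ (Nat.pow_le_pow_right (by norm_num) hΓ))
  have hpos : (0 : ℝ) < #(bohrSet Γ (ρ / 2)) := by
    exact_mod_cast (bohrSet_nonempty (half_pos hρ).le).card_pos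
  have hmono : (#(bohrSet Γ (ρ / 2 * (1 + κ) ^ J)) : ℝ) ≤ #(bohrSet Γ ρ) := by
    exact_mod_cast card_le_card (bohrSet_mono (radius_le le_rfl))
  exact hεJ.not_ge
    (le_of_mul_le_mul_right ((growth J le_rfl).trans (hmono.trans doubling)) hpos)

lemma exists_isRegular {κ ε : ℝ} {D : ℕ} (hκ : 0 < κ) (hκε : κ * (16 * (D + 1)) ≤ ε) (hε : ε ≤ 1)
    (hΓ : #Γ ≤ D) (hρ : 0 < ρ) : ∃ ρ', ρ / 2 ≤ ρ' ∧ ρ' ≤ ρ ∧ IsRegular κ ε Γ ρ' := by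
  have hD : (0 : ℝ) ≤ D := D.cast_nonneg
  have hε0 : 0 < ε := lt_of_lt_of_le (by positivity) hκε
  set J := ⌊1 / (1.5 * κ)⌋₊
  have hJκ : J * (1.5 * κ) ≤ 1 := (le_div_iff₀ (by positivity)).1 (Nat.floor_le (by positivity))
  have hJκ' : 1 < (J + 1) * (1.5 * κ) :=
    (div_lt_iff₀ (by positivity)).1 (Nat.lt_floor_add_one _)
  refine exists_isRegular_of_pow_lt hκ.le hε0.le (J := J) ?_ ?_ hΓ hρ
  · rw [← Real.log_le_log_iff (by positivity) two_pos, Real.log_pow]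
    have hlog : Real.log (1 + κ) ≤ κ := by
      linarith [Real.log_le_sub_one_of_pos (show 0 < 1 + κ by positivity)]
    nlinarith [Real.log_two_gt_d9, mul_le_mul_of_nonneg_left hlog (Nat.cast_nonneg (α := ℝ) J)]
  · have hlog : ε / 2 ≤ Real.log (1 + ε) := by
      refine le_trans ?_ (Real.one_sub_inv_le_log_of_pos (by positivity))
      rw [← sub_nonneg]
      field_simp
      nlinarith
    have hlog81 : Real.log 81 ≤ 4.5 := by
      rw [show (81 : ℝ) = (3 : ℝ) ^ 4 by norm_num, Real.log_pow]
      have := Real.log_three_lt_d9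
      push_cast
      linarith
    rw [← Real.log_lt_log_iff (by positivity) (by positivity), Real.log_pow, Real.log_pow]
    have hJε : 10 * (D + 1) ≤ (J + 1) * ε := by nlinarith
    nlinarith [mul_le_mul_of_nonneg_left hlog (Nat.cast_nonneg (α := ℝ) J),
      mul_le_mul_of_nonneg_left hlog81 hD]

lemma IsRegular.isAlmostPeriod [DecidableEq G] {κ ε : ℝ} (h : IsRegular κ ε Γ ρ) (hκ : 0 ≤ κ)
    (hx : x ∈ bohrSet Γ (κ * ρ)) : IsAlmostPeriod ε (bohrSet Γ ρ) x := by
  set B := bohrSet Γ ρ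
  have hdisj : Disjoint (image (· + x) {b ∈ B | b + x ∉ B}) B := by
    simp +contextual [disjoint_left]
  have hsub : image (· + x) {b ∈ B | b + x ∉ B} ∪ B ⊆ bohrSet Γ ((1 + κ) * ρ) := by
    refine union_subset (image_subset_iff.2 fun b hb => ?_) (bohrSet_mono (by nlinarith [h.1]))
    rw [add_mul, one_mul]
    exact add_mem_bohrSet (mem_filter.1 hb).1 hx
  have hcard := card_le_card hsub
  rw [card_union_of_disjoint hdisj, card_image_of_injective _ (add_left_injective x)] at hcard
  have hcard' : (#{b ∈ B | b + x ∉ B} + #B : ℝ) ≤ #(bohrSet Γ ((1 + κ) * ρ)) := by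
    exact_mod_cast hcard
  have := h.2
  simp only [IsAlmostPeriod]
  linarith

lemma exists_bohrSet_eq_image_two_nsmul [DecidableEq G] (hG : (Nat.card G).Coprime 2)
    (Γ : Finset (AddChar G ℂ)) :
    ∃ Γ' : Finset (AddChar G ℂ), #Γ' ≤ #Γ ∧
      ∀ ρ, bohrSet Γ' ρ = (bohrSet Γ ρ).image (2 • ·) := by
  classical
  let double : G ≃+ G := { nsmulCoprime hG with map_add' := fun x y => nsmul_add x y 2 }
  refine ⟨Γ.image fun γ => γ.compAddMonoidHom double.symm.toAddMonoidHom, card_image_le,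
    fun ρ => ?_⟩
  ext y
  obtain ⟨x, rfl⟩ := double.surjective y
  have hdouble (z : G) : double z = 2 • z := rfl
  simp [mem_bohrSet, ← hdouble]

end Bohr

/-! ### Moments of autocorrelations -/

lemma indicator_nonneg {G : Type*} (A : Finset G) (x : G) : 0 ≤ 𝟙[A] x :=
  Set.indicator_nonneg (fun _ _ => zero_le_one) x

lemma sum_product_sum_mul_pow {G ι : Type*} [Fintype G] (I : Finset ι) (p : ℕ)
    (a b : ι → G → ℝ) :
    ∑ z ∈ I ×ˢ I, (∑ x, a z.1 x * b z.2 x) ^ p =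
      ∑ s : Fin p → G, (∑ i ∈ I, ∏ k, a i (s k)) * ∑ j ∈ I, ∏ k, b j (s k) := by
  simp_rw [Fintype.sum_pow, prod_mul_distrib, sum_mul_sum]
  rw [sum_comm]
  exact sum_congr rfl fun s _ => sum_product _ _ _

section Moments

variable {G ι : Type*} [AddCommGroup G] [Fintype G]

/-- The autocorrelation `g ⋆ g` of a real function `g`; for an indicator function it counts the
representations of `w` as a difference. -/
def autocorr (g : G → ℝ) (w : G) : ℝ := ∑ x, g (x + w) * g x

/-- The convolution square `g * g` of a real function `g`; for an indicator function it counts the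
representations of `w` as a sum. -/
def selfConv (g : G → ℝ) (w : G) : ℝ := ∑ x, g x * g (w - x)

lemma autocorr_sub (g : G → ℝ) (v v' : G) :
    autocorr g (v - v') = ∑ x, g (x + v) * g (x + v') :=
  Fintype.sum_equiv (Equiv.subRight v') _ _ fun x => by
    rw [Equiv.subRight_apply, sub_add_cancel, sub_add_eq_add_sub, add_sub_assoc]

lemma selfConv_add_add (g : G → ℝ) (l v v' : G) :
    selfConv g (l + v + v') = ∑ x, g (x + v) * g (l - x + v') :=
  Fintype.sum_equiv (Equiv.subRight v) _ _ fun x => by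
    rw [Equiv.subRight_apply, sub_add_cancel]; congr 2; abel

lemma autocorr_nonneg {g : G → ℝ} (hg : 0 ≤ g) (w : G) : 0 ≤ autocorr g w :=
  sum_nonneg fun _ _ => mul_nonneg (hg _) (hg _)

lemma sum_autocorr_pow (g : G → ℝ) (φ : ι → G) (I : Finset ι) (p : ℕ) :
    ∑ z ∈ I ×ˢ I, autocorr g (φ z.1 - φ z.2) ^ p =
      ∑ s : Fin p → G, (∑ i ∈ I, ∏ k : Fin p, g (s k + φ i)) ^ 2 := by
  simp_rw [autocorr_sub, sq]
  exact sum_product_sum_mul_pow I p (fun i x => g (x + φ i)) (fun i x => g (x + φ i))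

lemma sum_autocorr_pow_nonneg (g : G → ℝ) (φ : ι → G) (I : Finset ι) (p : ℕ) :
    0 ≤ ∑ z ∈ I ×ˢ I, autocorr g (φ z.1 - φ z.2) ^ p := by
  rw [sum_autocorr_pow]; positivity

lemma sum_selfConv_pow_le (g : G → ℝ) (φ : ι → G) (I : Finset ι) (p : ℕ) (l : G) :
    ∑ z ∈ I ×ˢ I, selfConv g (l + φ z.1 + φ z.2) ^ p ≤
      ∑ z ∈ I ×ˢ I, autocorr g (φ z.1 - φ z.2) ^ p := by
  rw [sum_autocorr_pow]
  simp_rw [selfConv_add_add]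
  rw [sum_product_sum_mul_pow I p (fun i x => g (x + φ i)) (fun i x => g (l - x + φ i))]
  set U : (Fin p → G) → ℝ := fun s => ∑ i ∈ I, ∏ k, g (s k + φ i)
  have reflect : ∑ s : Fin p → G, U (fun k => l - s k) ^ 2 = ∑ s, U s ^ 2 :=
    ((Equiv.refl (Fin p)).arrowCongr (Equiv.subLeft l)).sum_comp (fun s => U s ^ 2)
  calc ∑ s : Fin p → G, U s * U (fun k => l - s k)
      ≤ ∑ s, (U s ^ 2 + U (fun k => l - s k) ^ 2) / 2 :=
        sum_le_sum fun s _ => by linarith [two_mul_le_add_sq (U s) (U fun k => l - s k)]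
    _ = ∑ s, U s ^ 2 := by rw [← sum_div, sum_add_distrib, reflect, add_self_div_two]

lemma choose_mul_sum_pow_le (s : Finset ι) {h : ι → ℝ} (hh : ∀ k, 0 ≤ ∑ i ∈ s, h i ^ k) {p q : ℕ}
    (hpq : p ≤ q) : q.choose p * ∑ i ∈ s, h i ^ p ≤ ∑ i ∈ s, (1 + h i) ^ q := by
  have expand : ∑ i ∈ s, (1 + h i) ^ q = ∑ k ∈ range (q + 1), q.choose k * ∑ i ∈ s, h i ^ k := by
    simp_rw [add_comm (1 : ℝ), add_pow, one_pow, mul_one, mul_sum, mul_comm (h _ ^ _)]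
    exact sum_comm
  rw [expand]
  exact single_le_sum (f := fun k => q.choose k * ∑ i ∈ s, h i ^ k)
    (fun k _ => mul_nonneg (by positivity) (hh k)) (mem_range.2 (by omega))

lemma seven_pow_le_choose (p : ℕ) : (7 : ℝ) ^ p ≤ (8 * p).choose p := by
  refine le_trans ?_ (Nat.pow_le_choose (α := ℝ) p (8 * p))
  rw [le_div_iff₀ (by positivity)]
  calc (7 : ℝ) ^ p * p.factorial ≤ 7 ^ p * (p : ℝ) ^ p := by
        gcongr; exact_mod_cast Nat.factorial_le_pow p
    _ = (7 * p : ℝ) ^ p := (mul_pow _ _ _).symm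
    _ ≤ ((8 * p + 1 - p : ℕ) : ℝ) ^ p := by
      gcongr
      exact_mod_cast (by omega : 7 * p ≤ 8 * p + 1 - p)

-- Averaging over the translates of `W` by `φ i + φ j` produces the double sums in
-- `sum_selfConv_pow_le`.
lemma card_sq_mul_le_sum_autocorr_pow {g : G → ℝ} {φ : ι → G} {I : Finset ι} {p : ℕ} (hp : Even p)
    {C W W' : Finset G} {t : ℝ} (hCW : C ⊆ W) (hC : ∀ w ∈ C, t ≤ selfConv g w ^ p)
    (hW' : ∀ w ∈ W, ∀ i ∈ I, ∀ j ∈ I, w - φ i - φ j ∈ W') :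
    (#I : ℝ) ^ 2 * (#C * t) ≤ #W' * ∑ z ∈ I ×ˢ I, autocorr g (φ z.1 - φ z.2) ^ p := by
  have translate : ∀ z ∈ I ×ˢ I,
      ∑ w ∈ W, selfConv g w ^ p ≤ ∑ l ∈ W', selfConv g (l + φ z.1 + φ z.2) ^ p := by
    classical
    rintro ⟨i, j⟩ hz
    obtain ⟨hi, hj⟩ := mem_product.1 hz
    calc ∑ w ∈ W, selfConv g w ^ p
        = ∑ l ∈ W.image (· - φ i - φ j), selfConv g (l + φ i + φ j) ^ p := by
          rw [sum_image (by simp [Set.InjOn])]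
          exact sum_congr rfl fun w _ => by congr 2; abel
      _ ≤ ∑ l ∈ W', selfConv g (l + φ i + φ j) ^ p :=
          sum_le_sum_of_subset_of_nonneg
            (image_subset_iff.2 fun w hw => hW' w hw _ hi _ hj) fun _ _ _ => hp.pow_nonneg _
  calc (#I : ℝ) ^ 2 * (#C * t) ≤ (#I : ℝ) ^ 2 * ∑ w ∈ W, selfConv g w ^ p := by
        gcongr
        rw [← nsmul_eq_mul]
        exact (card_nsmul_le_sum _ _ _ hC).trans
          (sum_le_sum_of_subset_of_nonneg hCW fun _ _ _ => hp.pow_nonneg _)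
    _ = ∑ _ ∈ I ×ˢ I, ∑ w ∈ W, selfConv g w ^ p := by
        rw [sum_const, card_product, nsmul_eq_mul]; push_cast; ring
    _ ≤ ∑ z ∈ I ×ˢ I, ∑ l ∈ W', selfConv g (l + φ z.1 + φ z.2) ^ p := sum_le_sum translate
    _ = ∑ l ∈ W', ∑ z ∈ I ×ˢ I, selfConv g (l + φ z.1 + φ z.2) ^ p := sum_comm
    _ ≤ #W' * ∑ z ∈ I ×ˢ I, autocorr g (φ z.1 - φ z.2) ^ p := by
        rw [← nsmul_eq_mul]
        exact sum_le_card_nsmul _ _ _ fun l _ => sum_selfConv_pow_le g φ I p l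

end Moments

/-! ### Few three-term progressions force a large autocorrelation moment -/

section Lift

lemma sum_indicator_mul_indicator {G : Type*} [Fintype G] [DecidableEq G] (A B : Finset G)
    (π : G → G) :
    ∑ x, 𝟙[A] x * 𝟙[B] (π x) = #{x ∈ A | π x ∈ B} := by
  simp [Set.indicator_apply, ← ite_and, filter_and, filter_inter]

lemma card_le_card_filter_mem_add {G : Type*} [DecidableEq G] {A B : Finset G} (hAB : A ⊆ B)
    (π : G → G) :
    (#A : ℝ) ≤ #{x ∈ A | π x ∈ B} + #{x ∈ B | π x ∉ B} := by
  have := card_filter_add_card_filter_not (s := A) (π · ∈ B)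
  have := card_le_card (filter_subset_filter (π · ∉ B) hAB)
  exact_mod_cast (by omega)

lemma card_filter_mem_le {G : Type*} [DecidableEq G] (A B : Finset G) (π : G → G) :
    (#{x ∈ A | π x ∈ B} : ℝ) ≤ #A :=
  mod_cast card_filter_le _ _

variable {G ι : Type*} [AddCommGroup G] [Fintype G] [DecidableEq G] {A B : Finset G} {α ε : ℝ}

/-- The balanced function of a subset `A` of `B` of relative density `α`. -/
noncomputable def balanced (A B : Finset G) (α : ℝ) (x : G) : ℝ := 𝟙[A] x - α * 𝟙[B] x

lemma selfConv_balanced (A B : Finset G) (α : ℝ) (w : G) :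
    selfConv (balanced A B α) w = #{x ∈ A | w - x ∈ A} - 2 * α * #{x ∈ A | w - x ∈ B} +
      α ^ 2 * #{x ∈ B | w - x ∈ B} := by
  have reflect : ∑ x, 𝟙[B] x * 𝟙[A] (w - x) = ∑ x, 𝟙[A] x * 𝟙[B] (w - x) :=
    Fintype.sum_equiv (Equiv.subLeft w) _ _ fun x => by simp [mul_comm]
  simp_rw [← sum_indicator_mul_indicator, mul_assoc, two_mul, mul_sum]
  nth_rw 2 [← mul_sum]
  rw [← reflect, mul_sum, ← sum_add_distrib, ← sum_sub_distrib, ← sum_add_distrib]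
  exact sum_congr rfl fun x _ => by simp only [balanced]; ring

lemma autocorr_balanced (A B : Finset G) (α : ℝ) (w : G) :
    autocorr (balanced A B α) w = autocorr 𝟙[A] w - α * #{x ∈ A | x - w ∈ B} -
      α * #{x ∈ A | x + w ∈ B} + α ^ 2 * #{x ∈ B | x + w ∈ B} := by
  have translate : ∑ x, 𝟙[A] (x + w) * 𝟙[B] x = ∑ x, 𝟙[A] x * 𝟙[B] (x - w) :=
    Fintype.sum_equiv (Equiv.addRight w) _ _ fun x => by simp
  simp_rw [← sum_indicator_mul_indicator, ← translate, autocorr, mul_sum, ← sum_sub_distrib,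
    ← sum_add_distrib]
  exact sum_congr rfl fun x _ => by simp only [balanced]; ring

lemma selfConv_balanced_le (hAB : A ⊆ B) (hB : ∀ x, -x ∈ B ↔ x ∈ B) (hα : 0 ≤ α)
    (hA : (#A : ℝ) = α * #B) {w : G} (hw : IsAlmostPeriod ε B w) :
    selfConv (balanced A B α) w ≤ #{x ∈ A | w - x ∈ A} - α ^ 2 * #B + 2 * α * ε * #B := by
  have hw' : (#{x ∈ B | w - x ∉ B} : ℝ) ≤ ε * #B := by
    simpa only [IsAlmostPeriod, ← sub_eq_add_neg, ← hB (w - _), neg_sub] using hw.neg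
  have lower := card_le_card_filter_mem_add hAB (w - ·)
  have upper := card_filter_mem_le B B (w - ·)
  rw [selfConv_balanced]
  nlinarith [mul_le_mul_of_nonneg_left upper (sq_nonneg α), mul_le_mul_of_nonneg_left lower hα,
    mul_le_mul_of_nonneg_left hw' hα]

lemma abs_autocorr_balanced_sub_le (hAB : A ⊆ B) (hα : 0 ≤ α) (hα2 : α ≤ 2) (hε : 0 ≤ ε)
    (hA : (#A : ℝ) = α * #B) {w : G} (hw : IsAlmostPeriod ε B w) :
    |autocorr (balanced A B α) w - (autocorr 𝟙[A] w - α ^ 2 * #B)| ≤ 2 * α * ε * #B := by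
  have hneg : (#{x ∈ B | x - w ∉ B} : ℝ) ≤ ε * #B := by
    simpa only [IsAlmostPeriod, ← sub_eq_add_neg] using hw.neg
  have lower := card_le_card_filter_mem_add hAB (· + w)
  have lower' := card_le_card_filter_mem_add hAB (· - w)
  have lower_self := card_le_card_filter_mem_add (subset_refl B) (· + w)
  simp only [IsAlmostPeriod] at hw
  have hαε : α ^ 2 * (ε * #B) ≤ 2 * α * (ε * #B) := by
    rw [sq]; gcongr
  rw [autocorr_balanced, abs_le]
  constructor
  · nlinarith [mul_le_mul_of_nonneg_left (card_filter_mem_le A B (· + w)) hα,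
      mul_le_mul_of_nonneg_left (card_filter_mem_le A B (· - w)) hα,
      mul_le_mul_of_nonneg_left lower_self (sq_nonneg α),
      mul_le_mul_of_nonneg_left hw (sq_nonneg α)]
  · nlinarith [mul_le_mul_of_nonneg_left lower hα, mul_le_mul_of_nonneg_left lower' hα,
      mul_le_mul_of_nonneg_left hw hα, mul_le_mul_of_nonneg_left hneg hα,
      mul_le_mul_of_nonneg_left (card_filter_mem_le B B (· + w)) (sq_nonneg α)]

lemma one_add_autocorr_balanced_pow_le (hAB : A ⊆ B) (hα : 0 < α) (hα2 : α ≤ 2) (hε : 0 ≤ ε)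
    (hA : (#A : ℝ) = α * #B) (hB : 0 < (#B : ℝ)) {θ : ℝ} (hθ : 2 * ε ≤ α * θ) {w : G}
    (hw : IsAlmostPeriod ε B w) {q : ℕ} (hq : Even q) :
    (1 + autocorr (balanced A B α) w / (α ^ 2 * #B)) ^ q ≤
      (autocorr 𝟙[A] w / (α ^ 2 * #B) + θ) ^ q := by
  have hK : 0 < α ^ 2 * #B := by positivity
  have hclose := abs_le.1 (abs_autocorr_balanced_sub_le hAB hα.le hα2 hε hA hw)
  have hnonneg : 0 ≤ autocorr 𝟙[A] w := autocorr_nonneg (indicator_nonneg A) w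
  have herror : 2 * α * ε * #B ≤ θ * (α ^ 2 * #B) := by
    nlinarith [mul_le_mul_of_nonneg_left hθ (mul_nonneg hα.le hB.le)]
  rw [← hq.pow_abs (1 + _)]
  gcongr
  rw [one_add_div hK.ne', abs_div, abs_of_pos hK, div_add' _ _ _ hK.ne',
    div_le_div_iff_of_pos_right hK, abs_le]
  constructor <;> linarith

lemma card_sq_mul_pow_le_sum_autocorr_balanced (hAB : A ⊆ B) (hB : ∀ x, -x ∈ B ↔ x ∈ B)
    (hα : 0 < α) (hA : (#A : ℝ) = α * #B) (hBcard : 4 ≤ α ^ 2 * #B) (hε : ε ≤ α / 8)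
    {C W W' : Finset G} {δ : ℝ} {p : ℕ} (hp : Even p) (hCW : C ⊆ W) (hW : W.Nonempty)
    (hCper : ∀ w ∈ C, IsAlmostPeriod ε B w) (hCrep : ∀ w ∈ C, #{x ∈ A | w - x ∈ A} ≤ 1)
    (hCcard : δ * #W ≤ #C) (hδ : 2 ≤ δ * 2 ^ p) {φ : ι → G} {I : Finset ι}
    (hW' : ∀ w ∈ W, ∀ i ∈ I, ∀ j ∈ I, w - φ i - φ j ∈ W') (hW'card : (#W' : ℝ) ≤ 2 * #W) :
    (#I : ℝ) ^ 2 * (1 / 4 * (α ^ 2 * #B)) ^ p ≤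
      ∑ z ∈ I ×ˢ I, autocorr (balanced A B α) (φ z.1 - φ z.2) ^ p := by
  set K : ℝ := α ^ 2 * #B with hK
  have selfConv_large (w) (hw : w ∈ C) : (1 / 2 * K) ^ p ≤ selfConv (balanced A B α) w ^ p := by
    have hle := selfConv_balanced_le hAB hB hα.le hA (hCper w hw)
    have hrep : (#{x ∈ A | w - x ∈ A} : ℝ) ≤ 1 := by exact_mod_cast hCrep w hw
    have herror : 2 * α * ε * #B ≤ K / 4 := by
      calc 2 * α * ε * #B ≤ 2 * α * (α / 8) * #B := by gcongr
        _ = K / 4 := by rw [hK]; ring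
    rw [← hp.neg_pow (selfConv _ w)]
    gcongr
    linarith
  set Q := ∑ z ∈ I ×ˢ I, autocorr (balanced A B α) (φ z.1 - φ z.2) ^ p
  have hQ : 0 ≤ Q := sum_autocorr_pow_nonneg _ φ I p
  have hW0 : (0 : ℝ) < #W := by exact_mod_cast hW.card_pos
  refine le_of_mul_le_mul_left (?_ : 2 * #W * _ ≤ 2 * #W * Q) (by positivity)
  calc 2 * #W * ((#I : ℝ) ^ 2 * (1 / 4 * K) ^ p)
      = (#I : ℝ) ^ 2 * (2 * #W * (1 / 4 * K) ^ p) := by ring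
    _ ≤ (#I : ℝ) ^ 2 * (δ * 2 ^ p * #W * (1 / 4 * K) ^ p) := by gcongr
    _ = (#I : ℝ) ^ 2 * (δ * #W * (1 / 2 * K) ^ p) := by
        rw [show 1 / 2 * K = 2 * (1 / 4 * K) by ring, mul_pow 2]; ac_rfl
    _ ≤ (#I : ℝ) ^ 2 * (#C * (1 / 2 * K) ^ p) := by gcongr
    _ ≤ #W' * Q := card_sq_mul_le_sum_autocorr_pow hp hCW selfConv_large hW'
    _ ≤ 2 * #W * Q := by gcongr

-- The even moment of `𝟙_A ⋆ 𝟙_A / (α² |B|) - 1` is spectrally positive, so passing to a moment of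
-- eight times the order turns a deviation of either sign into an excess above `7 / 4`.
lemma pow_mul_card_sq_le_sum_autocorr_pow (hAB : A ⊆ B) (hB : ∀ x, -x ∈ B ↔ x ∈ B) (hα : 0 < α)
    (hα2 : α ≤ 2) (hA : (#A : ℝ) = α * #B) (hBcard : 4 ≤ α ^ 2 * #B) (hε0 : 0 ≤ ε)
    (hε : ε ≤ α / 8) {θ : ℝ} (hθ : 2 * ε ≤ α * θ) {C W W' : Finset G} {δ : ℝ} {p : ℕ}
    (hp : Even p) (hCW : C ⊆ W) (hW : W.Nonempty) (hCper : ∀ w ∈ C, IsAlmostPeriod ε B w)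
    (hCrep : ∀ w ∈ C, #{x ∈ A | w - x ∈ A} ≤ 1) (hCcard : δ * #W ≤ #C) (hδ : 2 ≤ δ * 2 ^ p)
    {φ : ι → G} {I : Finset ι} (hW' : ∀ w ∈ W, ∀ i ∈ I, ∀ j ∈ I, w - φ i - φ j ∈ W')
    (hW'card : (#W' : ℝ) ≤ 2 * #W)
    (hφ : ∀ i ∈ I, ∀ j ∈ I, IsAlmostPeriod ε B (φ i - φ j)) :
    (7 / 4) ^ p * (#I : ℝ) ^ 2 ≤
      ∑ z ∈ I ×ˢ I, (autocorr 𝟙[A] (φ z.1 - φ z.2) / (α ^ 2 * #B) + θ) ^ (8 * p) := by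
  have hB0 : 0 < (#B : ℝ) := pos_of_mul_pos_right (four_pos.trans_le hBcard) (sq_nonneg α)
  have hK : 0 < α ^ 2 * #B := by positivity
  have moment := card_sq_mul_pow_le_sum_autocorr_balanced hAB hB hα hA hBcard hε hp hCW hW hCper
    hCrep hCcard hδ hW' hW'card
  set K : ℝ := α ^ 2 * #B
  set h : ι × ι → ℝ := fun z => autocorr (balanced A B α) (φ z.1 - φ z.2) / K
  have sum_h_pow (k : ℕ) : ∑ z ∈ I ×ˢ I, h z ^ k =
      (∑ z ∈ I ×ˢ I, autocorr (balanced A B α) (φ z.1 - φ z.2) ^ k) / K ^ k := by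
    simp_rw [h, div_pow, sum_div]
  calc (7 / 4) ^ p * (#I : ℝ) ^ 2 = 7 ^ p * ((#I : ℝ) ^ 2 * (1 / 4 * K) ^ p / K ^ p) := by
        rw [mul_pow, div_pow, div_pow, one_pow]; field_simp
    _ ≤ (8 * p).choose p * ∑ z ∈ I ×ˢ I, h z ^ p := by
        rw [sum_h_pow]; gcongr; exact seven_pow_le_choose p
    _ ≤ ∑ z ∈ I ×ˢ I, (1 + h z) ^ (8 * p) :=
        choose_mul_sum_pow_le _ (fun k => sum_h_pow k ▸
          div_nonneg (sum_autocorr_pow_nonneg _ φ I k) (by positivity)) (by omega)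
    _ ≤ ∑ z ∈ I ×ˢ I, (autocorr 𝟙[A] (φ z.1 - φ z.2) / K + θ) ^ (8 * p) :=
        sum_le_sum fun z hz => one_add_autocorr_balanced_pow_le hAB hα hα2 hε0 hA hB0 hθ
          (hφ _ (mem_product.1 hz).1 _ (mem_product.1 hz).2) (hp.mul_left 8)

end Lift

/-! ### Sifting -/

lemma add_pow_eight_mul_le {x : ℝ} (hx : 0 ≤ x) (p : ℕ) :
    (x + 1 / 200) ^ (8 * p) ≤ (11 / 10) ^ p * x ^ (8 * p) + 1 := by
  have h0 : 0 ≤ (11 / 10) ^ p * x ^ (8 * p) := by positivity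
  rcases le_or_gt (1 / 2) x with hlarge | hsmall
  · calc (x + 1 / 200) ^ (8 * p) ≤ (101 / 100 * x) ^ (8 * p) := by gcongr; linarith
      _ = ((101 / 100 : ℝ) ^ 8) ^ p * x ^ (8 * p) := by rw [mul_pow, pow_mul]
      _ ≤ (11 / 10) ^ p * x ^ (8 * p) := by gcongr; norm_num
      _ ≤ (11 / 10) ^ p * x ^ (8 * p) + 1 := by linarith
  · linarith [pow_le_one₀ (n := 8 * p) (show 0 ≤ x + 1 / 200 by linarith) (by linarith)]

lemma pow_mul_card_le_sum_pow {ι : Type*} {s : Finset ι} {H : ι → ℝ} (hH : ∀ i ∈ s, 0 ≤ H i)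
    {p : ℕ} (hp : 17 ≤ p) (h : (7 / 4) ^ p * (#s : ℝ) ≤ ∑ i ∈ s, (H i + 1 / 200) ^ (8 * p)) :
    (3 / 2) ^ p * (#s : ℝ) ≤ ∑ i ∈ s, H i ^ (8 * p) := by
  have hsum : (7 / 4) ^ p * (#s : ℝ) ≤ (11 / 10) ^ p * ∑ i ∈ s, H i ^ (8 * p) + #s := by
    refine h.trans ((sum_le_sum fun i hi => add_pow_eight_mul_le (hH i hi) p).trans_eq ?_)
    rw [sum_add_distrib, ← mul_sum, sum_const, nsmul_one]
  have hgap : (11 / 10 : ℝ) ^ p * (3 / 2) ^ p + 1 ≤ (7 / 4) ^ p := by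
    have htwo : (2 : ℝ) ≤ (35 / 33) ^ p :=
      le_trans (by norm_num) (pow_le_pow_right₀ (by norm_num) hp)
    have hone : (1 : ℝ) ≤ (33 / 20) ^ p := one_le_pow₀ (by norm_num)
    calc (11 / 10 : ℝ) ^ p * (3 / 2) ^ p + 1 = (33 / 20) ^ p + 1 := by
          rw [← mul_pow]; norm_num
      _ ≤ (33 / 20) ^ p * (35 / 33) ^ p := by nlinarith
      _ = (7 / 4) ^ p := by rw [← mul_pow]; norm_num
  refine le_of_mul_le_mul_left (?_ : (11 / 10 : ℝ) ^ p * _ ≤ (11 / 10) ^ p * _) (by positivity)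
  nlinarith [mul_le_mul_of_nonneg_right hgap (Nat.cast_nonneg (α := ℝ) #s)]

section Sift

lemma sum_card_filter_forall_mem {G ι : Type*} [Fintype G] [DecidableEq G] (T : Finset ι)
    (S : ι → Finset G) (q : ℕ) :
    ∑ s : Fin q → G, (#{i ∈ T | ∀ j, s j ∈ S i} : ℝ) = ∑ i ∈ T, (#(S i) : ℝ) ^ q := by
  simp_rw [card_filter, Nat.cast_sum]
  rw [sum_comm]
  refine sum_congr rfl fun i _ => ?_
  have h : #{s : Fin q → G | ∀ j, s j ∈ S i} = #(S i) ^ q := by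
    rw [← Fintype.card_piFinset_const]
    congr 1
    ext s
    simp
  rw [← Nat.cast_sum, ← card_filter, h, Nat.cast_pow]

variable {G ι : Type*} [AddCommGroup G]

lemma exists_shift_le_sum {E F : Finset G} (hE : E.Nonempty) (hF : F.Nonempty) {H : G → ℝ} {M : ℝ}
    (h : M * (#(E ×ˢ F) : ℝ) ^ 2 ≤
      ∑ z ∈ (E ×ˢ F) ×ˢ E ×ˢ F, H (z.1.1 - z.1.2 - (z.2.1 - z.2.2))) :
    ∃ k, M * (#E * #F) ≤ ∑ e ∈ E, ∑ f ∈ F, H (e + f + k) := by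
  have hsum : ∑ _u ∈ F ×ˢ E, M * (#E * #F : ℝ) ≤
      ∑ u ∈ F ×ˢ E, ∑ e ∈ E, ∑ f ∈ F, H (e + f + (-u.1 - u.2)) := by
    refine le_of_eq_of_le ?_ (h.trans_eq ?_)
    · rw [sum_const, card_product, card_product, nsmul_eq_mul]
      push_cast
      ring
    · simp_rw [sum_product]
      rw [sum_comm]
      refine sum_congr rfl fun u _ => ?_
      rw [sum_comm]
      refine sum_congr rfl fun u' _ => sum_congr rfl fun e _ => sum_congr rfl fun f _ => ?_
      congr 1
      abel
  obtain ⟨u, -, hu⟩ := exists_le_of_sum_le (hF.product hE) hsum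
  exact ⟨_, hu⟩

-- The points with `a ≤ τ` or `b ≤ σ` carry at most half of `∑ a b`.
lemma exists_lt_lt_and_le {P : Finset ι} {a b bad : ι → ℝ} {τ σ δ : ℝ} (ha : ∀ i, 0 ≤ a i)
    (hb : ∀ i, 0 ≤ b i) (hbad : ∀ i, 0 ≤ bad i) (hτ : 0 ≤ τ) (hσ : 0 ≤ σ) (hδ : 0 ≤ δ)
    (hpos : 0 < ∑ i ∈ P, a i * b i)
    (hsmall : τ * ∑ i ∈ P, b i + σ * ∑ i ∈ P, a i ≤ (∑ i ∈ P, a i * b i) / 2)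
    (hbadsum : ∑ i ∈ P, bad i ≤ δ * ((∑ i ∈ P, a i * b i) / 2)) :
    ∃ i ∈ P, τ < a i ∧ σ < b i ∧ bad i ≤ δ * (a i * b i) := by
  classical
  set good := {i ∈ P | τ < a i ∧ σ < b i}
  have hgood : (∑ i ∈ P, a i * b i) / 2 ≤ ∑ i ∈ good, a i * b i := by
    have hrest : ∑ i ∈ P with ¬(τ < a i ∧ σ < b i), a i * b i ≤ ∑ i ∈ P, (τ * b i + σ * a i) := by
      refine (sum_le_sum fun i hi => ?_).trans
        (sum_le_sum_of_subset_of_nonneg (filter_subset _ P) fun i _ _ =>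
          add_nonneg (mul_nonneg hτ (hb i)) (mul_nonneg hσ (ha i)))
      rcases not_and_or.1 (mem_filter.1 hi).2 with h | h
      · nlinarith [mul_nonneg hσ (ha i), mul_le_mul_of_nonneg_right (not_lt.1 h) (hb i)]
      · nlinarith [mul_nonneg hτ (hb i), mul_le_mul_of_nonneg_left (not_lt.1 h) (ha i)]
    rw [sum_add_distrib, ← mul_sum, ← mul_sum] at hrest
    linarith [sum_filter_add_sum_filter_not P (fun i => τ < a i ∧ σ < b i) fun i => a i * b i]
  have hne : good.Nonempty := by
    by_contra hempty
    rw [not_nonempty_iff_eq_empty.1 hempty, sum_empty] at hgood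
    linarith
  have hsum : ∑ i ∈ good, bad i ≤ ∑ i ∈ good, δ * (a i * b i) := by
    rw [← mul_sum]
    exact (sum_le_sum_of_subset_of_nonneg (filter_subset _ P) fun i _ _ => hbad i).trans
      (hbadsum.trans (mul_le_mul_of_nonneg_left hgood hδ))
  obtain ⟨i, hi, hle⟩ := exists_le_of_sum_le hne hsum
  obtain ⟨hiP, hia, hib⟩ := mem_filter.1 hi
  exact ⟨i, hiP, hia, hib, hle⟩

variable [Fintype G]

lemma card_filter_add_mem [DecidableEq G] (A : Finset G) (x : G) : #{g | g + x ∈ A} = #A :=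
  card_bij' (fun g _ => g + x) (fun a _ => a - x) (by simp) (by simp) (by simp) (by simp)

lemma autocorr_indicator_sub [DecidableEq G] (A : Finset G) (x y : G) :
    autocorr 𝟙[A] (x - y) = #{g | g + x ∈ A ∧ g + y ∈ A} := by
  simp [autocorr_sub, Set.indicator_apply, ← ite_and, and_comm]

lemma sum_card_filter_forall_add_mem [DecidableEq G] (A : Finset G) (T : Finset ι) (x : ι → G)
    (q : ℕ) :
    ∑ s : Fin q → G, (#{i ∈ T | ∀ j, s j + x i ∈ A} : ℝ) = #T * (#A : ℝ) ^ q := by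
  have h := sum_card_filter_forall_mem T (fun i => {g | g + x i ∈ A}) q
  simpa only [mem_filter_univ, card_filter_add_mem, sum_const, nsmul_eq_mul] using h

lemma sum_card_filter_product_forall_add_mem [DecidableEq G] (A E F : Finset G) (x y : G → G)
    (q : ℕ) (p : G × G → Prop) [DecidablePred p] :
    ∑ s : Fin q → G,
        (#{z ∈ {e ∈ E | ∀ j, s j + x e ∈ A} ×ˢ {f ∈ F | ∀ j, s j + y f ∈ A} | p z} : ℝ) =
      ∑ z ∈ E ×ˢ F with p z, autocorr 𝟙[A] (x z.1 - y z.2) ^ q := by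
  have h := sum_card_filter_forall_mem {z ∈ E ×ˢ F | p z}
    (fun z => {g | g + x z.1 ∈ A ∧ g + y z.2 ∈ A}) q
  simp only [mem_filter_univ, ← autocorr_indicator_sub, forall_and] at h
  rw [← h]
  refine sum_congr rfl fun s _ => ?_
  rw [← filter_product, filter_comm]

-- The sets are cut out of `E` and `F` by `q` random translates of `A`.
lemma sift {A E F : Finset G} {q : ℕ} {K τ M l δ : ℝ} (k : G) (hE : E.Nonempty) (hF : F.Nonempty)
    (hK : 0 < K) (hτ : 0 ≤ τ) (hτA : τ * (#A : ℝ) ^ q ≤ K ^ q / 4) (hM : 1 ≤ M) (hl : 0 ≤ l)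
    (hδ : 0 ≤ δ) (hlδ : l ^ q ≤ δ / 2 * M)
    (h : M * K ^ q * (#E * #F) ≤ ∑ e ∈ E, ∑ f ∈ F, autocorr 𝟙[A] (e + f + k) ^ q) :
    ∃ X ⊆ E, ∃ Y ⊆ F, τ * #E < #X ∧ τ * #F < #Y ∧
      (#{z ∈ X ×ˢ Y | autocorr 𝟙[A] (z.1 + z.2 + k) ≤ l * K} : ℝ) ≤ δ * (#X * #Y) := by
  classical
  have hE0 : (0 : ℝ) < #E := by exact_mod_cast hE.card_pos
  have hF0 : (0 : ℝ) < #F := by exact_mod_cast hF.card_pos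
  set X : (Fin q → G) → Finset G := fun s => {e ∈ E | ∀ i, s i + (e + k) ∈ A}
  set Y : (Fin q → G) → Finset G := fun s => {f ∈ F | ∀ i, s i + -f ∈ A}
  have sum_X : ∑ s, (#(X s) : ℝ) = #E * (#A : ℝ) ^ q := sum_card_filter_forall_add_mem A E _ q
  have sum_Y : ∑ s, (#(Y s) : ℝ) = #F * (#A : ℝ) ^ q := sum_card_filter_forall_add_mem A F _ q
  have sum_filter_XY (p : G × G → Prop) [DecidablePred p] :
      ∑ s, (#{z ∈ X s ×ˢ Y s | p z} : ℝ) =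
        ∑ z ∈ E ×ˢ F with p z, autocorr 𝟙[A] (z.1 + z.2 + k) ^ q := by
    have := sum_card_filter_product_forall_add_mem A E F (· + k) (- ·) q p
    simpa only [sub_neg_eq_add, add_right_comm _ k] using this
  have sum_XY : ∑ s, (#(X s) * #(Y s) : ℝ) = ∑ e ∈ E, ∑ f ∈ F, autocorr 𝟙[A] (e + f + k) ^ q := by
    simpa only [filter_true, card_product, Nat.cast_mul, sum_product]
      using sum_filter_XY fun _ => True
  have sum_bad : ∑ s, (#{z ∈ X s ×ˢ Y s | autocorr 𝟙[A] (z.1 + z.2 + k) ≤ l * K} : ℝ) ≤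
      #E * #F * (l * K) ^ q := by
    rw [sum_filter_XY]
    refine (sum_le_card_nsmul _ _ ((l * K) ^ q) fun z hz => pow_le_pow_left₀
      (autocorr_nonneg (indicator_nonneg A) _) (mem_filter.1 hz).2 q).trans ?_
    rw [nsmul_eq_mul, ← Nat.cast_mul, ← card_product]
    gcongr
    exact filter_subset _ _
  have hMK : K ^ q * (#E * #F) ≤ M * K ^ q * (#E * #F) := by
    rw [mul_assoc]; exact le_mul_of_one_le_left (by positivity) hM
  obtain ⟨s, -, hX, hY, hbad⟩ := exists_lt_lt_and_le (P := univ) (a := fun s => (#(X s) : ℝ))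
    (b := fun s => (#(Y s) : ℝ)) (τ := τ * #E) (σ := τ * #F) (fun _ => Nat.cast_nonneg _)
    (fun _ => Nat.cast_nonneg _) (fun _ => Nat.cast_nonneg _) (by positivity) (by positivity) hδ
    (by rw [sum_XY]; exact lt_of_lt_of_le (by positivity) (hMK.trans h))
    (by
      rw [sum_XY, sum_X, sum_Y]
      nlinarith [mul_le_mul_of_nonneg_right hτA (mul_pos hE0 hF0).le])
    (sum_bad.trans (by
      rw [sum_XY, mul_pow]
      nlinarith [mul_le_mul_of_nonneg_right hlδ (show 0 ≤ K ^ q * (#E * #F : ℝ) by positivity),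
        mul_le_mul_of_nonneg_left h hδ]))
  exact ⟨X s, filter_subset _ _, Y s, filter_subset _ _, hX, hY, hbad⟩

end Sift

/-! ### Almost periodicity of local densities -/

section Hoeffding

variable {α : Type*} {X : Finset α} {g : α → ℝ}

lemma sum_exp_mul_le (hg : ∀ x ∈ X, |g x| ≤ 1) (h0 : ∑ x ∈ X, g x = 0) {t : ℝ} (ht : 0 ≤ t)
    (ht1 : t ≤ 1) : ∑ x ∈ X, Real.exp (t * g x) ≤ #X * Real.exp (t ^ 2) := by
  have pointwise : ∀ x ∈ X, Real.exp (t * g x) ≤ 1 + t * g x + t ^ 2 := by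
    intro x hx
    have habs : |t * g x| ≤ t := by
      rw [abs_mul, abs_of_nonneg ht]
      exact mul_le_of_le_one_right ht (hg x hx)
    have hsq : (t * g x) ^ 2 ≤ t ^ 2 := sq_le_sq.2 (habs.trans (le_abs_self t))
    linarith [(abs_le.1 (Real.abs_exp_sub_one_sub_id_le (habs.trans ht1))).2]
  calc ∑ x ∈ X, Real.exp (t * g x) ≤ ∑ x ∈ X, (1 + t * g x + t ^ 2) := sum_le_sum pointwise
    _ = #X * (1 + t ^ 2) := by
        rw [sum_add_distrib, sum_add_distrib, ← mul_sum, h0, sum_const, sum_const, nsmul_eq_mul,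
          nsmul_eq_mul]
        ring
    _ ≤ #X * Real.exp (t ^ 2) := by gcongr; linarith [Real.add_one_le_exp (t ^ 2)]

variable {η : ℝ}

lemma card_filter_lt_sum_le (hg : ∀ x ∈ X, |g x| ≤ 1) (h0 : ∑ x ∈ X, g x = 0) (k : ℕ)
    (hη : 0 ≤ η) (hη2 : η ≤ 2) :
    (#{z ∈ Fintype.piFinset fun _ : Fin k => X | k * η < ∑ i, g (z i)} : ℝ) ≤
      Real.exp (-(k * η ^ 2 / 4)) * (#X : ℝ) ^ k := by
  set P := Fintype.piFinset fun _ : Fin k => X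
  have moment : ∑ z ∈ P, Real.exp (η / 2 * ∑ i, g (z i)) ≤ (#X * Real.exp ((η / 2) ^ 2)) ^ k := by
    simp_rw [mul_sum, Real.exp_sum]
    rw [← prod_univ_sum (fun _ : Fin k => X) fun _ x => Real.exp (η / 2 * g x), prod_const,
      card_univ, Fintype.card_fin]
    exact pow_le_pow_left₀ (sum_nonneg fun _ _ => (Real.exp_pos _).le)
      (sum_exp_mul_le hg h0 (by linarith) (by linarith)) k
  have markov : #{z ∈ P | k * η < ∑ i, g (z i)} * Real.exp (η / 2 * (k * η)) ≤
      ∑ z ∈ P, Real.exp (η / 2 * ∑ i, g (z i)) := by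
    rw [← nsmul_eq_mul]
    refine (card_nsmul_le_sum _ (fun z => Real.exp (η / 2 * ∑ i, g (z i))) _ fun z hz => ?_).trans
      (sum_le_sum_of_subset_of_nonneg (filter_subset _ _) fun _ _ _ => (Real.exp_pos _).le)
    have := (mem_filter.1 hz).2
    gcongr
  refine le_of_mul_le_mul_right ((markov.trans moment).trans_eq ?_)
    (Real.exp_pos (η / 2 * (k * η)))
  rw [mul_pow, ← Real.exp_nat_mul, mul_comm, mul_right_comm, ← Real.exp_add]
  ring_nf

lemma card_filter_lt_abs_sum_le (hg : ∀ x ∈ X, |g x| ≤ 1) (h0 : ∑ x ∈ X, g x = 0) (k : ℕ)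
    (hη : 0 ≤ η) (hη2 : η ≤ 2) :
    (#{z ∈ Fintype.piFinset fun _ : Fin k => X | k * η < |∑ i, g (z i)|} : ℝ) ≤
      2 * Real.exp (-(k * η ^ 2 / 4)) * (#X : ℝ) ^ k := by
  classical
  have upper := card_filter_lt_sum_le hg h0 k hη hη2
  have lower := card_filter_lt_sum_le (g := -g) (by simpa using hg) (by simpa using h0) k hη hη2
  simp only [Pi.neg_apply, sum_neg_distrib] at lower
  set P := Fintype.piFinset fun _ : Fin k => X
  have hsub : {z ∈ P | k * η < |∑ i, g (z i)|} ⊆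
      {z ∈ P | k * η < ∑ i, g (z i)} ∪ {z ∈ P | k * η < -∑ i, g (z i)} := fun z hz => by
    simpa only [mem_union, mem_filter, ← and_or_left, lt_abs] using hz
  refine (Nat.cast_le.2 ((card_le_card hsub).trans (card_union_le _ _))).trans ?_
  push_cast
  linarith

end Hoeffding

section CrootSisask

lemma card_le_two_mul_card_filter {α : Type*} {P : Finset α} {f : α → ℝ} {c : ℝ} (hc : 0 ≤ c)
    (hf : ∀ z ∈ P, 0 ≤ f z) (h : ∑ z ∈ P, f z ≤ c * #P) : #P ≤ 2 * #{z ∈ P | f z ≤ 2 * c} := by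
  by_contra! hcon
  have hcard := card_filter_add_card_filter_not (s := P) (fun z => f z ≤ 2 * c)
  have hne : {z ∈ P | ¬f z ≤ 2 * c}.Nonempty := card_pos.1 (by omega)
  have hlt : ∑ _z ∈ P with ¬f _z ≤ 2 * c, 2 * c < ∑ z ∈ P with ¬f z ≤ 2 * c, f z :=
    sum_lt_sum_of_nonempty hne fun z hz => not_le.1 (mem_filter.1 hz).2
  have hle : ∑ z ∈ P with ¬f z ≤ 2 * c, f z ≤ ∑ z ∈ P, f z :=
    sum_le_sum_of_subset_of_nonneg (filter_subset _ _) fun z hz _ => hf z hz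
  have hhalf : (#P : ℝ) ≤ 2 * #{z ∈ P | ¬f z ≤ 2 * c} := by exact_mod_cast (by omega)
  rw [sum_const, nsmul_eq_mul] at hlt
  nlinarith

lemma exists_card_mul_card_le {α V : Type*} [AddGroup V] [DecidableEq V] {L Q : Finset V}
    {B : Finset α} {φ : α → V} (h : ∀ z ∈ L, ∀ b ∈ B, z - φ b ∈ Q) :
    ∃ w, #L * #B ≤ #Q * #{b ∈ B | w + φ b ∈ L} := by
  by_contra! hcon
  have hfiber (w : V) : #{x ∈ L ×ˢ B | x.1 - φ x.2 = w} ≤ #{b ∈ B | w + φ b ∈ L} := by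
    refine card_le_card_of_injOn Prod.snd (fun x hx => ?_) fun x hx y hy hxy => ?_
    · simp only [coe_filter, mem_product, Set.mem_ofPred_eq] at hx ⊢
      obtain ⟨⟨hz, hb⟩, rfl⟩ := hx
      exact ⟨hb, by rwa [sub_add_cancel]⟩
    · simp only [coe_filter, Set.mem_ofPred_eq] at hx hy
      exact Prod.ext (sub_left_injective (hx.2.trans (hxy ▸ hy.2.symm))) hxy
  have hcard : #L * #B ≤ ∑ w ∈ Q, #{b ∈ B | w + φ b ∈ L} := by
    rw [← card_product, card_eq_sum_card_fiberwise (f := fun x => x.1 - φ x.2) fun x hx =>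
      h _ (mem_product.1 hx).1 _ (mem_product.1 hx).2]
    exact sum_le_sum fun w _ => hfiber w
  have hQ : Q.Nonempty := by
    obtain ⟨z, hz⟩ := card_pos.1 (Nat.pos_of_mul_pos_right ((Nat.zero_le _).trans_lt (hcon 0)))
    obtain ⟨b, hb⟩ := card_pos.1 (Nat.pos_of_mul_pos_left ((Nat.zero_le _).trans_lt (hcon 0)))
    exact ⟨_, h z hz b hb⟩
  have hlt := sum_lt_sum_of_nonempty hQ fun w _ => hcon w
  rw [← mul_sum, sum_const, smul_eq_mul] at hlt
  exact hlt.not_ge (Nat.mul_le_mul_left _ hcard)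

variable {G : Type*} [AddCommGroup G] [DecidableEq G] {k : ℕ}

/-- The relative density of `S` in the translate `x + X`. -/
noncomputable def localDensity (S X : Finset G) (x : G) : ℝ := #{y ∈ X | x + y ∈ S} / #X

/-- The proportion of the entries of the sample `z` which translate `x` into `S`. -/
noncomputable def sampleDensity (S : Finset G) (z : Fin k → G) (x : G) : ℝ :=
  #{i | x + z i ∈ S} / k

lemma localDensity_nonneg (S X : Finset G) (x : G) : 0 ≤ localDensity S X x := by
  unfold localDensity; positivity

lemma localDensity_le_one (S X : Finset G) (x : G) : localDensity S X x ≤ 1 :=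
  div_le_one_of_le₀ (mod_cast card_filter_le _ _) (Nat.cast_nonneg _)

lemma sampleDensity_add (S : Finset G) (z : Fin k → G) (t x : G) :
    sampleDensity S (z + Function.const _ t) x = sampleDensity S z (x + t) := by
  simp only [sampleDensity, Pi.add_apply, Function.const_apply]
  simp only [add_comm (z _) t, ← add_assoc]

variable {S X F B : Finset G} {η τ : ℝ}

lemma card_filter_lt_abs_sampleDensity_sub_le (hk : 0 < k) (hX : X.Nonempty) (hη : 0 ≤ η)
    (hη2 : η ≤ 2) (x : G) :
    (#{z ∈ Fintype.piFinset fun _ : Fin k => X |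
        η < |sampleDensity S z x - localDensity S X x|} : ℝ) ≤
      2 * Real.exp (-(k * η ^ 2 / 4)) * (#X : ℝ) ^ k := by
  have hX0 : (0 : ℝ) < #X := by exact_mod_cast hX.card_pos
  have hk0 : (0 : ℝ) < k := by exact_mod_cast hk
  set g : G → ℝ := fun y => (if x + y ∈ S then 1 else 0) - localDensity S X x
  have abs_g_le : ∀ y ∈ X, |g y| ≤ 1 := by
    intro y _
    have := localDensity_nonneg S X x
    have := localDensity_le_one S X x
    rw [abs_le]
    simp only [g]
    split_ifs <;> constructor <;> linarith
  have sum_g : ∑ y ∈ X, g y = 0 := by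
    rw [sum_sub_distrib, sum_boole, sum_const, nsmul_eq_mul, localDensity,
      mul_div_cancel₀ _ hX0.ne', sub_self]
  have sum_g_sample (z : Fin k → G) :
      ∑ i, g (z i) = k * (sampleDensity S z x - localDensity S X x) := by
    rw [sum_sub_distrib, sum_boole, sum_const, nsmul_eq_mul, card_univ, Fintype.card_fin,
      sampleDensity, mul_sub, mul_div_cancel₀ _ hk0.ne']
  have h := card_filter_lt_abs_sum_le abs_g_le sum_g k hη hη2
  simpa only [sum_g_sample, abs_mul, Nat.abs_cast, mul_lt_mul_iff_right₀ hk0] using h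

lemma sampleDensity_eq_localDensity_of_notMem {z : Fin k → G} (hz : ∀ i, z i ∈ X) {x : G}
    (hx : x ∉ S - X) : sampleDensity S z x = localDensity S X x := by
  have h (y : G) (hy : y ∈ X) : x + y ∉ S := fun hS =>
    hx (add_sub_cancel_right x y ▸ sub_mem_sub hS hy)
  rw [sampleDensity, localDensity, filter_false_of_mem fun i _ => h _ (hz i),
    filter_false_of_mem h]
  simp

variable [Fintype G]

lemma sum_card_filter_lt_abs_sampleDensity_sub_le (hk : 0 < k) (hX : X.Nonempty) (hη : 0 ≤ η)
    (hη2 : η ≤ 2) :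
    ∑ z ∈ Fintype.piFinset fun _ : Fin k => X,
        (#{x | η < |sampleDensity S z x - localDensity S X x|} : ℝ) ≤
      #(S - X) * (2 * Real.exp (-(k * η ^ 2 / 4)) * (#X : ℝ) ^ k) := by
  set P := Fintype.piFinset fun _ : Fin k => X
  have hsupp (z) (hz : z ∈ P) : #{x | η < |sampleDensity S z x - localDensity S X x|} =
      #{x ∈ S - X | η < |sampleDensity S z x - localDensity S X x|} := by
    congr 1
    ext x
    simp only [mem_filter, mem_univ, true_and, iff_and_self]
    contrapose!
    intro hx
    rwa [sampleDensity_eq_localDensity_of_notMem (Fintype.mem_piFinset.1 hz) hx, sub_self,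
      abs_zero]
  calc ∑ z ∈ P, (#{x | η < |sampleDensity S z x - localDensity S X x|} : ℝ)
      = ∑ x ∈ S - X, (#{z ∈ P | η < |sampleDensity S z x - localDensity S X x|} : ℝ) := by
        rw [sum_congr rfl fun z hz => congrArg Nat.cast (hsupp z hz)]
        simp only [card_filter, Nat.cast_sum]
        exact sum_comm
    _ ≤ #(S - X) * (2 * Real.exp (-(k * η ^ 2 / 4)) * (#X : ℝ) ^ k) := by
        rw [← nsmul_eq_mul]
        exact sum_le_card_nsmul _ _ _ fun x _ =>
          card_filter_lt_abs_sampleDensity_sub_le hk hX hη hη2 x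

lemma card_filter_lt_abs_localDensity_sub_le {w : Fin k → G} {c : ℝ} {t t' : G}
    (h : ∀ u ∈ ({t, t'} : Finset G),
      (#{x | η < |sampleDensity S (w + Function.const _ u) x - localDensity S X x|} : ℝ) ≤ c) :
    (#{x | 2 * η < |localDensity S X (x + t - t') - localDensity S X x|} : ℝ) ≤ 2 * c := by
  simp only [mem_insert, mem_singleton, forall_eq_or_imp, forall_eq, sampleDensity_add] at h
  have hsub : ({x | 2 * η < |localDensity S X (x + t - t') - localDensity S X x|} : Finset G) ⊆
      ({x | η < |sampleDensity S w (x + t) - localDensity S X x|} : Finset G) ∪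
      image (· - t + t') {x | η < |sampleDensity S w (x + t') - localDensity S X x|} := by
    intro x hx
    by_contra hcon
    simp only [mem_union, mem_filter_univ, mem_image, not_or, not_exists, not_and', not_lt] at hcon
    have hfar := hcon.2 (x + t - t') (by abel)
    rw [sub_add_cancel] at hfar
    rw [mem_filter_univ] at hx
    linarith [abs_sub_le (localDensity S X (x + t - t')) (sampleDensity S w (x + t))
      (localDensity S X x),
      abs_sub_comm (localDensity S X (x + t - t')) (sampleDensity S w (x + t))]
  have hcard := (card_le_card hsub).trans ((card_union_le _ _).trans
    (Nat.add_le_add_left card_image_le _))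
  have hcard' := (Nat.cast_le (α := ℝ)).2 hcard
  push_cast at hcard'
  linarith

-- Random samples of length `k` from `X` determine the local density up to `η`; by pigeonhole many
-- translates of one tuple `w` are such good samples.
lemma croot_sisask (hk : 0 < k) (hX : X.Nonempty) (hXF : X ⊆ F) (hτ : 0 ≤ τ)
    (hτX : τ * #F ≤ #X) (hη : 0 ≤ η) (hη2 : η ≤ 2) (hFB : #(F - B) ≤ 2 * #F) :
    ∃ T ⊆ B, #B * (τ / 2) ^ k / 2 ≤ #T ∧ ∀ t ∈ T, ∀ t' ∈ T,
      (#{x | 2 * η < |localDensity S X (x + t - t') - localDensity S X x|} : ℝ) ≤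
        8 * #(S - X) * Real.exp (-(k * η ^ 2 / 4)) := by
  set c : ℝ := 2 * #(S - X) * Real.exp (-(k * η ^ 2 / 4))
  set P := Fintype.piFinset fun _ : Fin k => X
  have card_P : #P = #X ^ k := Fintype.card_piFinset_const X k
  set L := {z ∈ P | (#{x | η < |sampleDensity S z x - localDensity S X x|} : ℝ) ≤ 2 * c}
  have card_L : #X ^ k ≤ 2 * #L := by
    rw [← card_P]
    refine card_le_two_mul_card_filter (by positivity) (fun _ _ => Nat.cast_nonneg _)
      ((sum_card_filter_lt_abs_sampleDensity_sub_le hk hX hη hη2).trans_eq ?_)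
    rw [card_P]
    push_cast
    ring
  obtain ⟨w, hw⟩ := exists_card_mul_card_le (L := L) (B := B) (φ := Function.const (Fin k))
    (Q := Fintype.piFinset fun _ => F - B) fun z hz t ht => Fintype.mem_piFinset.2 fun i =>
      sub_mem_sub (hXF (Fintype.mem_piFinset.1 (mem_filter.1 hz).1 i)) ht
  refine ⟨{t ∈ B | w + Function.const _ t ∈ L}, filter_subset _ _, ?_, fun t ht t' ht' => ?_⟩
  · have hF0 : (0 : ℝ) < #F := by exact_mod_cast (hX.mono hXF).card_pos
    have hcount : #X ^ k * #B ≤ 2 * ((2 * #F) ^ k * #{t ∈ B | w + Function.const _ t ∈ L}) := by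
      rw [Fintype.card_piFinset_const] at hw
      calc #X ^ k * #B ≤ 2 * (#L * #B) := by rw [← mul_assoc]; gcongr
        _ ≤ 2 * ((2 * #F) ^ k * #{t ∈ B | w + Function.const _ t ∈ L}) := by
            exact Nat.mul_le_mul_left 2 (hw.trans (by gcongr))
    have hcount' := (Nat.cast_le (α := ℝ)).2 hcount
    push_cast at hcount'
    refine le_of_mul_le_mul_left (?_ : 2 * (2 * #F : ℝ) ^ k * _ ≤ 2 * (2 * #F : ℝ) ^ k * _)
      (by positivity)
    calc 2 * (2 * #F : ℝ) ^ k * (#B * (τ / 2) ^ k / 2) = (2 * #F * (τ / 2)) ^ k * #B := by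
          rw [mul_pow (2 * #F : ℝ)]; ring
      _ = (τ * #F) ^ k * #B := by ring_nf
      _ ≤ #X ^ k * #B := by gcongr
      _ ≤ _ := by linarith
  · refine (card_filter_lt_abs_localDensity_sub_le (w := w) (η := η) (c := 2 * c)
      fun u hu => ?_).trans_eq (by ring)
    have huT : u ∈ {t ∈ B | w + Function.const _ t ∈ L} := by
      rcases mem_insert.1 hu with rfl | hu
      exacts [ht, mem_singleton.1 hu ▸ ht']
    exact (mem_filter.1 (mem_filter.1 huT).2).2

end CrootSisask

/-! ### The large spectrum of a dense subset of a Bohr set -/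

section Riesz

variable {G : Type*} [AddCommGroup G] {l : List (Circle × AddChar G ℂ)}

/-- The real part of a rotated character, damped so as to lie in `[7/8, 9/8]`. -/
noncomputable def rieszFactor (ω : Circle) (γ : AddChar G ℂ) (x : G) : ℝ := 1 + (ω * γ x).re / 8

/-- The Riesz product of a list of rotated characters. -/
noncomputable def rieszProduct (l : List (Circle × AddChar G ℂ)) (x : G) : ℝ :=
  (l.map fun p => rieszFactor p.1 p.2 x).prod

lemma rieszProduct_cons (ω : Circle) (γ : AddChar G ℂ) (x : G) :
    rieszProduct ((ω, γ) :: l) x = rieszFactor ω γ x * rieszProduct l x := by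
  simp [rieszProduct]

variable [Finite G]

lemma abs_re_circle_mul_le_one (ω : Circle) (γ : AddChar G ℂ) (x : G) : |(ω * γ x).re| ≤ 1 := by
  simpa only [norm_mul, Circle.norm_coe, AddChar.norm_apply, one_mul] using
    Complex.abs_re_le_norm (ω * γ x)

lemma rieszFactor_mem_Icc (ω : Circle) (γ : AddChar G ℂ) (x : G) :
    rieszFactor ω γ x ∈ Set.Icc (7 / 8) (9 / 8) := by
  obtain ⟨hl, hu⟩ := abs_le.1 (abs_re_circle_mul_le_one ω γ x)
  constructor <;> rw [rieszFactor] <;> linarith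

lemma rieszFactor_pos (ω : Circle) (γ : AddChar G ℂ) (x : G) : 0 < rieszFactor ω γ x :=
  (by norm_num : (0 : ℝ) < 7 / 8).trans_le (rieszFactor_mem_Icc ω γ x).1

lemma rieszProduct_pos (l : List (Circle × AddChar G ℂ)) (x : G) : 0 < rieszProduct l x :=
  List.prod_pos fun _ h => by
    obtain ⟨p, -, rfl⟩ := List.mem_map.1 h
    exact rieszFactor_pos _ _ _

lemma rieszProduct_mem_Icc (l : List (Circle × AddChar G ℂ)) (x : G) :
    rieszProduct l x ∈ Set.Icc ((7 / 8) ^ l.length) ((9 / 8) ^ l.length) := by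
  induction l with
  | nil => simp [rieszProduct]
  | cons p l ih =>
    have hp := rieszFactor_mem_Icc p.1 p.2 x
    rw [rieszProduct_cons, List.length_cons, pow_succ', pow_succ']
    exact ⟨mul_le_mul hp.1 ih.1 (by positivity) (rieszFactor_pos _ _ _).le,
      mul_le_mul hp.2 ih.2 (rieszProduct_pos l x).le (by norm_num)⟩

lemma rieszFactor_add_le (ω : Circle) {γ : AddChar G ℂ} {ζ : ℝ} {b : G} (hb : ‖γ b - 1‖ ≤ ζ)
    (x : G) : rieszFactor ω γ (x + b) ≤ Real.exp ζ * rieszFactor ω γ x := by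
  have hre : (ω * γ (x + b)).re - (ω * γ x).re ≤ ζ := by
    calc (ω * γ (x + b)).re - (ω * γ x).re = (ω * γ x * (γ b - 1)).re := by
          rw [← Complex.sub_re, AddChar.map_add_eq_mul]; ring_nf
      _ ≤ ‖ω * γ x * (γ b - 1)‖ := Complex.re_le_norm _
      _ ≤ ζ := by
        rwa [norm_mul, norm_mul, Circle.norm_coe, AddChar.norm_apply, one_mul, one_mul]
  have hfac := (rieszFactor_mem_Icc ω γ x).1
  have hexp := Real.add_one_le_exp ζ
  have hζ := (norm_nonneg _).trans hb
  calc rieszFactor ω γ (x + b) ≤ rieszFactor ω γ x + ζ / 8 := by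
        simp only [rieszFactor]; linarith
    _ ≤ (ζ + 1) * rieszFactor ω γ x := by nlinarith
    _ ≤ Real.exp ζ * rieszFactor ω γ x := by gcongr

lemma rieszProduct_add_le {ζ : ℝ} {b : G} (hb : ∀ p ∈ l, ‖p.2 b - 1‖ ≤ ζ) (x : G) :
    rieszProduct l (x + b) ≤ Real.exp (l.length * ζ) * rieszProduct l x := by
  induction l with
  | nil => simp [rieszProduct]
  | cons p l ih =>
    obtain ⟨hp, hl⟩ := List.forall_mem_cons.1 hb
    rw [rieszProduct_cons, rieszProduct_cons, List.length_cons, Nat.cast_succ, add_one_mul,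
      Real.exp_add, mul_comm (Real.exp _), mul_mul_mul_comm]
    exact mul_le_mul (rieszFactor_add_le p.1 hp x) (ih hl) (rieszProduct_pos l _).le
      (mul_pos (Real.exp_pos ζ) (rieszFactor_pos _ _ _)).le

end Riesz

section Entropy

variable {G : Type*} {B T : Finset G} {u c : G → ℝ}

/-- The logarithm of the mass of `u` on `B` less the mean of `log u` on `T`. It drops by a constant
whenever `u` is multiplied by a Riesz factor that correlates with `T` but not with `u`. -/
noncomputable def logMassGap (B T : Finset G) (u : G → ℝ) : ℝ :=
  Real.log (∑ b ∈ B, u b) - (∑ t ∈ T, Real.log (u t)) / #T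

lemma log_card_le_logMassGap (hu : ∀ x, 0 < u x) (hTB : T ⊆ B) (hT : T.Nonempty) :
    Real.log #T ≤ logMassGap B T u := by
  have hT0 : (0 : ℝ) < #T := by exact_mod_cast hT.card_pos
  have jensen : (∑ t ∈ T, Real.log (u t)) / #T ≤ Real.log ((∑ t ∈ T, u t) / #T) := by
    have h := strictConcaveOn_log_Ioi.concaveOn.le_map_sum (t := T) (w := fun _ => (#T : ℝ)⁻¹)
      (p := u) (fun _ _ => by positivity) (by simp [hT0.ne']) fun x _ => hu x
    rw [← inv_mul_eq_div, ← inv_mul_eq_div]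
    simpa only [smul_eq_mul, ← mul_sum] using h
  have mono : Real.log (∑ t ∈ T, u t) ≤ Real.log (∑ b ∈ B, u b) :=
    Real.log_le_log (sum_pos (fun x _ => hu x) hT)
      (sum_le_sum_of_subset_of_nonneg hTB fun x _ _ => (hu x).le)
  rw [Real.log_div (sum_pos (fun x _ => hu x) hT).ne' hT0.ne'] at jensen
  rw [logMassGap]
  linarith

lemma logMassGap_mul_le (hu : ∀ x, 0 < u x) (hTB : T ⊆ B) (hT : T.Nonempty) (hc : ∀ x, |c x| ≤ 1)
    (hcT : #T / 2 ≤ ∑ t ∈ T, c t) (hcB : ∑ b ∈ B, c b * u b ≤ (∑ b ∈ B, u b) / 4) :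
    logMassGap B T (fun x => (1 + c x / 8) * u x) ≤ logMassGap B T u - 1 / 80 := by
  have hT0 : (0 : ℝ) < #T := by exact_mod_cast hT.card_pos
  have factor_pos (x : G) : 0 < 1 + c x / 8 := by linarith [(abs_le.1 (hc x)).1]
  have mass_pos : 0 < ∑ b ∈ B, u b := sum_pos (fun x _ => hu x) (hT.mono hTB)
  have mass_le : ∑ b ∈ B, (1 + c b / 8) * u b ≤ 33 / 32 * ∑ b ∈ B, u b := by
    calc ∑ b ∈ B, (1 + c b / 8) * u b = ∑ b ∈ B, u b + (∑ b ∈ B, c b * u b) / 8 := by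
          rw [sum_div, ← sum_add_distrib]; exact sum_congr rfl fun _ _ => by ring
      _ ≤ 33 / 32 * ∑ b ∈ B, u b := by linarith
  have log_mass_le : Real.log (∑ b ∈ B, (1 + c b / 8) * u b) ≤
      Real.log (∑ b ∈ B, u b) + 1 / 32 := by
    refine (Real.log_le_log (sum_pos (fun x _ => mul_pos (factor_pos x) (hu x)) (hT.mono hTB))
      mass_le).trans ?_
    rw [Real.log_mul (by norm_num) mass_pos.ne']
    linarith [Real.log_le_sub_one_of_pos (x := 33 / 32) (by norm_num)]
  have le_log (x : G) : c x / 8 - 1 / 56 ≤ Real.log (1 + c x / 8) := by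
    refine le_trans ?_ (Real.one_sub_inv_le_log_of_pos (factor_pos x))
    have hsplit : 1 - (1 + c x / 8)⁻¹ = c x / 8 / (1 + c x / 8) := by
      rw [eq_div_iff (factor_pos x).ne', sub_mul, inv_mul_cancel₀ (factor_pos x).ne']; ring
    rw [hsplit, le_div_iff₀ (factor_pos x)]
    nlinarith [abs_le.1 (hc x)]
  have mean_log_ge : (∑ t ∈ T, Real.log (u t)) / #T + (1 / 16 - 1 / 56) ≤
      (∑ t ∈ T, Real.log ((1 + c t / 8) * u t)) / #T := by
    rw [le_div_iff₀ hT0, add_mul, div_mul_cancel₀ _ hT0.ne']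
    calc ∑ t ∈ T, Real.log (u t) + (1 / 16 - 1 / 56) * #T
        ≤ ∑ t ∈ T, Real.log (u t) + ∑ t ∈ T, (c t / 8 - 1 / 56) := by
          rw [sum_sub_distrib, ← sum_div, sum_const, nsmul_eq_mul]; linarith
      _ ≤ ∑ t ∈ T, Real.log ((1 + c t / 8) * u t) := by
          rw [← sum_add_distrib]
          refine sum_le_sum fun t _ => ?_
          rw [Real.log_mul (factor_pos t).ne' (hu t).ne']
          linarith [le_log t]
  simp only [logMassGap]
  linarith

variable [AddCommGroup G] [Finite G]

lemma exists_logMassGap_rieszProduct_cons_le (l : List (Circle × AddChar G ℂ)) (hTB : T ⊆ B)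
    (hT : T.Nonempty) {γ : AddChar G ℂ} (hγT : (#T : ℝ) / 2 ≤ ‖∑ t ∈ T, γ t‖)
    (hγB : ‖∑ b ∈ B, (rieszProduct l b : ℂ) * γ b‖ ≤ (∑ b ∈ B, rieszProduct l b) / 4) :
    ∃ ω : Circle, logMassGap B T (rieszProduct ((ω, γ) :: l)) ≤
      logMassGap B T (rieszProduct l) - 1 / 80 := by
  obtain ⟨ω, hω, hωT⟩ := RCLike.exists_norm_eq_mul_self (∑ t ∈ T, γ t)
  refine ⟨⟨ω, mem_sphere_zero_iff_norm.2 hω⟩, ?_⟩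
  have hcons : rieszProduct ((⟨ω, mem_sphere_zero_iff_norm.2 hω⟩, γ) :: l) =
      fun x => (1 + (ω * γ x).re / 8) * rieszProduct l x := funext (rieszProduct_cons _ _)
  rw [hcons]
  refine logMassGap_mul_le (rieszProduct_pos l) hTB hT
    (abs_re_circle_mul_le_one ⟨ω, mem_sphere_zero_iff_norm.2 hω⟩ γ) ?_ ?_
  · rw [← Complex.re_sum, ← mul_sum, ← hωT]
    exact hγT
  · calc ∑ b ∈ B, (ω * γ b).re * rieszProduct l b
        = (ω * ∑ b ∈ B, (rieszProduct l b : ℂ) * γ b).re := by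
          rw [mul_sum, Complex.re_sum]
          refine sum_congr rfl fun b _ => ?_
          rw [mul_left_comm, Complex.re_ofReal_mul, mul_comm]
      _ ≤ ‖ω * ∑ b ∈ B, (rieszProduct l b : ℂ) * γ b‖ := Complex.re_le_norm _
      _ ≤ (∑ b ∈ B, rieszProduct l b) / 4 := by rwa [norm_mul, hω, one_mul]

-- Prepend Riesz factors for as long as some large character of `T` does not correlate with the
-- Riesz product on `B`: each of them lowers `logMassGap` by `1 / 80`.
lemma exists_rieszProduct_correlates (hTB : T ⊆ B) (hT : T.Nonempty) :
    ∃ l : List (Circle × AddChar G ℂ), (l.length : ℝ) / 80 ≤ Real.log #B - Real.log #T ∧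
      ∀ γ : AddChar G ℂ, (#T : ℝ) / 2 ≤ ‖∑ t ∈ T, γ t‖ →
        (∑ b ∈ B, rieszProduct l b) / 4 < ‖∑ b ∈ B, (rieszProduct l b : ℂ) * γ b‖ := by
  by_contra! hcon
  have gap_le (n : ℕ) : ∃ l : List (Circle × AddChar G ℂ), l.length = n ∧
      logMassGap B T (rieszProduct l) ≤ Real.log #B - n / 80 := by
    induction n with
    | zero => exact ⟨[], rfl, by simp [logMassGap, rieszProduct]⟩
    | succ n ih =>
      obtain ⟨l, rfl, hl⟩ := ih
      obtain ⟨γ, hγT, hγB⟩ := hcon l (by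
        linarith [log_card_le_logMassGap (rieszProduct_pos l) hTB hT])
      obtain ⟨ω, hω⟩ := exists_logMassGap_rieszProduct_cons_le l hTB hT hγT hγB
      refine ⟨(ω, γ) :: l, rfl, hω.trans ?_⟩
      push_cast
      linarith
  obtain ⟨n, hn⟩ := exists_nat_gt (80 * (Real.log #B - Real.log #T))
  obtain ⟨l, -, hl⟩ := gap_le n
  linarith [log_card_le_logMassGap (rieszProduct_pos l) hTB hT]

end Entropy

section Chang

variable {G : Type*} [AddCommGroup G] [Fintype G]

/-- The Fourier coefficient of `f` at `γ`, with respect to the counting measure and without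
complex conjugation. -/
noncomputable def fourierCoeff (f : G → ℝ) (γ : AddChar G ℂ) : ℂ := ∑ x, (f x : ℂ) * γ x

lemma fourierCoeff_sub (f g : G → ℝ) (γ : AddChar G ℂ) :
    fourierCoeff (f - g) γ = fourierCoeff f γ - fourierCoeff g γ := by
  simp [fourierCoeff, sub_mul]

lemma fourierCoeff_add_right (f : G → ℝ) (γ : AddChar G ℂ) (b : G) :
    fourierCoeff (fun x => f (x + b)) γ = γ (-b) * fourierCoeff f γ := by
  rw [fourierCoeff, fourierCoeff, mul_sum,
    ← Equiv.sum_comp (Equiv.addRight b) fun y => γ (-b) * ((f y : ℂ) * γ y)]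
  refine sum_congr rfl fun x _ => ?_
  rw [Equiv.coe_addRight, mul_left_comm, ← AddChar.map_add_eq_mul, neg_add_cancel_comm_assoc]

lemma fourierCoeff_indicator (B : Finset G) (u : G → ℝ) (γ : AddChar G ℂ) :
    fourierCoeff ((B : Set G).indicator u) γ = ∑ x ∈ B, (u x : ℂ) * γ x := by
  rw [fourierCoeff, ← sum_subset (subset_univ B) fun x _ hx => by simp [hx]]
  exact sum_congr rfl fun x hx => by simp [hx]

lemma norm_sub_one_mul_norm_fourierCoeff_le (f : G → ℝ) (γ : AddChar G ℂ) (b : G) :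
    ‖γ b - 1‖ * ‖fourierCoeff f γ‖ ≤ ∑ x, |f (x - b) - f x| := by
  have h : (γ b - 1) * fourierCoeff f γ = fourierCoeff ((fun x => f (x + -b)) - f) γ := by
    rw [fourierCoeff_sub, fourierCoeff_add_right, neg_neg, sub_one_mul]
  rw [← norm_mul, h]
  refine (norm_sum_le _ _).trans_eq (sum_congr rfl fun x _ => ?_)
  rw [norm_mul, AddChar.norm_apply, mul_one, Complex.norm_real, Real.norm_eq_abs, Pi.sub_apply,
    sub_eq_add_neg x b]

variable [DecidableEq G] {B T : Finset G} {u : G → ℝ} {b : G} {ε η M : ℝ}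

lemma sum_abs_indicator_sub_le (hu : ∀ x, 0 ≤ u x) (huM : ∀ x, u x ≤ M)
    (hadd : ∀ x, u (x + b) ≤ (1 + η) * u x) (hsub : ∀ x, u (x - b) ≤ (1 + η) * u x)
    (hη : 0 ≤ η) (hb : IsAlmostPeriod ε B b) :
    ∑ x, |(B : Set G).indicator u (x - b) - (B : Set G).indicator u x| ≤
      η * ∑ x ∈ B, u x + 2 * M * (ε * #B) := by
  set f := (B : Set G).indicator u
  have hM : 0 ≤ M := (hu 0).trans (huM 0)
  have pointwise (x : G) : |f (x - b) - f x| ≤ η * f x +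
      M * (if x ∈ B ∧ x - b ∉ B then 1 else 0) + M * (if x - b ∈ B ∧ x ∉ B then 1 else 0) := by
    by_cases hx : x ∈ B <;> by_cases hxb : x - b ∈ B
    · have hsub := hsub x
      have hadd := hadd (x - b)
      rw [sub_add_cancel] at hadd
      have : |u (x - b) - u x| ≤ η * u x := by
        rw [abs_le]
        constructor <;> nlinarith [mul_nonneg hη (hu x), mul_nonneg hη (hu (x - b))]
      simpa [f, hx, hxb] using this
    · simpa [f, hx, hxb, abs_of_nonneg (hu x)] using
        (huM x).trans (le_add_of_nonneg_left (mul_nonneg hη (hu x)))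
    · simpa [f, hx, hxb, abs_of_nonneg (hu (x - b))] using huM (x - b)
    · simp [f, hx, hxb]
  have sum_f : ∑ x, f x = ∑ x ∈ B, u x := sum_indicator_subset u (subset_univ B)
  have card_sub : #{x | x ∈ B ∧ x - b ∉ B} = #{x ∈ B | x + b ∉ B} := by
    rw [← card_filter_sub_notMem_eq, filter_and, filter_univ_mem, inter_filter, inter_univ]
  have card_add : #{x | x - b ∈ B ∧ x ∉ B} = #{x ∈ B | x + b ∉ B} :=
    card_bij' (fun x _ => x - b) (fun x _ => x + b) (by simp) (by simp) (by simp) (by simp)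
  calc ∑ x, |f (x - b) - f x| ≤ _ := sum_le_sum fun x _ => pointwise x
    _ = η * ∑ x ∈ B, u x + 2 * M * #{x ∈ B | x + b ∉ B} := by
        rw [sum_add_distrib, sum_add_distrib, ← mul_sum, ← mul_sum, ← mul_sum, sum_f, sum_boole,
          sum_boole, card_sub, card_add]
        ring
    _ ≤ η * ∑ x ∈ B, u x + 2 * M * (ε * #B) := by gcongr; exact hb

-- The Riesz product on `B` is nearly invariant under the almost periods in the Bohr set of its
-- frequencies, and every large character of `T` correlates with it.
lemma chang (hTB : T ⊆ B) (hT : T.Nonempty) :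
    ∃ (n : ℕ) (Δ : Finset (AddChar G ℂ)), #Δ ≤ n ∧ (n : ℝ) / 80 ≤ Real.log #B - Real.log #T ∧
      ∀ ζ ε : ℝ, 0 ≤ ζ → 0 ≤ ε → ∀ b ∈ bohrSet Δ ζ, IsAlmostPeriod ε B b →
        ∀ γ : AddChar G ℂ, (#T : ℝ) / 2 ≤ ‖∑ t ∈ T, γ t‖ →
          ‖γ b - 1‖ ≤ 4 * (Real.exp (n * ζ) - 1 + 2 * ε * 2 ^ n) := by
  classical
  obtain ⟨l, hl, hcorr⟩ := exists_rieszProduct_correlates (G := G) hTB hT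
  refine ⟨l.length, (l.map Prod.snd).toFinset, (List.toFinset_card_le _).trans (by simp), hl,
    fun ζ ε hζ hε b hb hbε γ hγ => ?_⟩
  set n := l.length
  set u := rieszProduct l
  set Z := ∑ x ∈ B, u x
  have hb_freq (c : G) (hc : c ∈ bohrSet (l.map Prod.snd).toFinset ζ) :
      ∀ p ∈ l, ‖p.2 c - 1‖ ≤ ζ := fun p hp =>
    mem_bohrSet.1 hc _ (List.mem_toFinset.2 (List.mem_map_of_mem hp))
  have hZ : 0 < Z := sum_pos (fun x _ => rieszProduct_pos l x) (hT.mono hTB)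
  have le_mass : (9 / 8) ^ n * (#B : ℝ) ≤ 2 ^ n * Z := by
    calc (9 / 8 : ℝ) ^ n * #B ≤ (2 * (7 / 8)) ^ n * #B := by gcongr; norm_num
      _ = 2 ^ n * (#B • (7 / 8) ^ n) := by rw [mul_pow, nsmul_eq_mul]; ring
      _ ≤ 2 ^ n * Z := by
          gcongr; exact card_nsmul_le_sum _ _ _ fun x _ => (rieszProduct_mem_Icc l x).1
  have hη : 0 ≤ Real.exp (n * ζ) - 1 := sub_nonneg.2 (Real.one_le_exp (by positivity))
  have hvar := sum_abs_indicator_sub_le (fun x => (rieszProduct_pos l x).le)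
    (fun x => (rieszProduct_mem_Icc l x).2) (η := Real.exp (n * ζ) - 1) (b := b)
    (by simpa using rieszProduct_add_le (hb_freq b hb))
    (by simpa [sub_eq_add_neg] using rieszProduct_add_le (hb_freq _ (neg_mem_bohrSet.2 hb)))
    hη hbε
  have hlow := norm_sub_one_mul_norm_fourierCoeff_le ((B : Set G).indicator u) γ b
  rw [fourierCoeff_indicator] at hlow
  refine le_of_mul_le_mul_right ?_ (div_pos hZ four_pos)
  calc ‖γ b - 1‖ * (Z / 4) ≤ ‖γ b - 1‖ * ‖∑ x ∈ B, (u x : ℂ) * γ x‖ := by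
        gcongr; exact (hcorr γ hγ).le
    _ ≤ (Real.exp (n * ζ) - 1) * Z + 2 * ε * ((9 / 8) ^ n * #B) := by
        refine (hlow.trans hvar).trans_eq ?_; ring
    _ ≤ (Real.exp (n * ζ) - 1) * Z + 2 * ε * (2 ^ n * Z) := by gcongr
    _ = 4 * (Real.exp (n * ζ) - 1 + 2 * ε * 2 ^ n) * (Z / 4) := by ring

end Chang

/-! ### Fourier analysis of iterated averages -/

section Fourier

variable {G : Type*} [AddCommGroup G] [Fintype G]

open scoped ComplexConjugate

lemma sum_fourierCoeff_mul_conj (f g : G → ℝ) :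
    ∑ χ : AddChar G ℂ, fourierCoeff f χ * conj (fourierCoeff g χ) =
      Fintype.card G * ∑ x, (f x : ℂ) * g x := by
  classical
  have expand (χ : AddChar G ℂ) : fourierCoeff f χ * conj (fourierCoeff g χ) =
      ∑ x, ∑ y, (f x : ℂ) * g y * χ (x - y) := by
    rw [fourierCoeff, fourierCoeff, map_sum, sum_mul_sum]
    refine sum_congr rfl fun x _ => sum_congr rfl fun y _ => ?_
    rw [map_mul, Complex.conj_ofReal, ← AddChar.map_neg_eq_conj, sub_eq_add_neg,
      AddChar.map_add_eq_mul]
    ring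
  calc ∑ χ : AddChar G ℂ, fourierCoeff f χ * conj (fourierCoeff g χ)
      = ∑ x, ∑ y, (f x : ℂ) * g y * ∑ χ : AddChar G ℂ, χ (x - y) := by
        simp_rw [expand, mul_sum]
        rw [sum_comm]
        exact sum_congr rfl fun x _ => sum_comm
    _ = Fintype.card G * ∑ x, (f x : ℂ) * g x := by
        simp only [AddChar.sum_apply_eq_ite, sub_eq_zero, mul_ite, mul_zero, sum_ite_eq, mem_univ,
          if_true, mul_sum]
        exact sum_congr rfl fun x _ => mul_comm _ _

lemma sum_norm_fourierCoeff_sq (f : G → ℝ) :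
    ∑ χ : AddChar G ℂ, ‖fourierCoeff f χ‖ ^ 2 = Fintype.card G * ∑ x, f x ^ 2 := by
  have h := sum_fourierCoeff_mul_conj f f
  simp only [Complex.mul_conj'] at h
  simp only [sq (f _)]
  exact_mod_cast h

lemma sum_norm_fourierCoeff_mul_le (f g : G → ℝ) :
    ∑ χ : AddChar G ℂ, ‖fourierCoeff f χ‖ * ‖fourierCoeff g χ‖ ≤
      Fintype.card G * (√(∑ x, f x ^ 2) * √(∑ x, g x ^ 2)) := by
  refine (Real.sum_mul_le_sqrt_mul_sqrt _ _ _).trans_eq ?_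
  rw [sum_norm_fourierCoeff_sq, sum_norm_fourierCoeff_sq, Real.sqrt_mul (Nat.cast_nonneg _),
    Real.sqrt_mul (Nat.cast_nonneg _), mul_mul_mul_comm, Real.mul_self_sqrt (Nat.cast_nonneg _)]

lemma abs_sum_mul_le_of_norm_fourierCoeff_le {d f g : G → ℝ} {σ : ℝ}
    (h : ∀ χ : AddChar G ℂ, ‖fourierCoeff d χ‖ ≤ σ * ‖fourierCoeff f χ‖) (hσ : 0 ≤ σ) :
    |∑ x, d x * g x| ≤ σ * (√(∑ x, f x ^ 2) * √(∑ x, g x ^ 2)) := by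
  have hG : (0 : ℝ) < Fintype.card G := by exact_mod_cast Fintype.card_pos
  have parseval : Fintype.card G * |∑ x, d x * g x| =
      ‖∑ χ : AddChar G ℂ, fourierCoeff d χ * conj (fourierCoeff g χ)‖ := by
    rw [sum_fourierCoeff_mul_conj, norm_mul, Complex.norm_natCast, ← Real.norm_eq_abs,
      ← Complex.norm_real]
    push_cast
    rfl
  refine le_of_mul_le_mul_left ?_ hG
  calc Fintype.card G * |∑ x, d x * g x|
      ≤ ∑ χ : AddChar G ℂ, ‖fourierCoeff d χ‖ * ‖fourierCoeff g χ‖ := by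
        rw [parseval]
        refine (norm_sum_le _ _).trans_eq (sum_congr rfl fun χ _ => ?_)
        rw [norm_mul, RCLike.norm_conj]
    _ ≤ ∑ χ : AddChar G ℂ, σ * (‖fourierCoeff f χ‖ * ‖fourierCoeff g χ‖) := by
        refine sum_le_sum fun χ _ => ?_
        rw [← mul_assoc]
        exact mul_le_mul_of_nonneg_right (h χ) (norm_nonneg _)
    _ ≤ Fintype.card G * (σ * (√(∑ x, f x ^ 2) * √(∑ x, g x ^ 2))) := by
        rw [← mul_sum, mul_left_comm]
        exact mul_le_mul_of_nonneg_left (sum_norm_fourierCoeff_mul_le f g) hσ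

end Fourier

section AvgDiff

open scoped BigOperators ComplexConjugate

variable {G : Type*} [AddCommGroup G] {T X : Finset G} {f : G → ℝ} {r : ℕ}

/-- The average of the translates of `f` by the differences of pairs of elements of `T`. -/
noncomputable def avgDiff (T : Finset G) (f : G → ℝ) (x : G) : ℝ :=
  𝔼 z ∈ T ×ˢ T, f (x + (z.1 - z.2))

lemma sum_avgDiff {ι : Type*} (f : G → ℝ) (I : Finset ι) (φ : ι → G) :
    ∑ i ∈ I, avgDiff T f (φ i) = 𝔼 z ∈ T ×ˢ T, ∑ i ∈ I, f (φ i + (z.1 - z.2)) :=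
  (expect_sum_comm _ _ _).symm

lemma sum_sub_le_sum_iterate_avgDiff {c : ℝ} (hT : T.Nonempty)
    (h : ∀ z, ∀ t ∈ T, ∀ t' ∈ T, ∑ x ∈ X, f (x + z) - c ≤ ∑ x ∈ X, f (x + z + (t - t')))
    (r : ℕ) (z : G) : ∑ x ∈ X, f (x + z) - r * c ≤ ∑ x ∈ X, (avgDiff T)^[r] f (x + z) := by
  induction r generalizing z with
  | zero => simp
  | succ r ih =>
    rw [Function.iterate_succ_apply', sum_avgDiff]
    refine le_expect (hT.product hT) fun p hp => ?_
    have hstep := h z p.1 (mem_product.1 hp).1 p.2 (mem_product.1 hp).2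
    have hr := ih (z + (p.1 - p.2))
    simp only [add_assoc] at hstep hr ⊢
    push_cast
    linarith

lemma exists_sum_iterate_avgDiff_le {ι : Type*} (hT : T.Nonempty) (f : G → ℝ) (I : Finset ι)
    (φ : ι → G) (r : ℕ) : ∃ u, ∑ i ∈ I, (avgDiff T)^[r] f (φ i) ≤ ∑ i ∈ I, f (φ i + u) := by
  induction r generalizing φ with
  | zero => exact ⟨0, by simp⟩
  | succ r ih =>
    rw [Function.iterate_succ_apply', sum_avgDiff]
    obtain ⟨p, -, hp⟩ := exists_le_of_le_expect (hT.product hT)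
      (le_refl (𝔼 z ∈ T ×ˢ T, ∑ i ∈ I, (avgDiff T)^[r] f (φ i + (z.1 - z.2))))
    obtain ⟨u, hu⟩ := ih fun i => φ i + (p.1 - p.2)
    exact ⟨p.1 - p.2 + u, hp.trans (by simpa only [add_assoc] using hu)⟩

variable {χ : AddChar G ℂ} {σ : ℝ} {b : G}

lemma norm_sub_one_mul_norm_expect_pow_le [Finite G] (hσ : 2 / 4 ^ r ≤ σ) (hT : T.Nonempty)
    (hχ : (#T : ℝ) / 2 ≤ ‖∑ t ∈ T, χ t‖ → ‖χ b - 1‖ ≤ σ) :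
    ‖χ b - 1‖ * (‖𝔼 t ∈ T, χ t‖ ^ 2) ^ r ≤ σ := by
  have hT0 : (0 : ℝ) < #T := by exact_mod_cast hT.card_pos
  have hexpect : ‖𝔼 t ∈ T, χ t‖ = ‖∑ t ∈ T, χ t‖ / #T := by
    rw [expect_eq_sum_div_card, norm_div, Complex.norm_natCast]
  by_cases hlarge : (#T : ℝ) / 2 ≤ ‖∑ t ∈ T, χ t‖
  · have hle : ‖𝔼 t ∈ T, χ t‖ ≤ 1 := by
      rw [hexpect]
      exact div_le_one_of_le₀ ((norm_sum_le _ _).trans_eq (by simp)) hT0.le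
    exact (mul_le_of_le_one_right (norm_nonneg _) (pow_le_one₀ (sq_nonneg _)
      (pow_le_one₀ (norm_nonneg _) hle))).trans (hχ hlarge)
  · have hle : ‖𝔼 t ∈ T, χ t‖ ≤ 1 / 2 := by
      rw [hexpect, div_le_iff₀ hT0]
      linarith
    have hdiff : ‖χ b - 1‖ ≤ 2 :=
      (norm_sub_le _ _).trans_eq (by rw [AddChar.norm_apply, norm_one, one_add_one_eq_two])
    calc ‖χ b - 1‖ * (‖𝔼 t ∈ T, χ t‖ ^ 2) ^ r ≤ 2 * ((1 / 2) ^ 2) ^ r := by gcongr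
      _ = 2 / 4 ^ r := by
        rw [one_div_pow, one_div_pow, mul_one_div]
        norm_num
      _ ≤ σ := hσ

variable [Fintype G]

lemma fourierCoeff_avgDiff (T : Finset G) (f : G → ℝ) (χ : AddChar G ℂ) :
    fourierCoeff (avgDiff T f) χ = ‖𝔼 t ∈ T, χ t‖ ^ 2 * fourierCoeff f χ := by
  have spectrum : 𝔼 z ∈ T ×ˢ T, χ (-(z.1 - z.2)) = (‖𝔼 t ∈ T, χ t‖ : ℂ) ^ 2 := by
    rw [← Complex.mul_conj', map_expect, expect_mul_expect, expect_product, expect_comm]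
    refine expect_congr rfl fun t _ => expect_congr rfl fun t' _ => ?_
    rw [neg_sub, sub_eq_add_neg, AddChar.map_add_eq_mul, AddChar.map_neg_eq_conj]
  calc fourierCoeff (avgDiff T f) χ
      = ∑ x, 𝔼 z ∈ T ×ˢ T, (f (x + (z.1 - z.2)) : ℂ) * χ x := by
        simp only [fourierCoeff, avgDiff, ← expect_mul, Complex.ofReal_expect]
    _ = 𝔼 z ∈ T ×ˢ T, χ (-(z.1 - z.2)) * fourierCoeff f χ := by
        rw [← expect_sum_comm]
        exact expect_congr rfl fun z _ => fourierCoeff_add_right f χ (z.1 - z.2)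
    _ = ‖𝔼 t ∈ T, χ t‖ ^ 2 * fourierCoeff f χ := by rw [← expect_mul, spectrum]

lemma fourierCoeff_iterate_avgDiff (T : Finset G) (f : G → ℝ) (r : ℕ) (χ : AddChar G ℂ) :
    fourierCoeff ((avgDiff T)^[r] f) χ = (‖𝔼 t ∈ T, χ t‖ ^ 2) ^ r * fourierCoeff f χ := by
  induction r with
  | zero => simp
  | succ r ih =>
    rw [Function.iterate_succ_apply', fourierCoeff_avgDiff, ih]
    ring

lemma abs_sum_iterate_avgDiff_sub_le {L : ℝ} (hσ : 2 / 4 ^ r ≤ σ) (hL : 0 ≤ L) (hT : T.Nonempty)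
    (hf : ∑ x, f x ^ 2 ≤ L ^ 2 * #X)
    (hb : ∀ χ : AddChar G ℂ, (#T : ℝ) / 2 ≤ ‖∑ t ∈ T, χ t‖ → ‖χ b - 1‖ ≤ σ) :
    |∑ x ∈ X, ((avgDiff T)^[r] f (x - b) - (avgDiff T)^[r] f x)| ≤ σ * (L * #X) := by
  classical
  set g := (avgDiff T)^[r] f
  have hcoeff (χ : AddChar G ℂ) :
      ‖fourierCoeff ((fun x => g (x - b)) - g) χ‖ ≤ σ * ‖fourierCoeff f χ‖ := by
    simp_rw [sub_eq_add_neg _ b]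
    rw [fourierCoeff_sub, fourierCoeff_add_right, neg_neg, ← sub_one_mul,
      fourierCoeff_iterate_avgDiff, ← mul_assoc, norm_mul, norm_mul]
    simp only [norm_pow, Complex.norm_real, norm_norm]
    exact mul_le_mul_of_nonneg_right (norm_sub_one_mul_norm_expect_pow_le hσ hT (hb χ))
      (norm_nonneg _)
  have h := abs_sum_mul_le_of_norm_fourierCoeff_le (g := fun x => if x ∈ X then 1 else 0) hcoeff
    ((by positivity : (0 : ℝ) ≤ 2 / 4 ^ r).trans hσ)
  simp only [Pi.sub_apply, mul_ite, mul_one, mul_zero, ite_pow, one_pow, ne_eq, OfNat.ofNat_ne_zero,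
    not_false_eq_true, zero_pow, sum_ite_mem, univ_inter, sum_const, nsmul_eq_mul] at h
  refine h.trans ?_
  calc σ * (√(∑ x, f x ^ 2) * √(#X : ℝ)) ≤ σ * (√(L ^ 2 * #X) * √(#X : ℝ)) := by
        gcongr; exact (by positivity : (0 : ℝ) ≤ 2 / 4 ^ r).trans hσ
    _ = σ * (L * #X) := by
        rw [Real.sqrt_mul (sq_nonneg L), Real.sqrt_sq hL, mul_assoc,
          Real.mul_self_sqrt (Nat.cast_nonneg _)]

end AvgDiff

section AlmostPeriodicity

variable {G : Type*} [AddCommGroup G] [Fintype G] {S X Y F B : Finset G} {τ η δ L σ : ℝ}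
  {k r K : ℕ}

lemma sum_sub_le_sum_of_card_filter_le (hη : 0 ≤ η) {f : G → ℝ} (hf : ∀ x, 0 ≤ f x)
    (hf1 : ∀ x, f x ≤ 1) {t : G} (ht : (#{x | 2 * η < |f (x + t) - f x|} : ℝ) ≤ η * #Y) (z : G) :
    ∑ y ∈ Y, f (y + z) - 3 * η * #Y ≤ ∑ y ∈ Y, f (y + z + t) := by
  classical
  set bad : Finset G := {x | 2 * η < |f (x + t) - f x|}
  have pointwise : ∀ y ∈ Y, f (y + z) ≤ f (y + z + t) + 2 * η + if y + z ∈ bad then 1 else 0 := by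
    intro y _
    split_ifs with hy
    · linarith [hf1 (y + z), hf (y + z + t)]
    · rw [mem_filter_univ, not_lt] at hy
      linarith [(abs_le.1 hy).1]
  have hbad : #{y ∈ Y | y + z ∈ bad} ≤ #bad :=
    card_le_card_of_injOn (· + z) (fun y hy => (mem_filter.1 hy).2) (add_left_injective z).injOn
  have hbad' := ((Nat.cast_le (α := ℝ)).2 hbad).trans ht
  have hsum := sum_le_sum pointwise
  rw [sum_add_distrib, sum_add_distrib, sum_const, nsmul_eq_mul, sum_boole] at hsum
  linarith

variable [DecidableEq G]

lemma sum_localDensity (S : Finset G) (hX : X.Nonempty) : ∑ x, localDensity S X x = #S := by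
  have hX0 : (#X : ℝ) ≠ 0 := by exact_mod_cast hX.card_pos.ne'
  have translate (y : G) : #{x | x + y ∈ S} = #S := by
    rw [← card_map (Equiv.addRight y).toEmbedding]
    congr 1
    ext z
    simp
  have count : ∑ x, #{y ∈ X | x + y ∈ S} = #X * #S := by
    simp_rw [card_filter]
    rw [sum_comm]
    simp_rw [← card_filter, translate, sum_const, smul_eq_mul]
  unfold localDensity
  rw [← sum_div, div_eq_iff hX0, mul_comm]
  exact_mod_cast count

lemma sum_localDensity_sq_le (S : Finset G) (hX : X.Nonempty) :
    ∑ x, localDensity S X x ^ 2 ≤ #S := by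
  rw [← sum_localDensity S hX]
  exact sum_le_sum fun x _ =>
    pow_le_of_le_one (localDensity_nonneg S X x) (localDensity_le_one S X x) two_ne_zero

lemma exists_frequencies (hk : 0 < k) (hB : B.Nonempty) (hX : X.Nonempty) (hXF : X ⊆ F)
    (hτ : 0 < τ) (hτX : τ * #F ≤ #X) (hη : 0 ≤ η) (hη2 : η ≤ 2) (hFB : #(F - B) ≤ 2 * #F)
    (hSX : 8 * #(S - X) * Real.exp (-(k * η ^ 2 / 4)) ≤ η * #Y)
    (hK : 80 * (Real.log 2 + k * Real.log (2 / τ)) ≤ K) :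
    ∃ (T : Finset G) (Δ : Finset (AddChar G ℂ)), T.Nonempty ∧ #Δ ≤ K ∧
      (∀ z, ∀ t ∈ T, ∀ t' ∈ T, ∑ y ∈ Y, localDensity S X (y + z) - 3 * η * #Y ≤
        ∑ y ∈ Y, localDensity S X (y + z + (t - t'))) ∧
      ∀ ζ ε : ℝ, 0 ≤ ζ → 0 ≤ ε → ∀ b ∈ bohrSet Δ ζ, IsAlmostPeriod ε B b →
        ∀ χ : AddChar G ℂ, (#T : ℝ) / 2 ≤ ‖∑ t ∈ T, χ t‖ →
          ‖χ b - 1‖ ≤ 4 * (Real.exp (K * ζ) - 1 + 2 * ε * 2 ^ K) := by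
  obtain ⟨T, hTB, hTcard, hT⟩ := croot_sisask (S := S) hk hX hXF hτ.le hτX hη hη2 hFB
  have hT0 : T.Nonempty := by
    rw [← card_pos, ← Nat.cast_pos (α := ℝ)]
    exact lt_of_lt_of_le (by positivity) hTcard
  obtain ⟨n, Δ, hΔ, hn, hchang⟩ := chang hTB hT0
  have hnK : n ≤ K := by
    have hlog := Real.log_le_log (by positivity) hTcard
    rw [Real.log_div (by positivity) (by norm_num), Real.log_mul (by positivity) (by positivity),
      Real.log_pow, ← inv_div, Real.log_inv] at hlog
    exact_mod_cast (by linarith : (n : ℝ) ≤ K)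
  refine ⟨T, Δ, hT0, hΔ.trans hnK, fun z t ht t' ht' => ?_, fun ζ ε hζ hε b hb hbε χ hχ => ?_⟩
  · refine sum_sub_le_sum_of_card_filter_le hη (localDensity_nonneg S X) (localDensity_le_one S X)
      (le_trans ?_ hSX) z
    simpa only [add_sub_assoc] using hT t ht t' ht'
  · refine (hchang ζ ε hζ hε b hb hbε χ hχ).trans ?_
    gcongr
    norm_num

lemma exists_frequencies_sum_localDensity (hk : 0 < k) (hB : B.Nonempty) (hX : X.Nonempty)
    (hXF : X ⊆ F) (hτ : 0 < τ) (hτX : τ * #F ≤ #X) (hη : 0 ≤ η) (hη2 : η ≤ 2)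
    (hFB : #(F - B) ≤ 2 * #F)
    (hSX : 8 * #(S - X) * Real.exp (-(k * η ^ 2 / 4)) ≤ η * #Y)
    (hK : 80 * (Real.log 2 + k * Real.log (2 / τ)) ≤ K) (hL : 0 ≤ L) (hS : #S ≤ L ^ 2 * #Y)
    (hδ : (1 - δ) * #Y ≤ ∑ y ∈ Y, localDensity S X y) {ζ ε : ℝ} (hζ : 0 ≤ ζ) (hε : 0 ≤ ε)
    (hσ : 2 / 4 ^ r ≤ σ) (hσK : 4 * (Real.exp (K * ζ) - 1 + 2 * ε * 2 ^ K) ≤ σ) :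
    ∃ Δ : Finset (AddChar G ℂ), #Δ ≤ K ∧ ∀ D ⊆ bohrSet Δ ζ, (∀ d ∈ D, IsAlmostPeriod ε B d) →
      ∃ u, (1 - δ - 3 * r * η - σ * L) * (#D * #Y) ≤
        ∑ d ∈ D, ∑ y ∈ Y, localDensity S X (y + d + u) := by
  obtain ⟨T, Δ, hT, hΔ, hsmooth, hchar⟩ :=
    exists_frequencies hk hB hX hXF hτ hτX hη hη2 hFB hSX hK
  refine ⟨Δ, hΔ, fun D hD hDB => ?_⟩
  set f := localDensity S X
  have hbase : (1 - δ - 3 * r * η) * #Y ≤ ∑ y ∈ Y, (avgDiff T)^[r] f y := by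
    have h := sum_sub_le_sum_iterate_avgDiff hT hsmooth r 0
    simp only [add_zero] at h
    linarith
  have htranslate (d : G) (hd : d ∈ D) :
      (1 - δ - 3 * r * η - σ * L) * #Y ≤ ∑ y ∈ Y, (avgDiff T)^[r] f (y + d) := by
    have h := abs_sum_iterate_avgDiff_sub_le (X := Y) (f := f) hσ hL hT
      ((sum_localDensity_sq_le S hX).trans hS) fun χ hχ =>
        (hchar ζ ε hζ hε (-d) (neg_mem_bohrSet.2 (hD hd)) (hDB d hd).neg χ hχ).trans hσK
    rw [sum_sub_distrib] at h
    simp only [sub_neg_eq_add] at h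
    linarith [(abs_le.1 h).1]
  obtain ⟨u, hu⟩ := exists_sum_iterate_avgDiff_le hT f (D ×ˢ Y) (fun z => z.2 + z.1) r
  rw [sum_product, sum_product] at hu
  refine ⟨u, le_trans ?_ hu⟩
  calc (1 - δ - 3 * r * η - σ * L) * (#D * #Y)
      = #D • ((1 - δ - 3 * r * η - σ * L) * #Y) := by rw [nsmul_eq_mul]; ring
    _ ≤ _ := card_nsmul_le_sum _ _ _ htranslate

end AlmostPeriodicity

/-! ### From a large moment to a density increment on a Bohr set -/

lemma nonempty_of_mul_card_lt {ι : Type*} {X Y : Finset ι} {δ : ℝ} (hδ : 0 ≤ δ) (h : δ * #X < #Y) :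
    Y.Nonempty :=
  card_pos.1 (by exact_mod_cast (mul_nonneg hδ X.card.cast_nonneg).trans_lt h)

section Increment

variable {G : Type*} [AddCommGroup G] [DecidableEq G] {S X Y D : Finset G} {c δ : ℝ}

lemma mul_card_le_sum_localDensity (hX : X.Nonempty)
    (h : (#{z ∈ Y ×ˢ X | z.1 + z.2 ∉ S} : ℝ) ≤ δ * (#Y * #X)) :
    (1 - δ) * #Y ≤ ∑ y ∈ Y, localDensity S X y := by
  have hX0 : (0 : ℝ) < #X := by exact_mod_cast hX.card_pos
  have hsplit := card_filter_add_card_filter_not (s := Y ×ˢ X) fun z => z.1 + z.2 ∈ S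
  have hcount : #{z ∈ Y ×ˢ X | z.1 + z.2 ∈ S} = ∑ y ∈ Y, #{x ∈ X | y + x ∈ S} := by
    simp_rw [card_filter]
    exact sum_product _ _ _
  rw [hcount, card_product] at hsplit
  have hsplit' := congrArg (Nat.cast (R := ℝ)) hsplit
  push_cast at hsplit'
  simp only [localDensity]
  rw [← sum_div, le_div_iff₀ hX0]
  linarith

lemma exists_mul_card_le_card_filter (hX : X.Nonempty) (hY : Y.Nonempty) {u : G}
    (h : c * (#D * #Y) ≤ ∑ d ∈ D, ∑ y ∈ Y, localDensity S X (y + d + u)) :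
    ∃ v, c * #D ≤ #{d ∈ D | v + d ∈ S} := by
  have hX0 : (0 : ℝ) < #X := by exact_mod_cast hX.card_pos
  have hsum : ∑ _z ∈ Y ×ˢ X, c * #D ≤ ∑ z ∈ Y ×ˢ X, (#{d ∈ D | z.1 + u + z.2 + d ∈ S} : ℝ) := by
    rw [sum_const, card_product, nsmul_eq_mul]
    simp only [localDensity, ← sum_div] at h
    rw [le_div_iff₀ hX0] at h
    refine le_of_eq_of_le (by push_cast; ring) (h.trans_eq ?_)
    simp only [card_filter, Nat.cast_sum, sum_product]
    rw [sum_comm]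
    refine sum_congr rfl fun y _ => ?_
    rw [sum_comm]
    refine sum_congr rfl fun x _ => sum_congr rfl fun d _ => ?_
    rw [add_right_comm y d u, add_right_comm (y + u)]
  obtain ⟨z, -, hz⟩ := exists_le_of_sum_le (hY.product hX) hsum
  exact ⟨_, hz⟩

variable [Fintype G] {A B E F : Finset G} {α τ : ℝ} {p : ℕ}

lemma exists_le_card_filter_of_autocorr (hA : A.Nonempty) {v : G}
    (h : c * #A ≤ ∑ d ∈ D, autocorr 𝟙[A] (v + d)) : ∃ x, c ≤ #{d ∈ D | x + d ∈ A} := by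
  have hautocorr (w : G) : autocorr 𝟙[A] w = ∑ x ∈ A, if x + w ∈ A then 1 else 0 := by
    simp [autocorr, Set.indicator_apply]
  simp only [hautocorr] at h
  rw [sum_comm, mul_comm, ← nsmul_eq_mul, ← sum_const] at h
  obtain ⟨x, -, hx⟩ := exists_le_of_sum_le hA h
  simp only [← add_assoc] at hx
  exact ⟨x + v, by rwa [← sum_boole]⟩

lemma exists_localDensity_autocorr (hα : 0 < α) (hA : (#A : ℝ) = α * #B) (hB : B.Nonempty)
    (hE : E.Nonempty) (hF : F.Nonempty) (hp : 17 ≤ p) (hτ : 0 ≤ τ) (hτα : τ ≤ α ^ (8 * p) / 4)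
    (hmoment : (7 / 4) ^ p * (#(E ×ˢ F) : ℝ) ^ 2 ≤ ∑ z ∈ (E ×ˢ F) ×ˢ E ×ˢ F,
      (autocorr 𝟙[A] (z.1.1 - z.1.2 - (z.2.1 - z.2.2)) / (α ^ 2 * #B) + 1 / 200) ^ (8 * p)) :
    ∃ k, ∃ S ⊆ E + F, ∃ Y ⊆ E, ∃ X ⊆ F, τ * #E < #Y ∧ τ * #F < #X ∧
      (1 - 2 * (4 / 5) ^ p) * #Y ≤ ∑ y ∈ Y, localDensity S X y ∧
      ∀ w ∈ S, 51 / 50 * (α ^ 2 * #B) < autocorr 𝟙[A] (w + k) := by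
  set Q : ℝ := α ^ 2 * #B
  have hQ : 0 < Q := by positivity
  have hH (w : G) : 0 ≤ autocorr 𝟙[A] w / Q := div_nonneg (autocorr_nonneg (indicator_nonneg A) w)
    hQ.le
  obtain ⟨k, hk⟩ := exists_shift_le_sum (H := fun w => (autocorr 𝟙[A] w / Q) ^ (8 * p)) hE hF (by
    have h := pow_mul_card_le_sum_pow (fun z _ => hH _) hp (hmoment.trans_eq' (by
      rw [card_product (E ×ˢ F), Nat.cast_mul, sq]))
    rwa [card_product (E ×ˢ F), Nat.cast_mul, ← sq] at h)
  have hpow : (3 / 2) ^ p * Q ^ (8 * p) * (#E * #F) ≤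
      ∑ e ∈ E, ∑ f ∈ F, autocorr 𝟙[A] (e + f + k) ^ (8 * p) := by
    simp only [div_pow _ Q, ← sum_div] at hk
    rw [le_div_iff₀ (by positivity)] at hk
    linarith
  have hτA : τ * (#A : ℝ) ^ (8 * p) ≤ Q ^ (8 * p) / 4 := by
    calc τ * (#A : ℝ) ^ (8 * p) ≤ α ^ (8 * p) / 4 * (#A : ℝ) ^ (8 * p) := by gcongr
      _ = Q ^ (8 * p) / 4 := by
          rw [hA, div_mul_eq_mul_div, ← mul_pow, ← mul_assoc, ← sq]
  have hratio : (51 / 50 : ℝ) ^ (8 * p) ≤ 2 * (4 / 5) ^ p / 2 * (3 / 2) ^ p := by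
    rw [pow_mul, mul_div_cancel_left₀ _ (two_ne_zero' ℝ), ← mul_pow]
    gcongr
    norm_num
  obtain ⟨Y, hYE, X, hXF, hY, hX, hbad⟩ := sift k hE hF hQ hτ hτA (one_le_pow₀ (by norm_num))
    (by norm_num) (by positivity) hratio hpow
  refine ⟨k, {w ∈ E + F | 51 / 50 * Q < autocorr 𝟙[A] (w + k)}, filter_subset _ _, Y, hYE, X, hXF,
    hY, hX, mul_card_le_sum_localDensity (nonempty_of_mul_card_lt hτ hX) ?_,
    fun w hw => (mem_filter.1 hw).2⟩
  refine le_trans (Nat.cast_le.2 (card_le_card ?_)) hbad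
  intro z hz
  obtain ⟨hz, hzS⟩ := mem_filter.1 hz
  have hz' := mem_product.1 hz
  refine mem_filter.2 ⟨hz, not_lt.1 fun hlt => hzS (mem_filter.2 ⟨?_, hlt⟩)⟩
  exact add_mem_add (hYE hz'.1) (hXF hz'.2)

lemma exists_le_localDensity_of_sum (hα : 0 ≤ α) (hA : (#A : ℝ) = α * #B) (hA0 : A.Nonempty)
    (hX : X.Nonempty) (hY : Y.Nonempty) (hD : D.Nonempty) {k u : G}
    (hS : ∀ w ∈ S, 51 / 50 * (α ^ 2 * #B) < autocorr 𝟙[A] (w + k))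
    (h : 249 / 250 * (#D * #Y : ℝ) ≤ ∑ d ∈ D, ∑ y ∈ Y, localDensity S X (y + d + u)) :
    ∃ x, 203 / 200 * α ≤ localDensity A D x := by
  obtain ⟨v, hv⟩ := exists_mul_card_le_card_filter hX hY h
  have hcorr : 203 / 200 * α * #D * #A ≤ ∑ d ∈ D, autocorr 𝟙[A] (v + k + d) := by
    calc 203 / 200 * α * #D * #A
        ≤ 51 / 50 * (249 / 250) * (α * #D * #A) := by
          rw [mul_assoc, mul_assoc, ← mul_assoc α]
          gcongr
          norm_num
      _ = 249 / 250 * #D * (51 / 50 * (α ^ 2 * #B)) := by rw [hA]; ring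
      _ ≤ #{d ∈ D | v + d ∈ S} * (51 / 50 * (α ^ 2 * #B)) := by gcongr
      _ ≤ ∑ d ∈ D with v + d ∈ S, autocorr 𝟙[A] (v + k + d) := by
          rw [← nsmul_eq_mul]
          refine card_nsmul_le_sum _ _ _ fun d hd => ?_
          rw [add_right_comm]
          exact (hS _ (mem_filter.1 hd).2).le
      _ ≤ ∑ d ∈ D, autocorr 𝟙[A] (v + k + d) :=
          sum_le_sum_of_subset_of_nonneg (filter_subset _ _) fun d _ _ =>
            autocorr_nonneg (indicator_nonneg A) _
  obtain ⟨x, hx⟩ := exists_le_card_filter_of_autocorr hA0 hcorr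
  have hD0 : (0 : ℝ) < #D := by exact_mod_cast hD.card_pos
  exact ⟨x, (le_div_iff₀ hD0).2 hx⟩

lemma exists_frequencies_le_localDensity {P : Finset G} {η ζ ε L σ : ℝ} {k r K : ℕ}
    (hα : 0 < α) (hA : (#A : ℝ) = α * #B) (hB : B.Nonempty) (hE : E.Nonempty) (hF : F.Nonempty)
    (hP : P.Nonempty) (hp : 17 ≤ p) (hτ : 0 < τ) (hτα : τ ≤ α ^ (8 * p) / 4)
    (hmoment : (7 / 4) ^ p * (#(E ×ˢ F) : ℝ) ^ 2 ≤ ∑ z ∈ (E ×ˢ F) ×ˢ E ×ˢ F,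
      (autocorr 𝟙[A] (z.1.1 - z.1.2 - (z.2.1 - z.2.2)) / (α ^ 2 * #B) + 1 / 200) ^ (8 * p))
    (hEF : #(E + F - F) ≤ 2 * #E) (hFP : #(F - P) ≤ 2 * #F) (hk : 0 < k) (hη : 0 ≤ η)
    (hη2 : η ≤ 2) (hkη : 16 * Real.exp (-(k * η ^ 2 / 4)) ≤ η * τ) (hL : 0 ≤ L)
    (hLτ : 2 ≤ L ^ 2 * τ) (hK : 80 * (Real.log 2 + k * Real.log (2 / τ)) ≤ K) (hζ : 0 ≤ ζ)
    (hε : 0 ≤ ε) (hσ : 2 / 4 ^ r ≤ σ) (hσK : 4 * (Real.exp (K * ζ) - 1 + 2 * ε * 2 ^ K) ≤ σ)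
    (herr : 2 * (4 / 5) ^ p + 3 * r * η + σ * L ≤ 1 / 250) :
    ∃ Δ : Finset (AddChar G ℂ), #Δ ≤ K ∧ ∀ D ⊆ bohrSet Δ ζ, D.Nonempty →
      (∀ d ∈ D, IsAlmostPeriod ε P d) → ∃ x, 203 / 200 * α ≤ localDensity A D x := by
  obtain ⟨k₀, S, hS, Y, -, X, hXF, hYcard, hXcard, hpairs, hcorr⟩ :=
    exists_localDensity_autocorr hα hA hB hE hF hp hτ.le hτα hmoment
  have hX : X.Nonempty := nonempty_of_mul_card_lt hτ.le hXcard
  have hY : Y.Nonempty := nonempty_of_mul_card_lt hτ.le hYcard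
  have hA0 : A.Nonempty := by
    rw [← card_pos, ← Nat.cast_pos (α := ℝ), hA]
    positivity
  have hSXcard : (#(S - X) : ℝ) ≤ 2 * #E := by
    exact_mod_cast (card_le_card (sub_subset_sub hS hXF)).trans hEF
  have hSX : 8 * #(S - X) * Real.exp (-(k * η ^ 2 / 4)) ≤ η * #Y := by
    calc 8 * #(S - X) * Real.exp (-(k * η ^ 2 / 4))
        ≤ 8 * (2 * #E) * Real.exp (-(k * η ^ 2 / 4)) := by gcongr
      _ = #E * (16 * Real.exp (-(k * η ^ 2 / 4))) := by ring
      _ ≤ #E * (η * τ) := by gcongr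
      _ = η * (τ * #E) := by ring
      _ ≤ η * #Y := by gcongr
  have hScard : (#S : ℝ) ≤ L ^ 2 * #Y := by
    calc (#S : ℝ) ≤ #(S - X) := by exact_mod_cast card_le_card_sub_right hX
      _ ≤ 2 * #E := hSXcard
      _ ≤ L ^ 2 * τ * #E := by gcongr
      _ = L ^ 2 * (τ * #E) := by ring
      _ ≤ L ^ 2 * #Y := by gcongr
  obtain ⟨Δ, hΔ, hmain⟩ := exists_frequencies_sum_localDensity hk hP hX hXF hτ hXcard.le hη hη2 hFP
    hSX hK hL hScard hpairs hζ hε hσ hσK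
  refine ⟨Δ, hΔ, fun D hDΔ hD hDP => ?_⟩
  obtain ⟨u, hu⟩ := hmain D hDΔ hDP
  refine exists_le_localDensity_of_sum hα.le hA hA0 hX hY hD hcorr (le_trans ?_ hu)
  gcongr
  linarith

end Increment

/-! ### The density increment step -/

section LocalDensity

variable {G : Type*} [AddCommGroup G] [DecidableEq G] {A B B₁ B₂ : Finset G} {ε : ℝ}

lemma localDensity_neg_vadd (A B : Finset G) (x y : G) :
    localDensity (-x +ᵥ A) B y = localDensity A B (x + y) := by
  simp only [localDensity, mem_neg_vadd_finset_iff, vadd_eq_add, add_assoc]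

lemma localDensity_mul_card (hB : B.Nonempty) (x : G) :
    localDensity A B x * #B = #{b ∈ B | x + b ∈ A} :=
  div_mul_cancel₀ _ (by exact_mod_cast hB.card_pos.ne')

lemma card_filter_mem_eq_localDensity_mul (hB : B.Nonempty) :
    (#{b ∈ B | b ∈ A} : ℝ) = localDensity A B 0 * #B := by
  simp only [localDensity_mul_card hB, zero_add]

lemma localDensity_mono (h : A ⊆ B₁) (x : G) : localDensity A B x ≤ localDensity B₁ B x := by
  unfold localDensity
  gcongr

lemma IsAlmostPeriod.sub_le_card_filter {b : G} (hb : IsAlmostPeriod ε B b) (x : G) :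
    (#{y ∈ B | x + y ∈ A} : ℝ) - ε * #B ≤ #{y ∈ B | x + y + b ∈ A} := by
  have hb' : (#{y ∈ B | y - b ∉ B} : ℝ) ≤ ε * #B := by rwa [card_filter_sub_notMem_eq]
  have hstay : #{y ∈ {y ∈ B | x + y ∈ A} | y - b ∈ B} ≤ #{y ∈ B | x + y + b ∈ A} := by
    refine card_le_card_of_injOn (· - b) (fun y hy => ?_) (sub_left_injective.injOn)
    obtain ⟨hy, hyB⟩ := mem_filter.1 (mem_coe.1 hy)
    refine mem_coe.2 (mem_filter.2 ⟨hyB, ?_⟩)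
    rw [add_assoc, sub_add_cancel]
    exact (mem_filter.1 hy).2
  have hleave : #{y ∈ {y ∈ B | x + y ∈ A} | y - b ∉ B} ≤ #{y ∈ B | y - b ∉ B} :=
    card_le_card (filter_subset_filter _ (filter_subset _ _))
  have hsplit := card_filter_add_card_filter_not (s := {y ∈ B | x + y ∈ A}) (· - b ∈ B)
  have hcard : (#{y ∈ B | x + y ∈ A} : ℝ) ≤ #{y ∈ B | x + y + b ∈ A} + #{y ∈ B | y - b ∉ B} := by
    exact_mod_cast (by omega)
  linarith

lemma sub_mul_card_le_sum_localDensity (hB : B.Nonempty) (hB₁ : B₁.Nonempty)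
    (h : ∀ b ∈ B₁, IsAlmostPeriod ε B b) (x : G) :
    (localDensity A B x - ε) * #B ≤ ∑ b ∈ B, localDensity A B₁ (x + b) := by
  have hB₁0 : (0 : ℝ) < #B₁ := by exact_mod_cast hB₁.card_pos
  have hsum : ∑ b ∈ B, localDensity A B₁ (x + b) =
      (∑ b ∈ B, (#{b₁ ∈ B₁ | x + b + b₁ ∈ A} : ℝ)) / #B₁ := (sum_div _ _ _).symm
  rw [hsum, le_div_iff₀ hB₁0, sub_mul, localDensity_mul_card hB, mul_comm, ← nsmul_eq_mul]
  calc #B₁ • ((#{b ∈ B | x + b ∈ A} : ℝ) - ε * #B)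
      ≤ ∑ b₁ ∈ B₁, (#{b ∈ B | x + b + b₁ ∈ A} : ℝ) :=
        card_nsmul_le_sum _ _ _ fun b₁ hb₁ => (h b₁ hb₁).sub_le_card_filter x
    _ = ∑ b ∈ B, (#{b₁ ∈ B₁ | x + b + b₁ ∈ A} : ℝ) := by
        simp only [card_filter, Nat.cast_sum]
        exact sum_comm

lemma exists_le_localDensity_add_localDensity (hB : B.Nonempty) (hB₁ : B₁.Nonempty)
    (hB₂ : B₂.Nonempty) (h₁ : ∀ b ∈ B₁, IsAlmostPeriod ε B b)
    (h₂ : ∀ b ∈ B₂, IsAlmostPeriod ε B b) (x : G) :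
    ∃ y, 2 * (localDensity A B x - ε) ≤ localDensity A B₁ y + localDensity A B₂ y := by
  have hsum := add_le_add (sub_mul_card_le_sum_localDensity (A := A) hB hB₁ h₁ x)
    (sub_mul_card_le_sum_localDensity (A := A) hB hB₂ h₂ x)
  rw [← sum_add_distrib, ← two_mul, ← mul_assoc, mul_comm, ← nsmul_eq_mul, ← sum_const] at hsum
  obtain ⟨b, -, hb⟩ := exists_le_of_sum_le hB hsum
  exact ⟨x + b, hb⟩

lemma card_filter_two_nsmul_sub_mem_le_one (hA : ThreeAPFree (A : Set G)) {y : G}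
    (hy : y ∈ A) : #{x ∈ A | 2 • y - x ∈ A} ≤ 1 := by
  refine (card_le_card fun x hx => mem_singleton.2 ?_).trans_eq (card_singleton y)
  obtain ⟨hx, hx'⟩ := mem_filter.1 hx
  exact hA hx hy hx' (by rw [add_sub_cancel, two_nsmul])

end LocalDensity

section RegularChain

variable {G : Type*} [AddCommGroup G] [Fintype G] {Γ Γ' : Finset (AddChar G ℂ)} {κ ε ρ : ℝ}
  {R : ℕ → ℝ}

/-- Radii of regular Bohr sets with common frequency set `Γ`, each of which is small enough compared
with the preceding one for translations by it to be harmless. -/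
structure RegularChain (κ ε : ℝ) (Γ : Finset (AddChar G ℂ)) (R : ℕ → ℝ) : Prop where
  isRegular : ∀ i, IsRegular κ ε Γ (R i)
  lower : ∀ i, κ / 8 * R i ≤ R (i + 1)
  upper : ∀ i, R (i + 1) ≤ κ / 4 * R i

lemma IsRegular.exists_regularChain {D : ℕ} (h : IsRegular κ ε Γ ρ) (hκ : 0 < κ)
    (hκε : κ * (16 * (D + 1)) ≤ ε) (hε : ε ≤ 1) (hΓ : #Γ ≤ D) :
    ∃ R, R 0 = ρ ∧ RegularChain κ ε Γ R := by
  have hnext (r : ℝ) : ∃ r', 0 < r → κ / 8 * r ≤ r' ∧ r' ≤ κ / 4 * r ∧ IsRegular κ ε Γ r' := by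
    by_cases hr : 0 < r
    · obtain ⟨r', hl, hu, hreg⟩ := exists_isRegular hκ hκε hε hΓ (ρ := κ / 4 * r) (by positivity)
      exact ⟨r', fun _ => ⟨by linarith, hu, hreg⟩⟩
    · exact ⟨0, fun hr' => absurd hr' hr⟩
  choose next hnext using hnext
  have hsucc (i : ℕ) : next^[i + 1] ρ = next (next^[i] ρ) := Function.iterate_succ_apply' ..
  have hreg (i : ℕ) : IsRegular κ ε Γ (next^[i] ρ) := by
    induction i with
    | zero => exact h
    | succ i ih => exact hsucc i ▸ (hnext _ ih.1).2.2
  exact ⟨fun i => next^[i] ρ, rfl, hreg, fun i => hsucc i ▸ (hnext _ (hreg i).1).1,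
    fun i => hsucc i ▸ (hnext _ (hreg i).1).2.1⟩

lemma RegularChain.antitone (h : RegularChain κ ε Γ R) (hκ : κ ≤ 1) : Antitone R :=
  antitone_nat_of_succ_le fun i => (h.upper i).trans <| by nlinarith [(h.isRegular i).1]

lemma RegularChain.exists_le_localDensity_add_localDensity [DecidableEq G]
    (h : RegularChain κ ε Γ R) (hκ : 0 < κ) (hκ1 : κ ≤ 1) (A : Finset G) (x : G) :
    ∃ y, 2 * (localDensity A (bohrSet Γ (R 0)) x - ε) ≤
      localDensity A (bohrSet Γ (R 1)) y + localDensity A (bohrSet Γ (R 2)) y := by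
  have hpos (i : ℕ) : 0 < R i := (h.isRegular i).1
  have hperiod {i : ℕ} (hi : 1 ≤ i) :
      ∀ b ∈ bohrSet Γ (R i), IsAlmostPeriod ε (bohrSet Γ (R 0)) b := fun b hb => by
    refine (h.isRegular 0).isAlmostPeriod hκ.le (bohrSet_mono ((h.antitone hκ1 hi).trans ?_) hb)
    linarith [(h.upper 0 : R 1 ≤ _), mul_pos hκ (hpos 0)]
  exact KelleyMeka.exists_le_localDensity_add_localDensity (bohrSet_nonempty (hpos 0).le)
    (bohrSet_nonempty (hpos 1).le) (bohrSet_nonempty (hpos 2).le) (hperiod le_rfl)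
    (hperiod one_le_two) x

lemma RegularChain.pow_mul_le (h : RegularChain κ ε Γ R) (hκ : 0 ≤ κ) (i : ℕ) :
    (κ / 8) ^ i * R 0 ≤ R i := by
  induction i with
  | zero => simp
  | succ i ih =>
    calc (κ / 8) ^ (i + 1) * R 0 = κ / 8 * ((κ / 8) ^ i * R 0) := by ring
      _ ≤ κ / 8 * R i := by gcongr
      _ ≤ R (i + 1) := h.lower i

lemma IsRegular.of_card_eq (h : IsRegular κ ε Γ ρ)
    (hcard : ∀ r, #(bohrSet Γ' r) = #(bohrSet Γ r)) : IsRegular κ ε Γ' ρ :=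
  ⟨h.1, by simpa only [hcard] using h.2⟩

lemma RegularChain.of_card_eq (h : RegularChain κ ε Γ R)
    (hcard : ∀ r, #(bohrSet Γ' r) = #(bohrSet Γ r)) : RegularChain κ ε Γ' R :=
  ⟨fun i => (h.isRegular i).of_card_eq hcard, h.lower, h.upper⟩

lemma IsRegular.card_le_two_mul (h : IsRegular κ ε Γ ρ) (hε : ε ≤ 1) {S : Finset G}
    (hS : S ⊆ bohrSet Γ ((1 + κ) * ρ)) : #S ≤ 2 * #(bohrSet Γ ρ) := by
  have hcard : (#S : ℝ) ≤ 2 * #(bohrSet Γ ρ) := by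
    calc (#S : ℝ) ≤ #(bohrSet Γ ((1 + κ) * ρ)) := by exact_mod_cast card_le_card hS
      _ ≤ (1 + ε) * #(bohrSet Γ ρ) := h.2
      _ ≤ 2 * #(bohrSet Γ ρ) := by gcongr; linarith
  exact_mod_cast hcard

lemma two_nsmul_mem_bohrSet {r : ℝ} {x : G} (hx : x ∈ bohrSet Γ r) : 2 • x ∈ bohrSet Γ (2 * r) := by
  rw [two_nsmul, two_mul]
  exact add_mem_bohrSet hx hx

variable [DecidableEq G]

lemma bohrSet_subset_of_eq_image (hΓ' : ∀ r, bohrSet Γ' r = (bohrSet Γ r).image (2 • ·)) (r : ℝ) :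
    bohrSet Γ' r ⊆ bohrSet Γ (2 * r) := by
  rw [hΓ', image_subset_iff]
  exact fun x hx => two_nsmul_mem_bohrSet hx

lemma RegularChain.card_add_sub_le (h : RegularChain κ ε Γ R) (hκ : 0 < κ) (hε : ε ≤ 1) (i : ℕ) :
    #(bohrSet Γ (R i) + bohrSet Γ (R (i + 1)) - bohrSet Γ (R (i + 1))) ≤
      2 * #(bohrSet Γ (R i)) := by
  refine (h.isRegular i).card_le_two_mul hε fun x hx => ?_
  obtain ⟨y, hy, c, hc, rfl⟩ := mem_sub.1 hx
  obtain ⟨a, ha, b, hb, rfl⟩ := mem_add.1 hy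
  refine bohrSet_mono ?_ (sub_mem_bohrSet (add_mem_bohrSet ha hb) hc)
  linarith [h.upper i, mul_pos hκ (h.isRegular i).1]

lemma RegularChain.card_sub_le (h : RegularChain κ ε Γ R) (hκ : 0 < κ) (hε : ε ≤ 1) (i : ℕ) :
    #(bohrSet Γ (R i) - bohrSet Γ (R (i + 1))) ≤ 2 * #(bohrSet Γ (R i)) := by
  have hzero : (0 : G) ∈ bohrSet Γ (R (i + 1)) := zero_mem_bohrSet (h.isRegular (i + 1)).1.le
  exact (card_le_card (sub_subset_sub_right (subset_add_left _ hzero))).trans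
    (h.card_add_sub_le hκ hε i)

-- The sums `2 • y` with `y ∈ A` in the second Bohr set are represented only trivially as sums of
-- two elements of `A`, which is far fewer representations than expected.
lemma RegularChain.pow_mul_card_sq_le_sum_autocorr {A : Finset G} {d δ : ℝ} {p : ℕ}
    (hR : RegularChain κ ε Γ R) (hκ : 0 < κ) (hκ1 : κ ≤ 1)
    (h₂ : Function.Injective fun x : G => 2 • x)
    (hΓ' : ∀ r, bohrSet Γ' r = (bohrSet Γ r).image (2 • ·)) (hA : ThreeAPFree (A : Set G))
    (hd : 0 < d) (hd2 : d ≤ 2) (hA₁ : A ⊆ bohrSet Γ (R 1)) (hAd : (#A : ℝ) = d * #(bohrSet Γ (R 1)))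
    (hA₂ : δ * #(bohrSet Γ (R 2)) ≤ #{b ∈ bohrSet Γ (R 2) | b ∈ A})
    (hsize : 4 ≤ d ^ 2 * #(bohrSet Γ (R 1))) (hε0 : 0 ≤ ε) (hε1 : ε ≤ 1) (hε : ε ≤ d / 400)
    (hp : Even p) (hδ : 2 ≤ δ * 2 ^ p) :
    (7 / 4) ^ p * (#(bohrSet Γ' (R 3) ×ˢ bohrSet Γ' (R 4)) : ℝ) ^ 2 ≤
      ∑ z ∈ (bohrSet Γ' (R 3) ×ˢ bohrSet Γ' (R 4)) ×ˢ bohrSet Γ' (R 3) ×ˢ bohrSet Γ' (R 4),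
        (autocorr 𝟙[A] (z.1.1 - z.1.2 - (z.2.1 - z.2.2)) / (d ^ 2 * #(bohrSet Γ (R 1))) +
          1 / 200) ^ (8 * p) := by
  have hpos (i : ℕ) : 0 < R i := (hR.isRegular i).1
  have hcard (r : ℝ) : #(bohrSet Γ' r) = #(bohrSet Γ r) := by
    rw [hΓ', card_image_of_injective _ h₂]
  have h32 : R 3 ≤ κ / 4 * R 2 := hR.upper 2
  have h43 : R 4 ≤ κ / 4 * R 3 := hR.upper 3
  have hκR (i : ℕ) : κ * R i ≤ R i := mul_le_of_le_one_left (hpos i).le hκ1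
  have h21 : 2 * R 2 ≤ κ * R 1 := by
    linarith [(hR.upper 1 : R 2 ≤ _), mul_pos hκ (hpos 1)]
  have hφ {z : G × G} (hz : z ∈ bohrSet Γ' (R 3) ×ˢ bohrSet Γ' (R 4)) :
      z.1 - z.2 ∈ bohrSet Γ' (R 3 + R 4) :=
    sub_mem_bohrSet (mem_product.1 hz).1 (mem_product.1 hz).2
  have hCcard : δ * #(bohrSet Γ' (R 2)) ≤ #({b ∈ bohrSet Γ (R 2) | b ∈ A}.image (2 • ·)) := by
    rwa [hcard, card_image_of_injective _ h₂]
  have hW' {w : G} (hw : w ∈ bohrSet Γ' (R 2)) {z z' : G × G}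
      (hz : z ∈ bohrSet Γ' (R 3) ×ˢ bohrSet Γ' (R 4))
      (hz' : z' ∈ bohrSet Γ' (R 3) ×ˢ bohrSet Γ' (R 4)) :
      w - (z.1 - z.2) - (z'.1 - z'.2) ∈ bohrSet Γ' ((1 + κ) * R 2) := by
    refine bohrSet_mono ?_ (sub_mem_bohrSet (sub_mem_bohrSet hw (hφ hz)) (hφ hz'))
    linarith [hκR 3, hpos 3]
  have hW'card : #(bohrSet Γ' ((1 + κ) * R 2)) ≤ 2 * #(bohrSet Γ' (R 2)) :=
    ((hR.isRegular 2).of_card_eq hcard).card_le_two_mul hε1 Subset.rfl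
  have hdiff {z z' : G × G} (hz : z ∈ bohrSet Γ' (R 3) ×ˢ bohrSet Γ' (R 4))
      (hz' : z' ∈ bohrSet Γ' (R 3) ×ˢ bohrSet Γ' (R 4)) :
      IsAlmostPeriod ε (bohrSet Γ (R 1)) (z.1 - z.2 - (z'.1 - z'.2)) := by
    refine (hR.isRegular 1).isAlmostPeriod hκ.le (bohrSet_mono ?_
      (bohrSet_subset_of_eq_image hΓ' _ (sub_mem_bohrSet (hφ hz) (hφ hz'))))
    linarith [hκR 1, hκR 2, hκR 3, hpos 3]
  refine pow_mul_card_sq_le_sum_autocorr_pow (φ := fun z : G × G => z.1 - z.2) (θ := 1 / 200) hA₁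
    (fun _ => neg_mem_bohrSet) hd hd2 hAd hsize hε0 (by linarith) (by linarith) hp
    ((image_subset_image (filter_subset (· ∈ A) _)).trans_eq (hΓ' _).symm)
    (bohrSet_nonempty (hpos 2).le) (fun w hw => ?_) (fun w hw => ?_) hCcard hδ
    (fun w hw z hz z' hz' => hW' hw hz hz') (by exact_mod_cast hW'card)
    (fun z hz z' hz' => hdiff hz hz')
  · obtain ⟨y, hy, rfl⟩ := mem_image.1 hw
    exact (hR.isRegular 1).isAlmostPeriod hκ.le (bohrSet_mono h21
      (two_nsmul_mem_bohrSet (mem_filter.1 hy).1))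
  · obtain ⟨y, hy, rfl⟩ := mem_image.1 hw
    exact card_filter_two_nsmul_sub_mem_le_one hA (mem_filter.1 hy).2

end RegularChain

section Step

variable {G : Type*} [AddCommGroup G] [Fintype G] [DecidableEq G] {A : Finset G}
  {Γ : Finset (AddChar G ℂ)} {R : ℕ → ℝ} {α κ ε τ η L σ ζ a ρ : ℝ} {p k r K D : ℕ}

/-- The numerical conditions on the parameters of one density increment step: a lower bound `α` for
the density, regularity parameters `κ` and `ε`, a moment `p`, the density `τ` of the sifted sets,
the precision `η`, sample size `k` and number of iterations `r` of almost periodicity, the weights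
`L` and `σ` of its main and error terms, and the number `K` of new frequencies, with their radius
`ζ`; the rank is at most `D` throughout. -/
structure IncrementParams (α κ ε τ η L σ ζ : ℝ) (p k r K D : ℕ) : Prop where
  α_pos : 0 < α
  κ_pos : 0 < κ
  κ_mul_le : κ * (16 * (D + 1)) ≤ ε
  ε_le_one : ε ≤ 1
  ε_le : ε ≤ α / 1000
  p_even : Even p
  le_p : 17 ≤ p
  le_mul_pow : 4 ≤ α * 2 ^ p
  τ_pos : 0 < τ
  τ_le : τ ≤ (α / 2) ^ (8 * p) / 4
  k_pos : 0 < k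
  η_nonneg : 0 ≤ η
  η_le_two : η ≤ 2
  exp_le : 16 * Real.exp (-(k * η ^ 2 / 4)) ≤ η * τ
  L_nonneg : 0 ≤ L
  le_sq_mul : 2 ≤ L ^ 2 * τ
  log_le : 80 * (Real.log 2 + k * Real.log (2 / τ)) ≤ K
  ζ_pos : 0 < ζ
  ζ_le_one : ζ ≤ 1
  le_σ : 2 / 4 ^ r ≤ σ
  exp_sub_one_le : 4 * (Real.exp (K * ζ) - 1 + 2 * ε * 2 ^ K) ≤ σ
  error_le : 2 * (4 / 5) ^ p + 3 * r * η + σ * L ≤ 1 / 250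

namespace IncrementParams

lemma ε_pos (P : IncrementParams α κ ε τ η L σ ζ p k r K D) : 0 < ε :=
  (mul_pos P.κ_pos (by positivity)).trans_le P.κ_mul_le

lemma κ_le_one (P : IncrementParams α κ ε τ η L σ ζ p k r K D) : κ ≤ 1 := by
  have := P.κ_mul_le.trans P.ε_le_one
  nlinarith [mul_nonneg P.κ_pos.le D.cast_nonneg]

lemma exists_frequencies (P : IncrementParams α κ ε τ η L σ ζ p k r K D)
    (hR : RegularChain κ ε Γ R) (hG : (Nat.card G).Coprime 2) (hA : ThreeAPFree (A : Set G))
    (ha : α ≤ a) (h₁ : 124 / 125 * a ≤ localDensity A (bohrSet Γ (R 1)) 0)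
    (h₂ : 124 / 125 * a ≤ localDensity A (bohrSet Γ (R 2)) 0)
    (hsize : 5 ≤ α ^ 2 * #(bohrSet Γ (R 1))) :
    ∃ Γ' Δ : Finset (AddChar G ℂ), #Γ' ≤ #Γ ∧ #Δ ≤ K ∧ ∀ B ⊆ bohrSet Γ' (κ * R 5),
      B ⊆ bohrSet Δ ζ → B.Nonempty → ∃ x, 251 / 250 * a ≤ localDensity A B x := by
  have hα := P.α_pos
  have hκ := P.κ_pos
  have hpos (i : ℕ) : 0 < R i := (hR.isRegular i).1
  have hinj : Function.Injective fun x : G => 2 • x := (nsmulCoprime hG).injective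
  obtain ⟨Γ', hΓ', himage⟩ := exists_bohrSet_eq_image_two_nsmul hG Γ
  have hR' : RegularChain κ ε Γ' R := hR.of_card_eq fun ρ => by
    rw [himage, card_image_of_injective _ hinj]
  set B₁ := bohrSet Γ (R 1)
  set A₁ := {b ∈ B₁ | b ∈ A} with hA₁def
  set d := localDensity A B₁ 0
  have hA₁A : A₁ ⊆ A := fun b hb => (mem_filter.1 hb).2
  have hA₁ : (#A₁ : ℝ) = d * #B₁ :=
    card_filter_mem_eq_localDensity_mul (bohrSet_nonempty (hpos 1).le)
  have hA₂ : 124 / 125 * a * #(bohrSet Γ (R 2)) ≤ #{b ∈ bohrSet Γ (R 2) | b ∈ A₁} := by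
    have hsub : bohrSet Γ (R 2) ⊆ B₁ := bohrSet_mono (hR.antitone P.κ_le_one one_le_two)
    have hfilter : {b ∈ bohrSet Γ (R 2) | b ∈ A₁} = {b ∈ bohrSet Γ (R 2) | b ∈ A} :=
      filter_congr fun b hb => by simp only [hA₁def, mem_filter, hsub hb, true_and]
    rw [hfilter, card_filter_mem_eq_localDensity_mul (bohrSet_nonempty (hpos 2).le)]
    gcongr
  have hd : 124 / 125 * α ≤ d := by linarith
  have hd0 : 0 < d := by linarith
  have hdB₁ : 4 ≤ d ^ 2 * #B₁ := by
    have hd2 : (124 / 125 * α) ^ 2 * #B₁ ≤ d ^ 2 * #B₁ := by gcongr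
    linarith
  have hap : 2 ≤ 124 / 125 * a * 2 ^ p := by
    have hαp : α * 2 ^ p ≤ a * 2 ^ p := by gcongr
    linarith [P.le_mul_pow]
  have hτd : τ ≤ d ^ (8 * p) / 4 := P.τ_le.trans (by gcongr; linarith)
  have moment := hR.pow_mul_card_sq_le_sum_autocorr (A := A₁) hκ P.κ_le_one hinj himage
    (hA.mono (coe_subset.2 hA₁A)) hd0 ((localDensity_le_one A B₁ 0).trans one_le_two)
    (filter_subset _ _) hA₁ hA₂ hdB₁ P.ε_pos.le P.ε_le_one (by linarith [P.ε_le]) P.p_even hap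
  obtain ⟨Δ, hΔ, hmain⟩ := exists_frequencies_le_localDensity hd0 hA₁
    (bohrSet_nonempty (hpos 1).le) (bohrSet_nonempty (hpos 3).le) (bohrSet_nonempty (hpos 4).le)
    (bohrSet_nonempty (hpos 5).le) P.le_p P.τ_pos hτd moment (hR'.card_add_sub_le hκ P.ε_le_one 3)
    (hR'.card_sub_le hκ P.ε_le_one 4) P.k_pos P.η_nonneg P.η_le_two P.exp_le P.L_nonneg
    P.le_sq_mul P.log_le P.ζ_pos.le P.ε_pos.le P.le_σ P.exp_sub_one_le P.error_le
  refine ⟨Γ', Δ, hΓ', hΔ, fun B hB hBΔ hB0 => ?_⟩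
  obtain ⟨x, hx⟩ := hmain B hBΔ hB0 fun b hb => (hR'.isRegular 5).isAlmostPeriod hκ.le (hB hb)
  exact ⟨x, by linarith [localDensity_mono (B := B) hA₁A x]⟩

lemma exists_isRegular_of_chain (P : IncrementParams α κ ε τ η L σ ζ p k r K D)
    (hR : RegularChain κ ε Γ R) (hR0 : R 0 ≤ 1) (hG : (Nat.card G).Coprime 2)
    (hA : ThreeAPFree (A : Set G)) (hΓ : #Γ + K ≤ D) (ha : α ≤ a) {y : G}
    (h₁ : 124 / 125 * a ≤ localDensity A (bohrSet Γ (R 1)) y)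
    (h₂ : 124 / 125 * a ≤ localDensity A (bohrSet Γ (R 2)) y)
    (hsize : 5 ≤ α ^ 2 * #(bohrSet Γ (R 1))) :
    ∃ (Γ' : Finset (AddChar G ℂ)) (ρ' : ℝ) (x : G), #Γ' ≤ #Γ + K ∧
      κ * R 5 * ζ / 2 ≤ ρ' ∧ ρ' ≤ R 5 ∧ IsRegular κ ε Γ' ρ' ∧
      251 / 250 * a ≤ localDensity A (bohrSet Γ' ρ') x := by
  classical
  have hshift (B : Finset G) (z : G) : localDensity (-y +ᵥ A) B z = localDensity A B (y + z) :=
    localDensity_neg_vadd A B y z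
  obtain ⟨Γ', Δ, hΓ', hΔ, hmain⟩ := P.exists_frequencies (A := -y +ᵥ A) hR hG
    (by rwa [coe_vadd_finset, threeAPFree_vadd_set]) ha (by rwa [hshift, add_zero])
    (by rwa [hshift, add_zero]) hsize
  have hκ := P.κ_pos
  have hζ := P.ζ_pos
  have hR5 : 0 < R 5 := (hR.isRegular 5).1
  have hκR : κ * R 5 ≤ 1 :=
    mul_le_one₀ P.κ_le_one hR5.le ((hR.antitone P.κ_le_one (Nat.zero_le 5)).trans hR0)
  have hunion : #(Γ' ∪ Δ) ≤ #Γ + K := (card_union_le _ _).trans (add_le_add hΓ' hΔ)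
  obtain ⟨ρ', hl, hu, hreg⟩ := exists_isRegular hκ P.κ_mul_le P.ε_le_one (hunion.trans hΓ)
    (ρ := κ * R 5 * ζ) (by positivity)
  have hρ'κ : ρ' ≤ κ * R 5 := hu.trans (mul_le_of_le_one_right (by positivity) P.ζ_le_one)
  have hρ'ζ : ρ' ≤ ζ := hu.trans (mul_le_of_le_one_left hζ.le hκR)
  obtain ⟨x, hx⟩ := hmain (bohrSet (Γ' ∪ Δ) ρ')
    ((bohrSet_mono hρ'κ).trans (bohrSet_anti subset_union_left))
    ((bohrSet_mono hρ'ζ).trans (bohrSet_anti subset_union_right)) (bohrSet_nonempty hreg.1.le)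
  exact ⟨Γ' ∪ Δ, ρ', y + x, hunion, hl,
    hρ'κ.trans (mul_le_of_le_one_left hR5.le P.κ_le_one), hreg, hshift _ x ▸ hx⟩

lemma exists_density_increment (P : IncrementParams α κ ε τ η L σ ζ p k r K D)
    (hG : (Nat.card G).Coprime 2) (hA : ThreeAPFree (A : Set G)) (hΓ : #Γ + K ≤ D)
    (hreg : IsRegular κ ε Γ ρ) (hρ : ρ ≤ 1) {x : G} (hα : α ≤ localDensity A (bohrSet Γ ρ) x)
    (hsize : 5 ≤ α ^ 2 * #(bohrSet Γ (κ / 8 * ρ))) :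
    ∃ (Γ' : Finset (AddChar G ℂ)) (ρ' : ℝ) (x' : G), #Γ' ≤ #Γ + K ∧
      κ ^ 6 * ζ / 2 ^ 16 * ρ ≤ ρ' ∧ ρ' ≤ ρ ∧ IsRegular κ ε Γ' ρ' ∧
      251 / 250 * localDensity A (bohrSet Γ ρ) x ≤ localDensity A (bohrSet Γ' ρ') x' := by
  have hκ := P.κ_pos
  have hζ := P.ζ_pos
  have hζ1 := P.ζ_le_one
  obtain ⟨R, rfl, hR⟩ :=
    hreg.exists_regularChain hκ P.κ_mul_le P.ε_le_one ((Nat.le_add_right _ _).trans hΓ)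
  have hpos (i : ℕ) : 0 < R i := (hR.isRegular i).1
  have hanti := hR.antitone P.κ_le_one
  have hlower : κ ^ 6 * ζ / 2 ^ 16 * R 0 ≤ κ * R 5 * ζ / 2 := by
    calc κ ^ 6 * ζ / 2 ^ 16 * R 0 = κ * ((κ / 8) ^ 5 * R 0) * ζ / 2 := by ring
      _ ≤ κ * R 5 * ζ / 2 := by gcongr; exact hR.pow_mul_le hκ.le 5
  have hlower2 : κ ^ 6 * ζ / 2 ^ 16 * R 0 ≤ R 2 := by
    have hκζ : κ * ζ ≤ 1 := mul_le_one₀ P.κ_le_one hζ.le hζ1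
    nlinarith [hpos 5, (hanti (by decide) : R 5 ≤ R 2)]
  set a := localDensity A (bohrSet Γ (R 0)) x
  obtain ⟨y, hy⟩ := hR.exists_le_localDensity_add_localDensity hκ P.κ_le_one A x
  by_cases h₁ : 251 / 250 * a ≤ localDensity A (bohrSet Γ (R 1)) y
  · exact ⟨Γ, R 1, y, Nat.le_add_right _ _, hlower2.trans (hanti one_le_two),
      hanti zero_le_one, hR.isRegular 1, h₁⟩
  by_cases h₂ : 251 / 250 * a ≤ localDensity A (bohrSet Γ (R 2)) y
  · exact ⟨Γ, R 2, y, Nat.le_add_right _ _, hlower2, hanti zero_le_two, hR.isRegular 2, h₂⟩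
  have hsize₁ : 5 ≤ α ^ 2 * #(bohrSet Γ (R 1)) := hsize.trans (by
    gcongr
    exact bohrSet_mono (hR.lower 0))
  obtain ⟨Γ', ρ', z, hΓ', hl, hu, hreg', hz⟩ := P.exists_isRegular_of_chain hR hρ hG hA hΓ hα
    (y := y) (by linarith [P.ε_le]) (by linarith [P.ε_le]) hsize₁
  exact ⟨Γ', ρ', z, hΓ', hlower.trans hl, hu.trans (hanti (Nat.zero_le 5)), hreg', hz⟩

end IncrementParams

end Step

/-! ### The density increment iteration -/

section Iteration

variable {G : Type*} [AddCommGroup G] [Fintype G] {A : Finset G}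
  {α κ ε τ η L σ ζ : ℝ} {p k r K D : ℕ}

lemma localDensity_univ [DecidableEq G] (A : Finset G) (x : G) :
    localDensity A univ x = #A / Fintype.card G := by
  have h : #{y | x + y ∈ A} = #A := card_equiv (Equiv.addLeft x) (by simp)
  rw [localDensity, h, card_univ]

lemma isRegular_empty (hε : 0 ≤ ε) : IsRegular κ ε (∅ : Finset (AddChar G ℂ)) 1 := by
  refine ⟨one_pos, ?_⟩
  simp only [bohrSet_empty]
  exact le_mul_of_one_le_left (by positivity) (by linarith)

lemma le_mul_card_bohrSet {Γ : Finset (AddChar G ℂ)} {b c ρ : ℝ} {m : ℕ} (hΓ : #Γ ≤ D)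
    (hm : 2 * (1 / 2) ^ m ≤ ρ) (hb : 0 ≤ b) (h : c * 81 ^ (D * m) ≤ b * Fintype.card G) :
    c ≤ b * #(bohrSet Γ ρ) := by
  refine le_of_mul_le_mul_right (a := (81 : ℝ) ^ (D * m)) ?_ (by positivity)
  calc c * 81 ^ (D * m) ≤ b * Fintype.card G := h
    _ ≤ b * (81 ^ (D * m) * #(bohrSet Γ ρ)) := by
      gcongr
      exact card_le_mul_card_bohrSet hΓ hm
    _ = b * #(bohrSet Γ ρ) * 81 ^ (D * m) := by ring

namespace IncrementParams

lemma exists_pow_mul_le_localDensity [DecidableEq G]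
    (P : IncrementParams α κ ε τ η L σ ζ p k r K D) (hG : (Nat.card G).Coprime 2)
    (hA : ThreeAPFree (A : Set G)) (hα : α * Fintype.card G ≤ #A) {I m : ℕ} (hI : I * K ≤ D)
    (hm : 2 * (1 / 2) ^ m ≤ κ / 8 * (κ ^ 6 * ζ / 2 ^ 16) ^ I)
    (hsize : 5 * 81 ^ (D * m) ≤ α ^ 2 * Fintype.card G) {i : ℕ} (hi : i ≤ I) :
    ∃ (Γ : Finset (AddChar G ℂ)) (ρ : ℝ) (x : G), #Γ ≤ i * K ∧
      (κ ^ 6 * ζ / 2 ^ 16) ^ i ≤ ρ ∧ ρ ≤ 1 ∧ IsRegular κ ε Γ ρ ∧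
      (251 / 250) ^ i * α ≤ localDensity A (bohrSet Γ ρ) x := by
  have hκ := P.κ_pos
  have hζ := P.ζ_pos
  have hq1 : κ ^ 6 * ζ / 2 ^ 16 ≤ 1 := by
    have := mul_le_one₀ (pow_le_one₀ (n := 6) hκ.le P.κ_le_one) hζ.le P.ζ_le_one
    linarith
  induction i with
  | zero =>
    refine ⟨∅, 1, 0, by simp, by simp, le_rfl, isRegular_empty P.ε_pos.le, ?_⟩
    have hcard : (0 : ℝ) < Fintype.card G := by exact_mod_cast Fintype.card_pos
    rwa [bohrSet_empty, localDensity_univ, pow_zero, one_mul, le_div_iff₀ hcard]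
  | succ i ih =>
    obtain ⟨Γ, ρ, x, hΓ, hqρ, hρ, hreg, hx⟩ := ih (by omega)
    have hsucc : (i + 1) * K ≤ D := (Nat.mul_le_mul_right K hi).trans hI
    have hαx : α ≤ localDensity A (bohrSet Γ ρ) x :=
      (le_mul_of_one_le_left P.α_pos.le (one_le_pow₀ (by norm_num))).trans hx
    have hradius : 2 * (1 / 2) ^ m ≤ κ / 8 * ρ := hm.trans <| by
      gcongr
      exact (pow_le_pow_of_le_one (by positivity) hq1 (by omega)).trans hqρ
    have hbohr : 5 ≤ α ^ 2 * #(bohrSet Γ (κ / 8 * ρ)) :=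
      le_mul_card_bohrSet (by lia) hradius (sq_nonneg α) hsize
    obtain ⟨Γ', ρ', x', hΓ', hl, hu, hreg', hx'⟩ :=
      P.exists_density_increment hG hA (by lia) hreg hρ hαx hbohr
    refine ⟨Γ', ρ', x', by lia, ?_, hu.trans hρ, hreg', ?_⟩
    · rw [pow_succ']
      exact (mul_le_mul_of_nonneg_left hqρ (by positivity)).trans hl
    · rw [pow_succ']
      linarith

lemma card_lt (P : IncrementParams α κ ε τ η L σ ζ p k r K D) (hG : (Nat.card G).Coprime 2)
    (hA : ThreeAPFree (A : Set G)) {I m : ℕ} (hI : I * K ≤ D) (hαI : 1 < (251 / 250) ^ I * α)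
    (hm : 2 * (1 / 2) ^ m ≤ κ / 8 * (κ ^ 6 * ζ / 2 ^ 16) ^ I)
    (hsize : 5 * 81 ^ (D * m) ≤ α ^ 2 * Fintype.card G) : #A < α * Fintype.card G := by
  classical
  by_contra! hα
  obtain ⟨Γ, ρ, x, -, -, -, -, hx⟩ :=
    P.exists_pow_mul_le_localDensity hG hA hα hI hm hsize le_rfl
  exact (hαI.trans_le hx).not_ge (localDensity_le_one A (bohrSet Γ ρ) x)

end IncrementParams

end Iteration

/-! ### Choice of the parameters -/

section Parameters

lemma half_pow_mul_two_pow (a : ℕ) : (1 / 2 : ℝ) ^ a * 2 ^ a = 1 := by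
  rw [← mul_pow]
  norm_num

lemma half_pow_succ_mul_add_two (n m : ℕ) :
    (1 / 2 : ℝ) ^ ((n + 1) * m + 2) = ((1 / 2) ^ n / 2) ^ m / 4 := by
  rw [pow_add, pow_mul, pow_succ]
  ring

lemma half_pow_le_half_pow {a b : ℕ} (h : a ≤ b) : (1 / 2 : ℝ) ^ b ≤ (1 / 2) ^ a :=
  pow_le_pow_of_le_one (by norm_num) (by norm_num) h

lemma half_pow_mul_natCast_le_one (a : ℕ) : (1 / 2 : ℝ) ^ a * a ≤ 1 := by
  calc (1 / 2 : ℝ) ^ a * a ≤ (1 / 2) ^ a * 2 ^ a := by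
        gcongr
        exact_mod_cast Nat.lt_two_pow_self.le
    _ = 1 := half_pow_mul_two_pow a

lemma exp_neg_natCast_le (a : ℕ) : Real.exp (-a) ≤ (1 / 2) ^ a := by
  rw [Real.exp_neg, ← Real.exp_one_pow, ← inv_pow, one_div]
  gcongr
  linarith [Real.add_one_le_exp (1 : ℝ)]

lemma half_pow_mul_rank_le {c e D : ℕ} (hc : e + D + 4 ≤ c) :
    (1 / 2 : ℝ) ^ c * (16 * (D + 1)) ≤ (1 / 2) ^ e := by
  have hD : (D : ℝ) + 1 ≤ 2 ^ D := by exact_mod_cast Nat.lt_two_pow_self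
  calc (1 / 2 : ℝ) ^ c * (16 * (D + 1)) ≤ (1 / 2) ^ (e + D + 4) * (16 * 2 ^ D) := by
        gcongr ?_ * (16 * ?_)
        exact half_pow_le_half_pow hc
    _ = (1 / 2) ^ e * ((1 / 2) ^ D * 2 ^ D) := by ring
    _ = (1 / 2) ^ e := by rw [half_pow_mul_two_pow, mul_one]

lemma exp_neg_sample_le {k r s : ℕ} (hr : 0 < r) (hk : 4 * (16 + r + s) * (4096 * r) ^ 2 ≤ k) :
    16 * Real.exp (-(k * (1 / (4096 * r)) ^ 2 / 4)) ≤ 1 / (4096 * r) * (1 / 2 : ℝ) ^ s := by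
  have : (0 : ℝ) < r := by exact_mod_cast hr
  have hk' : (4 * (16 + r + s) * (4096 * r) ^ 2 : ℝ) ≤ k := by exact_mod_cast hk
  have hexponent : ((16 + r + s : ℕ) : ℝ) ≤ k * (1 / (4096 * r)) ^ 2 / 4 := by
    rw [one_div_pow, mul_one_div, div_div, le_div_iff₀ (by positivity)]
    push_cast
    linarith
  calc 16 * Real.exp (-(k * (1 / (4096 * r)) ^ 2 / 4))
      ≤ 16 * Real.exp (-(16 + r + s : ℕ)) := by gcongr
    _ ≤ 16 * (1 / 2) ^ (16 + r + s) := by gcongr; exact exp_neg_natCast_le _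
    _ = 1 / (4096 * r) * (1 / 2) ^ s * ((1 / 2) ^ r * r) := by field_simp; ring
    _ ≤ 1 / (4096 * r) * (1 / 2) ^ s :=
      mul_le_of_le_one_right (by positivity) (half_pow_mul_natCast_le_one r)

lemma log_sample_le {k s K : ℕ} (hK : 80 * (1 + k * (s + 1)) ≤ K) :
    80 * (Real.log 2 + k * Real.log (2 / (1 / 2) ^ s)) ≤ K := by
  have hlog : Real.log (2 / (1 / 2) ^ s) = (s + 1) * Real.log 2 := by
    rw [one_div_pow, div_div_eq_mul_div, div_one, ← pow_succ', Real.log_pow]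
    push_cast
    rfl
  calc 80 * (Real.log 2 + k * Real.log (2 / (1 / 2) ^ s))
      = 80 * (1 + k * (s + 1)) * Real.log 2 := by rw [hlog]; ring
    _ ≤ 80 * (1 + k * (s + 1)) :=
      mul_le_of_le_one_right (by positivity) (by linarith [Real.log_two_lt_d9])
    _ ≤ K := by exact_mod_cast hK

lemma exp_rank_sub_one_le {s K e : ℕ} (he : K + s + 14 ≤ e) :
    4 * (Real.exp (K * (1 / 2) ^ e) - 1 + 2 * (1 / 2) ^ e * 2 ^ K) ≤ (1 / 2 : ℝ) ^ (s + 10) := by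
  have hpow : (1 / 2 : ℝ) ^ e ≤ (1 / 2) ^ K * (1 / 2) ^ (s + 14) := by
    rw [← pow_add, ← add_assoc]
    exact half_pow_le_half_pow he
  have hsmall {b : ℝ} (hb : 0 ≤ b) (hbK : (1 / 2 : ℝ) ^ K * b ≤ 1) :
      b * (1 / 2) ^ e ≤ (1 / 2) ^ (s + 14) := by
    calc b * (1 / 2 : ℝ) ^ e ≤ b * ((1 / 2) ^ K * (1 / 2) ^ (s + 14)) := by gcongr
      _ = (1 / 2) ^ K * b * (1 / 2) ^ (s + 14) := by ring
      _ ≤ (1 / 2) ^ (s + 14) := mul_le_of_le_one_left (by positivity) hbK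
  have hK := hsmall K.cast_nonneg (half_pow_mul_natCast_le_one K)
  have h2K := hsmall (by positivity) (half_pow_mul_two_pow K).le
  have hx0 : (0 : ℝ) ≤ K * (1 / 2) ^ e := by positivity
  have hx1 : |(K : ℝ) * (1 / 2) ^ e| ≤ 1 := by
    rw [abs_of_nonneg hx0]
    exact hK.trans (pow_le_one₀ (by norm_num) (by norm_num))
  have hexp := (abs_le.1 (Real.abs_exp_sub_one_le hx1)).2
  rw [abs_of_nonneg hx0] at hexp
  have hσ : (1 / 2 : ℝ) ^ (s + 10) = 16 * (1 / 2) ^ (s + 14) := by ring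
  linarith

lemma error_sum_le {p r s : ℕ} (hp : 44 ≤ p) (hr : 0 < r) :
    2 * (4 / 5) ^ p + 3 * r * (1 / (4096 * r)) + (1 / 2) ^ (s + 10) * 2 ^ s ≤ (1 / 250 : ℝ) := by
  have : (0 : ℝ) < r := by exact_mod_cast hr
  have hp' : (4 / 5 : ℝ) ^ p ≤ (4 / 5) ^ 44 :=
    pow_le_pow_of_le_one (by norm_num) (by norm_num) hp
  have hrη : 3 * r * (1 / (4096 * r)) = (3 / 4096 : ℝ) := by field_simp
  have hσL : (1 / 2 : ℝ) ^ (s + 10) * 2 ^ s = (1 / 2) ^ 10 := by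
    rw [pow_add, mul_right_comm, half_pow_mul_two_pow, one_mul]
  rw [hrη, hσL]
  norm_num at hp' ⊢
  linarith

lemma four_le_half_pow_mul (n : ℕ) : (4 : ℝ) ≤ (1 / 2) ^ n * 2 ^ (2 * n + 44) := by
  calc (4 : ℝ) ≤ 2 ^ n * 2 ^ 44 := by linarith [one_le_pow₀ (one_le_two (α := ℝ)) (n := n)]
    _ = (1 / 2) ^ n * 2 ^ n * (2 ^ n * 2 ^ 44) := by rw [half_pow_mul_two_pow, one_mul]
    _ = (1 / 2) ^ n * 2 ^ (2 * n + 44) := by ring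

lemma two_div_four_pow_le (s : ℕ) : (2 : ℝ) / 4 ^ (s + 11) ≤ (1 / 2) ^ (s + 10) := by
  calc (2 : ℝ) / 4 ^ (s + 11) = 2 * (1 / 2) ^ (2 * (s + 11)) := by
        rw [pow_mul, one_div_pow, one_div_pow]; norm_num [div_eq_mul_inv]
    _ ≤ 2 * (1 / 2) ^ (s + 11) := by gcongr 2 * ?_; exact half_pow_le_half_pow (by lia)
    _ = (1 / 2) ^ (s + 10) := by ring

lemma incrementParams_half_pow {n s k K e D c : ℕ} (hs : (n + 1) * (8 * (2 * n + 44)) + 2 ≤ s)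
    (hk : 4 * (16 + (s + 11) + s) * (4096 * (s + 11)) ^ 2 ≤ k) (hK : 80 * (1 + k * (s + 1)) ≤ K)
    (he : K + s + 14 ≤ e) (hc : e + D + 4 ≤ c) :
    IncrementParams ((1 / 2) ^ n) ((1 / 2) ^ c) ((1 / 2) ^ e) ((1 / 2) ^ s)
      (1 / (4096 * (s + 11 : ℕ))) (2 ^ s) ((1 / 2) ^ (s + 10)) ((1 / 2) ^ e) (2 * n + 44) k (s + 11)
      K D where
  α_pos := by positivity
  κ_pos := by positivity
  κ_mul_le := half_pow_mul_rank_le hc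
  ε_le_one := pow_le_one₀ (by norm_num) (by norm_num)
  ε_le := by
    have hen : (1 / 2 : ℝ) ^ e ≤ (1 / 2) ^ (n + 10) := half_pow_le_half_pow (by lia)
    rw [pow_add] at hen
    linarith [pow_pos (one_half_pos (α := ℝ)) n]
  p_even := ⟨n + 22, by ring⟩
  le_p := by lia
  le_mul_pow := four_le_half_pow_mul n
  τ_pos := by positivity
  τ_le := by
    calc (1 / 2 : ℝ) ^ s ≤ (1 / 2) ^ ((n + 1) * (8 * (2 * n + 44)) + 2) := half_pow_le_half_pow hs
      _ = ((1 / 2) ^ n / 2) ^ (8 * (2 * n + 44)) / 4 := half_pow_succ_mul_add_two n _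
  k_pos := lt_of_lt_of_le (by positivity) hk
  η_nonneg := by positivity
  η_le_two := by
    rw [div_le_iff₀ (by positivity)]
    push_cast
    linarith [s.cast_nonneg (α := ℝ)]
  exp_le := exp_neg_sample_le (Nat.succ_pos _) hk
  L_nonneg := by positivity
  le_sq_mul := by
    calc (2 : ℝ) = 2 ^ 1 * ((1 / 2) ^ s * 2 ^ s) := by rw [half_pow_mul_two_pow]; norm_num
      _ ≤ 2 ^ s * ((1 / 2) ^ s * 2 ^ s) := by
        gcongr
        · exact one_le_two
        · lia
      _ = (2 ^ s) ^ 2 * (1 / 2) ^ s := by ring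
  log_le := log_sample_le hK
  ζ_pos := by positivity
  ζ_le_one := pow_le_one₀ (by norm_num) (by norm_num)
  le_σ := two_div_four_pow_le s
  exp_sub_one_le := exp_rank_sub_one_le he
  error_le := error_sum_le (by lia) (Nat.succ_pos _)

end Parameters

section Group

open Polynomial (X)
open scoped Polynomial

lemma one_lt_pow_mul_half_pow (n : ℕ) : 1 < (251 / 250 : ℝ) ^ (250 * n + 1) * (1 / 2) ^ n := by
  have hdouble : (2 : ℝ) ≤ (251 / 250) ^ 250 := by
    have := one_add_mul_le_pow (a := (1 / 250 : ℝ)) (by norm_num) 250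
    norm_num at this ⊢
  calc (1 : ℝ) < (1 / 2) ^ n * 2 ^ n * (251 / 250) := by rw [half_pow_mul_two_pow]; norm_num
    _ ≤ (1 / 2) ^ n * ((251 / 250) ^ 250) ^ n * (251 / 250) := by gcongr
    _ = (251 / 250) ^ (250 * n + 1) * (1 / 2) ^ n := by
      rw [pow_succ _ (250 * n), pow_mul]; ring

lemma two_mul_half_pow_le (c e I : ℕ) :
    2 * (1 / 2 : ℝ) ^ (c + I * (6 * c + e + 16) + 4) ≤
      (1 / 2) ^ c / 8 * (((1 / 2) ^ c) ^ 6 * (1 / 2) ^ e / 2 ^ 16) ^ I := by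
  have hstep : (((1 / 2) ^ c) ^ 6 * (1 / 2) ^ e / 2 ^ 16 : ℝ) = (1 / 2) ^ (6 * c + e + 16) := by
    rw [pow_add, pow_add, mul_comm 6, pow_mul, one_div_pow 2 16, mul_one_div]
  rw [hstep, ← pow_mul, pow_add, pow_add, mul_comm I]
  exact (by ring : _ = _).le

lemma five_mul_pow_le {n q g : ℕ} (hg : 2 ^ (7 * q + 3 + 2 * n) ≤ g) :
    5 * (81 : ℝ) ^ q ≤ ((1 / 2) ^ n) ^ 2 * g := by
  have hg' : (2 : ℝ) ^ (7 * q + 3 + 2 * n) ≤ g := by exact_mod_cast hg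
  calc 5 * (81 : ℝ) ^ q ≤ 2 ^ 3 * 2 ^ (7 * q) := by
        rw [pow_mul]
        gcongr <;> norm_num
    _ = ((1 / 2) ^ n * 2 ^ n) ^ 2 * (2 ^ 3 * 2 ^ (7 * q)) := by
      rw [half_pow_mul_two_pow, one_pow, one_mul]
    _ = ((1 / 2) ^ n) ^ 2 * 2 ^ (7 * q + 3 + 2 * n) := by ring
    _ ≤ ((1 / 2) ^ n) ^ 2 * g := by gcongr

theorem exists_polynomial_card_lt : ∃ M : ℕ[X], ∀ {G : Type*} [AddCommGroup G] [Fintype G]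
    {A : Finset G} (n : ℕ), (Nat.card G).Coprime 2 → ThreeAPFree (A : Set G) →
      2 ^ M.eval n ≤ Fintype.card G → #A < (1 / 2 : ℝ) ^ n * Fintype.card G := by
  let s : ℕ[X] := (X + 1) * (8 * (2 * X + 44)) + 2
  let k : ℕ[X] := 4 * (16 + (s + 11) + s) * (4096 * (s + 11)) ^ 2
  let K : ℕ[X] := 80 * (1 + k * (s + 1))
  let e : ℕ[X] := K + s + 14
  let I : ℕ[X] := 250 * X + 1
  let D : ℕ[X] := I * K
  let c : ℕ[X] := e + D + 4
  let m : ℕ[X] := c + I * (6 * c + e + 16) + 4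
  refine ⟨7 * (D * m) + 3 + 2 * X, fun {G} _ _ {A} n hG hA hcard => ?_⟩
  have hs : s.eval n = (n + 1) * (8 * (2 * n + 44)) + 2 := by simp [s]
  have hk : k.eval n = 4 * (16 + (s.eval n + 11) + s.eval n) * (4096 * (s.eval n + 11)) ^ 2 := by
    simp [k]
  have hK : K.eval n = 80 * (1 + k.eval n * (s.eval n + 1)) := by simp [K]
  have he : e.eval n = K.eval n + s.eval n + 14 := by simp [e]
  have hI : I.eval n = 250 * n + 1 := by simp [I]
  have hD : D.eval n = I.eval n * K.eval n := by simp [D]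
  have hc : c.eval n = e.eval n + D.eval n + 4 := by simp [c]
  have hm : m.eval n = c.eval n + I.eval n * (6 * c.eval n + e.eval n + 16) + 4 := by simp [m]
  refine (incrementParams_half_pow hs.ge hk.ge hK.ge he.ge hc.ge).card_lt hG hA
    (m := m.eval n) hD.ge ?_ ?_ ?_
  · rw [hI]
    exact one_lt_pow_mul_half_pow n
  · rw [hm]
    exact two_mul_half_pow_le _ _ _
  · exact five_mul_pow_le (by simpa using hcard)

end Group

/-! ### Progressions in the integers and in the primes -/

section Naturals

open Filter
open scoped Polynomial

theorem exists_polynomial_rothNumberNat_lt : ∃ M : ℕ[X], ∀ n N : ℕ, 2 ^ M.eval n ≤ 2 * N + 1 →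
    rothNumberNat N < (1 / 2 : ℝ) ^ n * (2 * N + 1) := by
  obtain ⟨M, hM⟩ := exists_polynomial_card_lt
  refine ⟨M, fun n N hN => ?_⟩
  let k : Fin (2 * N + 1) := ⟨N, by lia⟩
  obtain ⟨A, -, hcard, hA⟩ := addRothNumber_spec (Iio k)
  rw [Fin.addRothNumber_eq_rothNumberNat le_rfl] at hcard
  have hlt := hM n (by simp) hA (by simpa using hN)
  rw [hcard] at hlt
  simpa using hlt

lemma eval_le_eval_one_mul_pow (M : ℕ[X]) {n : ℕ} (hn : 1 ≤ n) :
    M.eval n ≤ M.eval 1 * n ^ M.natDegree := by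
  simp only [Polynomial.eval_eq_sum_range, one_pow, mul_one, sum_mul]
  exact sum_le_sum fun i hi => Nat.mul_le_mul_left _ <|
    Nat.pow_le_pow_right hn <| Nat.lt_succ_iff.1 (mem_range.1 hi)

lemma half_pow_le_exp_neg {x : ℝ} {n : ℕ} (hn : 2 * x ≤ n) : (1 / 2) ^ n ≤ Real.exp (-x) := by
  have hlog : n * (1 / 2) ≤ n * Real.log 2 := by
    gcongr
    linarith [Real.log_two_gt_d9]
  rw [← Real.log_le_iff_le_exp (by positivity), Real.log_pow, one_div, Real.log_inv]
  linarith

lemma eval_ceil_le_pow_succ (M : ℕ[X]) {x : ℝ} (hx : 1 ≤ x)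
    (hM : M.eval 1 * 5 ^ M.natDegree ≤ x) :
    ((M.eval (⌈2 * x⌉₊ + 2) : ℕ) : ℝ) ≤ x ^ (M.natDegree + 1) := by
  have hceil : ((⌈2 * x⌉₊ + 2 : ℕ) : ℝ) ≤ 5 * x := by
    push_cast
    linarith [Nat.ceil_lt_add_one (by positivity : 0 ≤ 2 * x)]
  calc ((M.eval (⌈2 * x⌉₊ + 2) : ℕ) : ℝ)
      ≤ M.eval 1 * ((⌈2 * x⌉₊ + 2 : ℕ) : ℝ) ^ M.natDegree := by
        exact_mod_cast eval_le_eval_one_mul_pow M (by lia)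
    _ ≤ M.eval 1 * (5 * x) ^ M.natDegree := by gcongr
    _ = M.eval 1 * 5 ^ M.natDegree * x ^ M.natDegree := by rw [mul_pow, mul_assoc]
    _ ≤ x * x ^ M.natDegree := by gcongr
    _ = x ^ (M.natDegree + 1) := by ring

lemma tendsto_log_natCast : Tendsto (fun N : ℕ => Real.log N) atTop atTop :=
  Real.tendsto_log_atTop.comp tendsto_natCast_atTop_atTop

theorem eventually_rothNumberNat_le : ∃ β : ℝ, 0 < β ∧
    ∀ᶠ N : ℕ in atTop, (rothNumberNat N : ℝ) ≤ N * Real.exp (-Real.log N ^ β) := by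
  obtain ⟨M, hM⟩ := exists_polynomial_rothNumberNat_lt
  have hβ : (0 : ℝ) < 1 / (M.natDegree + 1 : ℕ) := by positivity
  refine ⟨1 / (M.natDegree + 1 : ℕ), hβ, ?_⟩
  have hlarge := ((tendsto_rpow_atTop hβ).comp tendsto_log_natCast).eventually_ge_atTop
    (max 1 (M.eval 1 * 5 ^ M.natDegree : ℝ))
  filter_upwards [hlarge, eventually_ge_atTop 1] with N hx hN
  set x := Real.log N ^ (1 / (M.natDegree + 1 : ℕ) : ℝ) with hxdef
  have hN' : (1 : ℝ) ≤ N := by exact_mod_cast hN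
  have hxpow : x ^ (M.natDegree + 1) = Real.log N := by
    rw [hxdef, one_div, Real.rpow_inv_natCast_pow (Real.log_nonneg hN') (by lia)]
  have heval := eval_ceil_le_pow_succ M ((le_max_left _ _).trans hx) ((le_max_right _ _).trans hx)
  have hpow : (2 : ℝ) ^ M.eval (⌈2 * x⌉₊ + 2) ≤ N := by
    calc (2 : ℝ) ^ M.eval (⌈2 * x⌉₊ + 2) ≤ Real.exp 1 ^ M.eval (⌈2 * x⌉₊ + 2) := by
          gcongr
          linarith [Real.add_one_le_exp (1 : ℝ)]
      _ ≤ Real.exp (Real.log N) := by rw [Real.exp_one_pow]; gcongr; exact heval.trans_eq hxpow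
      _ = N := Real.exp_log (by linarith)
  have hpow' : 2 ^ M.eval (⌈2 * x⌉₊ + 2) ≤ N := by exact_mod_cast hpow
  calc (rothNumberNat N : ℝ) ≤ (1 / 2) ^ (⌈2 * x⌉₊ + 2) * (2 * N + 1) :=
        (hM _ N (by lia)).le
    _ ≤ (1 / 2) ^ (⌈2 * x⌉₊ + 2) * (4 * N) := by gcongr; linarith
    _ = N * (1 / 2) ^ ⌈2 * x⌉₊ := by ring
    _ ≤ N * Real.exp (-x) := by gcongr; exact half_pow_le_exp_neg (Nat.le_ceil _)

end Naturals

section Primes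

open Filter
open scoped Nat.Prime

lemma exists_progression_of_rothNumberNat_lt {A : Set ℕ} {N : ℕ}
    (h : rothNumberNat (N + 1) < Nat.card {n : ℕ // n ∈ A ∧ n ≤ N}) :
    ∃ a ∈ A, ∃ d : ℤ, d ≠ 0 ∧ (∃ b ∈ A, (b : ℤ) = (a : ℤ) + d) ∧
      ∃ c ∈ A, (c : ℤ) = (a : ℤ) + 2 * d := by
  classical
  have hcard : Nat.card {n : ℕ // n ∈ A ∧ n ≤ N} = #{n ∈ range (N + 1) | n ∈ A} :=
    Nat.subtype_card _ fun n => by simp [and_comm]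
  rw [hcard] at h
  have hAP : ¬ThreeAPFree ({n ∈ range (N + 1) | n ∈ A} : Set ℕ) := fun hfree =>
    h.not_ge <| ThreeAPFree.le_rothNumberNat {n ∈ range (N + 1) | n ∈ A} (by simpa using hfree)
      (fun n hn => mem_range.1 (mem_filter.1 hn).1) rfl
  simp only [ThreeAPFree, not_forall] at hAP
  obtain ⟨a, ha, b, hb, c, hc, hac, hab⟩ := hAP
  exact ⟨a, ha.2, b - a, by lia, ⟨b, hb.2, by lia⟩, ⟨c, hc.2, by lia⟩⟩

theorem eventually_rothNumberNat_succ_lt (k : ℕ) :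
    ∀ᶠ N : ℕ in atTop, (rothNumberNat (N + 1) : ℝ) < N / Real.log N ^ k := by
  obtain ⟨β, hβ, hroth⟩ := eventually_rothNumberNat_le
  have hlog := ((isLittleO_rpow_exp_atTop (k / β)).comp_tendsto
    ((tendsto_rpow_atTop hβ).comp tendsto_log_natCast)).bound (by norm_num : (0 : ℝ) < 1 / 3)
  filter_upwards [(tendsto_add_atTop_nat 1).eventually hroth, hlog, eventually_ge_atTop 2]
    with N hN hpow hN2
  have hN' : (2 : ℝ) ≤ N := by exact_mod_cast hN2
  have hL : 0 < Real.log N := Real.log_pos (by linarith)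
  have hpow' : Real.log N ^ k ≤ 1 / 3 * Real.exp (Real.log N ^ β) := by
    simpa [← Real.rpow_mul hL.le, mul_div_cancel₀ _ hβ.ne', abs_of_pos hL] using hpow
  rw [lt_div_iff₀ (by positivity)]
  calc (rothNumberNat (N + 1) : ℝ) * Real.log N ^ k
      ≤ (N + 1) * Real.exp (-Real.log N ^ β) * (1 / 3 * Real.exp (Real.log N ^ β)) := by
        gcongr
        refine hN.trans ?_
        push_cast
        gcongr
        linarith
    _ = (N + 1) / 3 * (Real.exp (-Real.log N ^ β) * Real.exp (Real.log N ^ β)) := by ring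
    _ = (N + 1) / 3 := by rw [← Real.exp_add, neg_add_cancel, Real.exp_zero, mul_one]
    _ < N := by linarith

lemma eventually_div_two_mul_log_le_primeCounting :
    ∀ᶠ N : ℕ in atTop, N / (2 * Real.log N) ≤ π N := by
  have hlog := (Real.isLittleO_log_id_atTop.comp_tendsto
    (tendsto_natCast_atTop_atTop.comp (tendsto_add_atTop_nat 1))).bound
      (by norm_num : (0 : ℝ) < 1 / 10)
  filter_upwards [hlog, eventually_ge_atTop 2] with N hN hN2
  have hN' : (2 : ℝ) ≤ N := by exact_mod_cast hN2
  have : 0 < Real.log N := Real.log_pos (by linarith)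
  have hsucc : Real.log (N + 1) ≤ 1 / 10 * (N + 1) := by
    simpa [abs_of_nonneg (Real.log_nonneg (by linarith : (1 : ℝ) ≤ N + 1)),
      abs_of_nonneg (by linarith : (0 : ℝ) ≤ N + 1)] using hN
  have hlog2 : N * (0.69 : ℝ) ≤ N * Real.log 2 := by
    gcongr
    linarith [Real.log_two_gt_d9]
  calc N / (2 * Real.log N) = N / 2 / Real.log N := by rw [div_div]
    _ ≤ (N * Real.log 2 - Real.log (N + 1)) / Real.log N := by gcongr; linarith
    _ ≤ π N := Chebyshev.pi_ge N

lemma one_div_le_log_div_rpow {y : ℝ} (hy : Real.exp 1 ≤ y) :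
    1 / y ≤ Real.log y / y ^ (1 / 3 : ℝ) := by
  have hy1 : 1 ≤ y := (Real.one_le_exp zero_le_one).trans hy
  have hlog : 1 ≤ Real.log y := (Real.le_log_iff_exp_le (by linarith)).2 hy
  exact div_le_div₀ (by linarith) hlog (by positivity)
    (Real.rpow_le_self_of_one_le hy1 (by norm_num))

lemma two_mul_log_le {t : ℝ} (ht : 0 < t) : 2 * Real.log t ≤ t := by
  have hlog := Real.log_le_sub_one_of_pos (half_pos ht)
  rw [Real.log_div ht.ne' two_ne_zero] at hlog
  linarith [Real.log_two_lt_d9]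

theorem eventually_div_sq_log_le_mul_primeCounting : ∀ᶠ N : ℕ in atTop,
    N / Real.log N ^ 2 ≤ Real.log (Real.log (Real.log N)) /
      Real.log (Real.log N) ^ (1 / 3 : ℝ) * π N := by
  have hloglog := (Real.tendsto_log_atTop.comp tendsto_log_natCast).eventually_ge_atTop
    (Real.exp 1)
  filter_upwards [hloglog, tendsto_log_natCast.eventually_gt_atTop 0,
    eventually_div_two_mul_log_le_primeCounting] with N hy ht hπ
  have hy0 : 0 < Real.log (Real.log N) := (Real.exp_pos 1).trans_le hy
  calc N / Real.log N ^ 2 = 1 / Real.log N * (N / Real.log N) := by ring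
    _ ≤ 1 / (2 * Real.log (Real.log N)) * (N / Real.log N) := by
      gcongr
      exact two_mul_log_le ht
    _ = 1 / Real.log (Real.log N) * (N / (2 * Real.log N)) := by ring
    _ ≤ Real.log (Real.log (Real.log N)) / Real.log (Real.log N) ^ (1 / 3 : ℝ) * π N :=
      mul_le_mul (one_div_le_log_div_rpow hy) hπ (by positivity)
        ((by positivity : (0 : ℝ) ≤ 1 / Real.log (Real.log N)).trans (one_div_le_log_div_rpow hy))

end Primes

end KelleyMeka

open Filter KelleyMeka in
theorem roth_in_primes_improved_general :
    ∃ C : ℝ, 0 < C ∧ ∃ N₀ : ℕ, ∀ A : Set ℕ, ∀ N : ℕ, N₀ ≤ N →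
        (Nat.card {n : ℕ // n ∈ A ∧ n ≤ N} : ℝ) /
            (Nat.card {n : ℕ // Nat.Prime n ∧ n ≤ N} : ℝ) ≥
          C * Real.log (Real.log (Real.log N)) /
            (Real.log (Real.log N)) ^ ((1 : ℝ) / 3) →
        ∃ a ∈ A, ∃ d : ℤ, d ≠ 0 ∧
          (∃ b ∈ A, (b : ℤ) = (a : ℤ) + d) ∧
          (∃ c ∈ A, (c : ℤ) = (a : ℤ) + 2 * d) := by
  obtain ⟨N₀, hN₀⟩ := eventually_atTop.1 <| (eventually_rothNumberNat_succ_lt 2).and <|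
    eventually_div_sq_log_le_mul_primeCounting.and (eventually_gt_atTop 1)
  refine ⟨1, one_pos, N₀, fun A N hN hdensity => ?_⟩
  obtain ⟨hroth, hprimes, hN1⟩ := hN₀ N hN
  have hcard : Nat.card {n : ℕ // n.Prime ∧ n ≤ N} = Nat.primeCounting N := by
    rw [Nat.primeCounting, Nat.primeCounting', Nat.count_eq_card_filter_range]
    exact Nat.subtype_card _ fun n => by simp [and_comm]
  have hπ : (0 : ℝ) < Nat.primeCounting N := by
    have : Nat.primeCounting N ≠ 0 := by simpa using hN1
    positivity
  rw [hcard, one_mul, ge_iff_le, le_div_iff₀ hπ] at hdensity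
  exact exists_progression_of_rothNumberNat_lt <| by
    exact_mod_cast hroth.trans_le (hprimes.trans hdensity)

/-- **Roth's theorem in the primes with improved density (Helfgott–de Roton).**
There exist absolute constants `C > 0` and `N₀` such that: if `A` is a set of primes
and for some `N ≥ N₀` the relative density of `A` in the primes up to `N` is at least
`C · (log log log N) / (log log N)^{1/3}`, then `A` contains a nontrivial three-term
arithmetic progression. -/
theorem roth_in_primes_improved :
    ∃ C : ℝ, 0 < C ∧ ∃ N₀ : ℕ, ∀ A : Set ℕ, (∀ n ∈ A, Nat.Prime n) →
      ∀ N : ℕ, N₀ ≤ N →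
        (Nat.card {n : ℕ // n ∈ A ∧ n ≤ N} : ℝ) /
            (Nat.card {n : ℕ // Nat.Prime n ∧ n ≤ N} : ℝ) ≥
          C * Real.log (Real.log (Real.log N)) /
            (Real.log (Real.log N)) ^ ((1 : ℝ) / 3) →
        ∃ a ∈ A, ∃ d : ℤ, d ≠ 0 ∧
          (∃ b ∈ A, (b : ℤ) = (a : ℤ) + d) ∧
          (∃ c ∈ A, (c : ℤ) = (a : ℤ) + 2 * d) :=
  let ⟨C, hC, N₀, h⟩ := roth_in_primes_improved_general
  ⟨C, hC, N₀, fun A _ => h A⟩
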